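/- arXiv:2401.10086 — 2 statements merged into one kernel-verified Lean document; each statement's English description precedes it below -/
import Mathlib

section
/- Let n ≥ m > r ≥ 3 be integers. For every ε > 0 there exists a constant C = C(m, n, r, ε) such that for all real H ≥ 2 the number of m×n matrices with all entries in E(H) and of rank exactly r is at most C·H^{(n−r)(r+1)/2+mr+ε} if 2m ≥ n + r, and at most C·H^{nr+m−r} if 2m < n + r. -/
/-- The set of Egyptian (unit) fractions `1/a` with `a` a nonzero integer, `|a| ≤ H`. -/
def Egyptian (H : ℝ) : Set ℚ := {x : ℚ | ∃ a : ℤ, a ≠ 0 ∧ (|a| : ℝ) ≤ H ∧ x = 1 / (a : ℚ)}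

theorem divisor_bound (ε : ℝ) (hε : 0 < ε) : ∃ C : ℝ, 1 ≤ C ∧ ∀ n : ℕ, n ≠ 0 →
    (n.divisors.card : ℝ) ≤ C * (n : ℝ) ^ ε := by
  have hl2 : 0 < Real.log 2 := Real.log_pos (by norm_num)
  set D : ℝ := 1 + 1 / (ε * Real.log 2) with hD
  have hD1 : 1 ≤ D := by rw [hD]; linarith [show 0 < 1 / (ε * Real.log 2) by positivity]
  set B : ℕ := ⌈(2:ℝ) ^ (1 / ε)⌉₊ with hB
  have hDe : ∀ e : ℕ, (e : ℝ) + 1 ≤ D * (2:ℝ) ^ (ε * e) := by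
    intro e
    have h1 : ε * e * Real.log 2 + 1 ≤ (2:ℝ) ^ (ε * e) := by
      rw [Real.rpow_def_of_pos (by norm_num)]
      calc _ = Real.log 2 * (ε * e) + 1 := by ring
        _ ≤ _ := Real.add_one_le_exp _
    have h2 : (e : ℝ) + 1 ≤ D * (ε * e * Real.log 2 + 1) := by
      have : D * (ε * e * Real.log 2 + 1) = ε * e * Real.log 2 + 1 + e + 1 / (ε * Real.log 2) := by
        rw [hD]; field_simp; ring
      rw [this]
      have : 0 ≤ ε * e * Real.log 2 := by positivity
      have : 0 ≤ 1 / (ε * Real.log 2) := by positivity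
      linarith
    exact h2.trans (mul_le_mul_of_nonneg_left h1 (by linarith))
  refine ⟨D ^ B, one_le_pow₀ hD1, fun n hn => ?_⟩
  rw [Nat.card_divisors hn]
  have hprod : (n : ℝ) ^ ε = ∏ p ∈ n.primeFactors, ((p : ℝ) ^ (ε * (n.factorization p : ℝ))) := by
    conv_lhs => rw [← Nat.prod_factorization_pow_eq_self hn]
    rw [Finsupp.prod, Nat.support_factorization, Nat.cast_prod, ← Real.finsetProd_rpow]
    · refine Finset.prod_congr rfl fun p _ => ?_
      rw [Nat.cast_pow, ← Real.rpow_natCast, ← Real.rpow_mul (by positivity), mul_comm]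
    · intros; positivity
  rw [hprod]
  have hc : ∏ p ∈ n.primeFactors, (if p < B then D else 1) ≤ D ^ B := by
    rw [Finset.prod_ite]
    simp only [Finset.prod_const, one_pow, mul_one]
    refine pow_le_pow_right₀ hD1 ?_
    calc _ ≤ (Finset.range B).card := Finset.card_le_card (by intro p; simp)
      _ = B := by simp
  have hterm : ∏ p ∈ n.primeFactors, ((n.factorization p : ℝ) + 1) ≤
      ∏ p ∈ n.primeFactors, ((if p < B then D else 1) * (p : ℝ) ^ (ε * (n.factorization p : ℝ))) := by
    refine Finset.prod_le_prod (fun _ _ => by positivity) fun p hp => ?_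
    have hp2 : (2 : ℝ) ≤ p := by exact_mod_cast (Nat.prime_of_mem_primeFactors hp).two_le
    split_ifs with h
    · refine (hDe _).trans ?_
      gcongr
    · have h1 : (2:ℝ) ^ (1 / ε) ≤ p := by
        push Not at h
        exact (Nat.le_ceil _).trans (by exact_mod_cast h)
      have h2 : (2 : ℝ) ≤ (p:ℝ) ^ ε := by
        calc (2:ℝ) = ((2:ℝ) ^ (1 / ε)) ^ ε := by
              rw [← Real.rpow_mul (by norm_num), one_div_mul_cancel hε.ne', Real.rpow_one]
          _ ≤ _ := by gcongr
      rw [Real.rpow_mul (by positivity), Real.rpow_natCast, one_mul]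
      calc ((n.factorization p : ℝ) + 1) ≤ 2 ^ (n.factorization p) := by
            exact_mod_cast Nat.lt_two_pow_self
        _ ≤ _ := by gcongr
  push_cast
  refine hterm.trans ?_
  rw [Finset.prod_mul_distrib]
  gcongr

theorem card_int_divisors (n : ℕ) :
    (n.divisors.image (fun d : ℕ => (d : ℤ)) ∪ n.divisors.image (fun d : ℕ => -(d : ℤ))).card
      ≤ 2 * n.divisors.card := by
  refine (Finset.card_union_le _ _).trans ?_
  have h1 := Finset.card_image_le (s := n.divisors) (f := fun d : ℕ => (d : ℤ))
  have h2 := Finset.card_image_le (s := n.divisors) (f := fun d : ℕ => -(d : ℤ))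
  omega

/-- a prime dividing the product of denominators, not dividing coefficients, divides it twice -/
theorem prime_sq_dvd {ι : Type} [Fintype ι] [DecidableEq ι] (a x : ι → ℤ) (hx : ∀ i, x i ≠ 0)
    (h : ∑ i, (a i : ℚ) / x i = 0) (p : ℕ) (hp : p.Prime) (hpx : p ∣ ∏ i, (x i).natAbs)
    (hpa : ¬ p ∣ ∏ i, (a i).natAbs) : p ^ 2 ∣ ∏ i, (x i).natAbs := by
  obtain ⟨j, -, hj⟩ := (hp.prime.dvd_finsetProd_iff _).1 hpx
  have hpZ : Prime (p : ℤ) := Nat.prime_iff_prime_int.1 hp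
  have hjZ : (p : ℤ) ∣ x j := Int.natCast_dvd.2 hj
  have key : (p : ℤ) ∣ a j * ∏ i ∈ Finset.univ.erase j, x i := by
    have e : a j * ∏ i ∈ Finset.univ.erase j, x i
        = - (x j * ∑ i ∈ Finset.univ.erase j, a i * ∏ l ∈ (Finset.univ.erase j).erase i, x l) := by
      have hx' : ∀ i, (x i : ℚ) ≠ 0 := fun i => by exact_mod_cast hx i
      have : ((a j * ∏ i ∈ Finset.univ.erase j, x i : ℤ) : ℚ)
        = ((- (x j * ∑ i ∈ Finset.univ.erase j, a i * ∏ l ∈ (Finset.univ.erase j).erase i, x l) : ℤ) : ℚ) := by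
        push_cast
        rw [← Finset.add_sum_erase _ _ (Finset.mem_univ j)] at h
        have h2 : (a j : ℚ) = - (x j * ∑ i ∈ Finset.univ.erase j, (a i : ℚ) / x i) := by
          have := hx' j
          field_simp at h
          linear_combination h
        rw [h2, neg_mul, mul_assoc, Finset.sum_mul]
        congr 2
        refine Finset.sum_congr rfl fun i hi => ?_
        rw [← Finset.mul_prod_erase _ _ hi]
        have := hx' i
        field_simp
      exact_mod_cast this
    rw [e]
    exact (hjZ.mul_right _).neg_right
  rcases hpZ.dvd_or_dvd key with h1 | h1
  · exact absurd ((Int.natCast_dvd.1 h1).trans (Finset.dvd_prod_of_mem (fun i => (a i).natAbs) (Finset.mem_univ j))) hpa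
  · obtain ⟨i, hi, hi2⟩ := (hpZ.dvd_finsetProd_iff _).1 h1
    rw [← Finset.mul_prod_erase _ _ (Finset.mem_univ j), ← Finset.mul_prod_erase _ _ hi, ← mul_assoc, sq]
    exact (mul_dvd_mul hj (Int.natCast_dvd.1 hi2)).mul_right _

theorem sq_decomp {P A : ℕ} (hP : 0 < P) (h : ∀ p : ℕ, p.Prime → p ∣ P → ¬ p ∣ A → p ^ 2 ∣ P) :
    ∃ b v : ℕ, 0 < b ∧ b ^ 2 * v = P ∧ v ∣ b * A := by
  obtain ⟨v, b, hv, hb, hbv, hsq⟩ := Nat.sq_mul_squarefree_of_pos hP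
  refine ⟨b, v, hb, hbv, ?_⟩
  rw [← Nat.prod_primeFactors_of_squarefree hsq]
  refine Finset.prod_primes_dvd _ (fun p hp => (Nat.prime_of_mem_primeFactors hp).prime) fun p hp => ?_
  have hpp := Nat.prime_of_mem_primeFactors hp
  have hpv := Nat.dvd_of_mem_primeFactors hp
  by_cases hA : p ∣ A
  · exact hA.mul_left _
  · refine Dvd.dvd.mul_right ?_ _
    by_contra hpb
    have h2 := h p hpp (hbv ▸ hpv.mul_left _) hA
    rw [← hbv] at h2
    have hc : Nat.Coprime (p ^ 2) (b ^ 2) := Nat.Coprime.pow _ _ ((Nat.Prime.coprime_iff_not_dvd hpp).2 hpb)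
    have h3 := hc.dvd_of_dvd_mul_left h2
    rw [sq] at h3
    exact hpp.one_lt.ne' (Nat.isUnit_iff.1 (hsq p h3))


theorem key_count (k K : ℕ) (C0 ε : ℝ) (hC0 : 1 ≤ C0) (hε : 0 < ε) : ∃ C : ℝ, 0 ≤ C ∧
    ∀ H : ℝ, 2 ≤ H → ∀ (ι : Type) [Fintype ι] [DecidableEq ι], Fintype.card ι = k →
    ∀ a : ι → ℤ, (∀ i, a i ≠ 0) → (∀ i, ((a i).natAbs : ℝ) ≤ C0 * H ^ K) →
    (Set.ncard {x : ι → ℤ | (∀ i, x i ≠ 0 ∧ ((x i).natAbs : ℝ) ≤ H) ∧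
      ∑ i, (a i : ℚ) / x i = 0} : ℝ) ≤ C * H ^ ((k : ℝ) / 2 + ε) := by
  set L : ℕ := 3 * k + K * k with hL
  set δ : ℝ := ε / (L * (k + 1) + 1) with hδ
  have hδ0 : 0 < δ := by positivity
  obtain ⟨C, hC1, hC⟩ := divisor_bound δ hδ0
  refine ⟨C * 2 ^ k * C ^ k * (C0 ^ k) ^ (δ * (k + 1)), by positivity, ?_⟩
  intro H hH ι _ _ hk a ha0 haH
  have hH1 : 1 ≤ H := by linarith
  set A : ℕ := ∏ i, (a i).natAbs with hA
  have hA0 : A ≠ 0 := Finset.prod_ne_zero_iff.2 fun i _ => Int.natAbs_ne_zero.2 (ha0 i)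
  have hAH : (A : ℝ) ≤ C0 ^ k * H ^ (K * k) := by
    rw [hA, Nat.cast_prod]
    calc ∏ i, ((a i).natAbs : ℝ) ≤ ∏ i : ι, (C0 * H ^ K) :=
          Finset.prod_le_prod (fun _ _ => by positivity) fun i _ => haH i
      _ = _ := by rw [Finset.prod_const, Finset.card_univ, hk, mul_pow, pow_mul]
  set M : ℝ := C0 ^ k * H ^ L with hM
  set B : ℕ := ⌊H ^ ((k : ℝ) / 2)⌋₊ with hB
  have hBH : (B : ℝ) ≤ H ^ ((k : ℝ) / 2) := Nat.floor_le (by positivity)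
  have hBH' : (B : ℝ) ≤ H ^ k := hBH.trans (by
    rw [← Real.rpow_natCast]
    exact Real.rpow_le_rpow_of_exponent_le hH1 (by linarith [show (0:ℝ) ≤ k by positivity]))
  let Dz : ℕ → Finset ℤ := fun n =>
    n.divisors.image (fun d : ℕ => (d : ℤ)) ∪ n.divisors.image (fun d : ℕ => -(d : ℤ))
  let U : Finset (ι → ℤ) := (Finset.Icc 1 B).biUnion fun b => (b * A).divisors.biUnion fun v =>
    Fintype.piFinset fun _ : ι => Dz (b ^ 2 * v)
  have hsub : {x : ι → ℤ | (∀ i, x i ≠ 0 ∧ ((x i).natAbs : ℝ) ≤ H) ∧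
      ∑ i, (a i : ℚ) / x i = 0} ⊆ (U : Set (ι → ℤ)) := by
    rintro x ⟨hx, hs⟩
    have hP0 : 0 < ∏ i, (x i).natAbs := Finset.prod_pos fun i _ => Int.natAbs_pos.2 (hx i).1
    obtain ⟨b, v, hb, hbv, hv⟩ := sq_decomp (A := A) hP0
      (fun p hp h1 h2 => prime_sq_dvd a x (fun i => (hx i).1) hs p hp h1 h2)
    have hPH : ((∏ i, (x i).natAbs : ℕ) : ℝ) ≤ H ^ k := by
      rw [Nat.cast_prod]
      calc ∏ i, ((x i).natAbs : ℝ) ≤ ∏ i : ι, H :=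
            Finset.prod_le_prod (fun _ _ => by positivity) fun i _ => (hx i).2
        _ = _ := by rw [Finset.prod_const, Finset.card_univ, hk]
    have hv0 : 0 < v := by
      rcases Nat.eq_zero_or_pos v with h | h
      · subst h; omega
      · exact h
    have hbB : b ≤ B := by
      refine Nat.le_floor ?_
      have h1 : (b : ℝ) ^ 2 ≤ H ^ k := by
        refine le_trans ?_ hPH
        rw [← hbv]
        exact_mod_cast Nat.le_mul_of_pos_right _ hv0
      have h2 : (H ^ ((k:ℝ) / 2)) ^ 2 = H ^ k := by
        rw [← Real.rpow_natCast, ← Real.rpow_mul (by positivity), ← Real.rpow_natCast]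
        congr 1; push_cast; ring
      rw [← h2] at h1
      exact le_of_sq_le_sq h1 (by positivity)
    simp only [U, Finset.coe_biUnion, Set.mem_iUnion, Finset.mem_coe, Fintype.mem_piFinset]
    refine ⟨b, Finset.mem_Icc.2 ⟨hb, hbB⟩, v, Nat.mem_divisors.2 ⟨hv, by positivity⟩, fun i => ?_⟩
    have hd : (x i).natAbs ∈ (b ^ 2 * v).divisors := by
      rw [hbv]
      exact Nat.mem_divisors.2 ⟨Finset.dvd_prod_of_mem (fun i => (x i).natAbs) (Finset.mem_univ i), hP0.ne'⟩
    simp only [Dz, Finset.mem_union, Finset.mem_image]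
    rcases Int.natAbs_eq (x i) with h | h
    · exact Or.inl ⟨_, hd, h.symm⟩
    · exact Or.inr ⟨_, hd, h.symm⟩
  have hU : (U.card : ℝ) ≤ B * (C * M ^ δ * (2 * C * M ^ δ) ^ k) := by
    have h1 : (U.card : ℝ) ≤ ∑ b ∈ Finset.Icc 1 B, ∑ v ∈ (b * A).divisors,
        ((Fintype.piFinset fun _ : ι => Dz (b ^ 2 * v)).card : ℝ) := by
      have : U.card ≤ ∑ b ∈ Finset.Icc 1 B, ∑ v ∈ (b * A).divisors,
          (Fintype.piFinset fun _ : ι => Dz (b ^ 2 * v)).card :=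
        Finset.card_biUnion_le.trans (Finset.sum_le_sum fun b _ => Finset.card_biUnion_le)
      exact_mod_cast this
    refine h1.trans ?_
    have h2 : ∀ b ∈ Finset.Icc 1 B, ∑ v ∈ (b * A).divisors,
        ((Fintype.piFinset fun _ : ι => Dz (b ^ 2 * v)).card : ℝ) ≤
        C * M ^ δ * (2 * C * M ^ δ) ^ k := by
      intro b hb
      obtain ⟨hb1, hb2⟩ := Finset.mem_Icc.1 hb
      have hbr : (b : ℝ) ≤ H ^ k := le_trans (by exact_mod_cast hb2) hBH'
      have hbA : ((b * A : ℕ) : ℝ) ≤ C0 ^ k * H ^ (k + K * k) := by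
        push_cast
        calc (b : ℝ) * A ≤ H ^ k * (C0 ^ k * H ^ (K * k)) := by gcongr
          _ = _ := by rw [pow_add]; ring
      have hbAM : ((b * A : ℕ) : ℝ) ≤ M := hbA.trans (by
        rw [hM]; gcongr
        omega)
      have h3 : ∀ v ∈ (b * A).divisors, ((Fintype.piFinset fun _ : ι => Dz (b ^ 2 * v)).card : ℝ) ≤
          (2 * C * M ^ δ) ^ k := by
        intro v hv
        have hv1 := Nat.pos_of_mem_divisors hv
        have hv2 : v ≤ b * A := Nat.divisor_le hv
        rw [Fintype.card_piFinset, Finset.prod_const, Finset.card_univ, hk, Nat.cast_pow]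
        refine pow_le_pow_left₀ (by positivity) ?_ _
        have h4 : ((Dz (b ^ 2 * v)).card : ℝ) ≤ 2 * ((b ^ 2 * v).divisors.card : ℝ) := by
          exact_mod_cast card_int_divisors (b ^ 2 * v)
        refine h4.trans ?_
        rw [mul_assoc]
        gcongr
        refine (hC _ (by positivity)).trans ?_
        gcongr
        calc ((b ^ 2 * v : ℕ) : ℝ) ≤ (b : ℝ) ^ 2 * ((b * A : ℕ) : ℝ) := by
              push_cast
              gcongr
              exact_mod_cast hv2
          _ ≤ (H ^ k) ^ 2 * (C0 ^ k * H ^ (k + K * k)) := by gcongr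
          _ = M := by rw [hM, hL]; ring
      calc _ ≤ ∑ v ∈ (b * A).divisors, (2 * C * M ^ δ) ^ k := Finset.sum_le_sum h3
        _ = ((b * A).divisors.card : ℝ) * (2 * C * M ^ δ) ^ k := by
            rw [Finset.sum_const, nsmul_eq_mul]
        _ ≤ _ := by
            gcongr
            refine (hC _ (by positivity)).trans ?_
            gcongr
    refine (Finset.sum_le_sum h2).trans ?_
    rw [Finset.sum_const, nsmul_eq_mul]
    simp
  have hT : (Set.ncard {x : ι → ℤ | (∀ i, x i ≠ 0 ∧ ((x i).natAbs : ℝ) ≤ H) ∧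
      ∑ i, (a i : ℚ) / x i = 0} : ℝ) ≤ U.card := by
    have := Set.ncard_le_ncard hsub U.finite_toSet
    rw [Set.ncard_coe_finset] at this
    exact_mod_cast this
  refine hT.trans (hU.trans ?_)
  have hM0 : 0 < M := by positivity
  have hMp : M ^ δ * (M ^ δ) ^ k = (C0 ^ k) ^ (δ * (k + 1)) * H ^ (L * (δ * (k + 1))) := by
    rw [← pow_succ', ← Real.rpow_natCast, ← Real.rpow_mul hM0.le, hM,
      Real.mul_rpow (by positivity) (by positivity)]
    push_cast
    congr 1
    rw [← Real.rpow_natCast H L, ← Real.rpow_mul (by positivity)]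
  have hexp : L * (δ * (k + 1)) ≤ ε := by
    rw [hδ]
    have : (0:ℝ) < L * (k + 1) + 1 := by positivity
    rw [show (L:ℝ) * (ε / (L * (k + 1) + 1) * (k + 1)) = ε * (L * (k + 1)) / (L * (k + 1) + 1) by ring,
      div_le_iff₀ this]
    nlinarith
  calc (B : ℝ) * (C * M ^ δ * (2 * C * M ^ δ) ^ k)
      = C * 2 ^ k * C ^ k * B * (M ^ δ * (M ^ δ) ^ k) := by ring
    _ = C * 2 ^ k * C ^ k * (C0 ^ k) ^ (δ * (k + 1)) * (B * H ^ (L * (δ * (k + 1)))) := by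
        rw [hMp]; ring
    _ ≤ C * 2 ^ k * C ^ k * (C0 ^ k) ^ (δ * (k + 1)) * (H ^ ((k:ℝ) / 2) * H ^ ε) := by
        gcongr
    _ = _ := by rw [← Real.rpow_add (by positivity)]

theorem egyptian_finite (H : ℝ) : (Egyptian H).Finite ∧ (1 ≤ H → ((Egyptian H).ncard : ℝ) ≤ 3 * H) := by
  have hsub : Egyptian H ⊆
      (((Finset.Icc (-(⌊H⌋₊ : ℤ)) ⌊H⌋₊).image (fun a : ℤ => 1 / (a : ℚ)) : Finset ℚ) : Set ℚ) := by
    rintro x ⟨a, ha, haH, rfl⟩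
    have h1 : |a| ≤ (⌊H⌋₊ : ℤ) := by
      rw [Int.abs_eq_natAbs]
      have : (a.natAbs : ℝ) ≤ H := by rw [Nat.cast_natAbs, Int.cast_abs]; exact haH
      exact_mod_cast Nat.le_floor this
    simp only [Finset.coe_image, Finset.coe_Icc, Set.mem_image, Set.mem_Icc]
    exact ⟨a, abs_le.1 h1, rfl⟩
  refine ⟨(Finset.finite_toSet _).subset hsub, fun hH => ?_⟩
  have h1 := Set.ncard_le_ncard hsub (Finset.finite_toSet _)
  rw [Set.ncard_coe_finset] at h1
  have h2 : (Egyptian H).ncard ≤ 2 * ⌊H⌋₊ + 1 := by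
    refine h1.trans (Finset.card_image_le.trans ?_)
    rw [Int.card_Icc]; omega
  have h3 : (⌊H⌋₊ : ℝ) ≤ H := Nat.floor_le (by linarith)
  have h4 : ((Egyptian H).ncard : ℝ) ≤ 2 * ⌊H⌋₊ + 1 := by exact_mod_cast h2
  linarith

theorem egyptian_ne_zero {H : ℝ} {x : ℚ} (hx : x ∈ Egyptian H) : x ≠ 0 := by
  obtain ⟨a, ha, -, rfl⟩ := hx
  have : (a : ℚ) ≠ 0 := by exact_mod_cast ha
  positivity

theorem egyptian_num {H : ℝ} {x : ℚ} (hx : x ∈ Egyptian H) :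
    (x⁻¹).num ≠ 0 ∧ (((x⁻¹).num).natAbs : ℝ) ≤ H ∧ x = 1 / ((x⁻¹).num : ℚ) := by
  obtain ⟨a, ha, haH, rfl⟩ := hx
  have : (1 / (a : ℚ))⁻¹ = a := by simp
  rw [this, Rat.num_intCast]
  exact ⟨ha, by rw [Nat.cast_natAbs, Int.cast_abs]; exact haH, rfl⟩

theorem key_count' (k K : ℕ) (C0 ε : ℝ) (hC0 : 1 ≤ C0) (hε : 0 < ε) : ∃ C : ℝ, 0 ≤ C ∧
    ∀ H : ℝ, 2 ≤ H → ∀ (ι : Type) [Fintype ι] [DecidableEq ι], Fintype.card ι = k →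
    ∀ a : ι → ℤ, (∀ i, a i ≠ 0) → (∀ i, ((a i).natAbs : ℝ) ≤ C0 * H ^ K) →
    {y : ι → ℚ | (∀ i, y i ∈ Egyptian H) ∧ ∑ i, (a i : ℚ) * y i = 0}.Finite ∧
    (Set.ncard {y : ι → ℚ | (∀ i, y i ∈ Egyptian H) ∧
      ∑ i, (a i : ℚ) * y i = 0} : ℝ) ≤ C * H ^ ((k : ℝ) / 2 + ε) := by
  obtain ⟨C, hC0, hC⟩ := key_count k K C0 ε hC0 hε
  refine ⟨C, hC0, ?_⟩
  intro H hH ι _ _ hk a ha haH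
  have hfin : ∀ B : Set ℤ, B.Finite → {x : ι → ℤ | ∀ i, x i ∈ B}.Finite := fun B hB => by
    have := Set.Finite.pi' (ι := ι) (t := fun _ => B) (fun _ => hB)
    exact this
  have hfin2 : {y : ι → ℚ | (∀ i, y i ∈ Egyptian H) ∧ ∑ i, (a i : ℚ) * y i = 0}.Finite := by
    have := Set.Finite.pi' (ι := ι) (t := fun _ => Egyptian H) (fun _ => (egyptian_finite H).1)
    exact this.subset fun y hy => hy.1
  refine ⟨hfin2, le_trans ?_ (hC H hH ι hk a ha haH)⟩
  have hfin3 : {x : ι → ℤ | (∀ i, x i ≠ 0 ∧ ((x i).natAbs : ℝ) ≤ H) ∧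
      ∑ i, (a i : ℚ) / x i = 0}.Finite := by
    refine (hfin (Set.Icc (-(⌊H⌋₊ : ℤ)) ⌊H⌋₊) (Set.finite_Icc _ _)).subset ?_
    rintro x ⟨hx, -⟩ i
    have := Nat.le_floor (hx i).2
    rw [Set.mem_Icc]; omega
  refine Nat.cast_le.2 ?_
  refine Set.ncard_le_ncard_of_injOn (fun y i => ((y i)⁻¹).num) ?_ ?_ hfin3
  · rintro y ⟨hy, hs⟩
    refine ⟨fun i => ⟨(egyptian_num (hy i)).1, (egyptian_num (hy i)).2.1⟩, ?_⟩
    rw [← hs]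
    refine Finset.sum_congr rfl fun i _ => ?_
    conv_rhs => rw [(egyptian_num (hy i)).2.2]
    ring
  · rintro y ⟨hy, -⟩ y' ⟨hy', -⟩ h
    funext i
    have := congrFun h i
    simp only at this
    rw [(egyptian_num (hy i)).2.2, (egyptian_num (hy' i)).2.2, this]

theorem clear_denoms {κ : Type} [Fintype κ] [DecidableEq κ] {H : ℝ} (e : κ → ℚ)
    (he : ∀ k, e k ∈ Egyptian H) : ∃ D : ℤ, D ≠ 0 ∧ ∃ Y : κ → ℤ,
      ∀ k, (Y k : ℚ) = D * e k ∧ |Y k| ≤ (⌊H⌋₊ : ℤ) ^ Fintype.card κ := by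
  obtain ⟨d, hd⟩ : ∃ d : κ → ℤ, ∀ k, d k ≠ 0 ∧ ((d k).natAbs : ℝ) ≤ H ∧ e k = 1 / (d k : ℚ) :=
    ⟨fun k => ((e k)⁻¹).num, fun k => egyptian_num (he k)⟩
  refine ⟨∏ k, d k, Finset.prod_ne_zero_iff.2 fun k _ => (hd k).1,
    fun k => ∏ l ∈ Finset.univ.erase k, d l, fun k => ⟨?_, ?_⟩⟩
  · rw [← Finset.mul_prod_erase _ _ (Finset.mem_univ k)]
    have h := hd k
    conv_rhs => rw [h.2.2]
    have h0 : (d k : ℚ) ≠ 0 := by exact_mod_cast h.1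
    push_cast
    field_simp
  · have hb : ∀ l, |d l| ≤ (⌊H⌋₊ : ℤ) := fun l => by
      rw [Int.abs_eq_natAbs]
      exact_mod_cast Nat.le_floor (hd l).2.1
    have h1 : (1 : ℤ) ≤ ⌊H⌋₊ := le_trans (Int.one_le_abs (hd k).1) (hb k)
    rw [Finset.abs_prod]
    calc _ ≤ ∏ l ∈ Finset.univ.erase k, (⌊H⌋₊ : ℤ) :=
          Finset.prod_le_prod (fun _ _ => abs_nonneg _) fun l _ => hb l
      _ = (⌊H⌋₊ : ℤ) ^ (Finset.univ.erase k).card := by rw [Finset.prod_const]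
      _ ≤ _ := pow_le_pow_right₀ h1 (Finset.card_le_univ _)

open Matrix in
theorem int_relation (r : ℕ) : ∃ K : ℕ, ∃ C0 : ℝ, 1 ≤ C0 ∧ ∀ H : ℝ, 2 ≤ H →
    ∀ (X : Matrix (Fin r) (Fin r) ℚ) (w c : Fin r → ℚ), X.det ≠ 0 → (∀ i j, X i j ∈ Egyptian H) →
    (∀ j, w j ∈ Egyptian H) → c ᵥ* X = w →
    ∃ (a0 : ℤ) (a : Fin r → ℤ), a0 ≠ 0 ∧ (∀ j, (a j : ℚ) = a0 * c j) ∧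
      ((a0.natAbs : ℝ) ≤ C0 * H ^ K) ∧ ∀ j, ((a j).natAbs : ℝ) ≤ C0 * H ^ K := by
  set k := Fintype.card (Option (Fin r) × Fin r) with hk
  refine ⟨k * (r + 1), (r + 1) * r.factorial, ?_, ?_⟩
  · have : (1:ℝ) ≤ r.factorial := by exact_mod_cast Nat.factorial_pos r
    nlinarith [show (0:ℝ) ≤ r by positivity]
  intro H hH X w c hX hXE hwE hc
  obtain ⟨D, hD, Y, hY⟩ := clear_denoms (H := H)
    (fun q : Option (Fin r) × Fin r => q.1.elim (w q.2) (fun i => X i q.2)) (by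
      rintro ⟨_ | i, j⟩
      · exact hwE j
      · exact hXE i j)
  rw [← hk] at hY
  set N : ℤ := (⌊H⌋₊ : ℤ) with hN
  have hN1 : 1 ≤ N := by
    have : 1 ≤ ⌊H⌋₊ := Nat.le_floor (by push_cast; linarith)
    rw [hN]; exact_mod_cast this
  have hNH : (N : ℝ) ≤ H := by rw [hN]; exact_mod_cast Nat.floor_le (by linarith)
  set Z : Matrix (Fin r) (Fin r) ℤ := Matrix.of fun i j => Y (some i, j) with hZ
  set y : Fin r → ℤ := fun j => Y (none, j) with hy
  have hZX : Z.map (Int.castRingHom ℚ) = (D : ℚ) • X := by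
    ext i j
    simp [hZ, (hY (some i, j)).1]
  have hyw : (fun j => (y j : ℚ)) = (D : ℚ) • w := by
    ext j
    simp [hy, (hY (none, j)).1]
  have hdet : ((Z.det : ℤ) : ℚ) ≠ 0 := by
    have : ((Z.det : ℤ) : ℚ) = (Z.map (Int.castRingHom ℚ)).det := (Int.castRingHom ℚ).map_det Z
    rw [this, hZX, Matrix.det_smul]
    have : (D : ℚ) ≠ 0 := by exact_mod_cast hD
    positivity
  have hNk : (1:ℤ) ≤ N ^ k := one_le_pow₀ hN1
  have hdetb : |Z.det| ≤ r.factorial * (N ^ k) ^ r := by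
    have := Matrix.det_le (A := Z) (abv := AbsoluteValue.abs) (x := N ^ k) (fun i j => (hY (some i, j)).2)
    simpa using this
  have hadj : ∀ i j, |Z.adjugate i j| ≤ r.factorial * (N ^ k) ^ r := by
    intro i j
    rw [Matrix.adjugate_apply]
    have := Matrix.det_le (A := Z.updateRow j (Pi.single i 1)) (abv := AbsoluteValue.abs) (x := N ^ k) (by
      intro p q
      by_cases hp : p = j
      · subst hp
        rw [Matrix.updateRow_self]
        by_cases hq : q = i
        · subst hq; simpa using hNk
        · simp [hq]; linarith
      · rw [Matrix.updateRow_ne hp]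
        exact (hY (some p, q)).2)
    simpa using this
  have hF : (0:ℤ) ≤ r.factorial * (N ^ k) ^ r := by positivity
  have hfin : ∀ z : ℤ, |z| ≤ (r + 1) * (r.factorial * (N ^ k) ^ r) * N ^ k →
      (z.natAbs : ℝ) ≤ ((r:ℝ) + 1) * r.factorial * H ^ (k * (r + 1)) := by
    intro z hz
    have h1 : (|z| : ℝ) ≤ (r + 1) * (r.factorial * ((N:ℝ) ^ k) ^ r) * (N:ℝ) ^ k := by exact_mod_cast hz
    rw [Nat.cast_natAbs, Int.cast_abs]
    refine h1.trans ?_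
    have hN0 : (0:ℝ) ≤ N := by exact_mod_cast (by linarith : (0:ℤ) ≤ N)
    calc _ = ((r:ℝ) + 1) * r.factorial * (N:ℝ) ^ (k * (r + 1)) := by ring
      _ ≤ _ := by gcongr
  refine ⟨Z.det, y ᵥ* Z.adjugate, by exact_mod_cast hdet, ?_, hfin _ ?_, fun j => hfin _ ?_⟩
  · have h1 : (fun j => (y j : ℚ)) = c ᵥ* Z.map (Int.castRingHom ℚ) := by
      rw [hyw, hZX, ← hc, Matrix.vecMul_smul]
    have h2 : (fun j => (((y ᵥ* Z.adjugate) j : ℤ) : ℚ))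
        = (fun j => (y j : ℚ)) ᵥ* (Z.map (Int.castRingHom ℚ)).adjugate := by
      have : (Z.map (Int.castRingHom ℚ)).adjugate = Z.adjugate.map (Int.castRingHom ℚ) :=
        ((Int.castRingHom ℚ).map_adjugate Z).symm
      rw [this]
      ext j
      simp [Matrix.vecMul, dotProduct]
    intro j
    have h3 := congrFun h2 j
    rw [h3, h1, Matrix.vecMul_vecMul, Matrix.mul_adjugate, Matrix.vecMul_smul, Matrix.vecMul_one]
    have : ((Z.det : ℤ) : ℚ) = (Z.map (Int.castRingHom ℚ)).det := (Int.castRingHom ℚ).map_det Z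
    rw [this]; simp
  · refine hdetb.trans ?_
    have : (0:ℤ) ≤ r := by positivity
    calc (r.factorial * (N ^ k) ^ r : ℤ) = 1 * (r.factorial * (N ^ k) ^ r) * 1 := by ring
      _ ≤ _ := by gcongr; linarith
  · calc |(y ᵥ* Z.adjugate) j| ≤ ∑ i, |y i * Z.adjugate i j| := by
          rw [Matrix.vecMul, dotProduct]; exact Finset.abs_sum_le_sum_abs _ _
      _ ≤ ∑ i : Fin r, N ^ k * (r.factorial * (N ^ k) ^ r) := by
          refine Finset.sum_le_sum fun i _ => ?_
          rw [abs_mul]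
          exact mul_le_mul (hY (none, i)).2 (hadj i j) (abs_nonneg _) (by positivity)
      _ = r * (r.factorial * (N ^ k) ^ r) * N ^ k := by simp; ring
      _ ≤ _ := by gcongr; linarith

theorem ncard_pi_const {ι δ : Type} [Fintype ι] (S : Set δ) (hS : S.Finite) :
    {F : ι → δ | ∀ i, F i ∈ S}.Finite ∧
    Set.ncard {F : ι → δ | ∀ i, F i ∈ S} = S.ncard ^ Fintype.card ι := by
  classical
  have h : {F : ι → δ | ∀ i, F i ∈ S} = (Fintype.piFinset fun _ : ι => hS.toFinset : Finset (ι → δ)) := by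
    ext F; simp
  rw [h]
  refine ⟨Finset.finite_toSet _, ?_⟩
  rw [Set.ncard_coe_finset, Fintype.card_piFinset, Finset.prod_const, Finset.card_univ,
    Set.ncard_eq_toFinset_card S hS]

theorem ncard_fiber {α β : Type} (T : Set α) (hT : T.Finite) (φ : α → β) (p q : ℝ) (hp : 0 ≤ p)
    (hfib : ∀ b ∈ φ '' T, (Set.ncard {x ∈ T | φ x = b} : ℝ) ≤ p)
    (him : (Set.ncard (φ '' T) : ℝ) ≤ q) : (T.ncard : ℝ) ≤ p * q := by
  classical
  have h1 : T.ncard = ∑ b ∈ hT.toFinset.image φ, (hT.toFinset.filter fun x => φ x = b).card := by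
    rw [Set.ncard_eq_toFinset_card T hT]
    exact Finset.card_eq_sum_card_image φ _
  have him' : φ '' T = (hT.toFinset.image φ : Finset β) := by ext; simp
  have h2 : ∀ b ∈ hT.toFinset.image φ, ((hT.toFinset.filter fun x => φ x = b).card : ℝ) ≤ p := by
    intro b hb
    have hb' : b ∈ φ '' T := by rw [him']; exact hb
    have := hfib b hb'
    have e : {x ∈ T | φ x = b} = (hT.toFinset.filter fun x => φ x = b : Finset α) := by ext; simp
    rwa [e, Set.ncard_coe_finset] at this
  rw [h1]
  push_cast
  calc _ ≤ ∑ b ∈ hT.toFinset.image φ, p := Finset.sum_le_sum h2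
    _ = p * (hT.toFinset.image φ).card := by rw [Finset.sum_const, nsmul_eq_mul, mul_comm]
    _ ≤ p * q := by
      rw [him', Set.ncard_coe_finset] at him
      gcongr

/-- exponent for the number of columns -/
noncomputable def colExp (r : ℕ) (ε : ℝ) (s : ℕ) : ℝ :=
  if s ≤ 1 then (r : ℝ) else (r : ℝ) - ((s : ℝ) - 1) / 2 + ε

open Matrix in
theorem col_count (r : ℕ) (ε : ℝ) (hε : 0 < ε) : ∃ C : ℝ, 1 ≤ C ∧ ∀ H : ℝ, 2 ≤ H →
    ∀ (X : Matrix (Fin r) (Fin r) ℚ) (w c : Fin r → ℚ), X.det ≠ 0 → (∀ i j, X i j ∈ Egyptian H) →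
    (∀ j, w j ∈ Egyptian H) → c ᵥ* X = w →
    (Set.ncard {y : Fin r → ℚ | (∀ j, y j ∈ Egyptian H) ∧ ∑ j, c j * y j ∈ Egyptian H} : ℝ) ≤
      C * H ^ colExp r ε (Fintype.card {j // c j ≠ 0}) := by
  obtain ⟨K, C0, hC0, hrel⟩ := int_relation r
  choose Ck hCk0 hCk using fun k => key_count' k K C0 ε hC0 hε
  have hsum0 : 0 ≤ ∑ k ∈ Finset.range (r + 2), Ck k := Finset.sum_nonneg fun k _ => hCk0 k
  refine ⟨3 ^ r * (1 + ∑ k ∈ Finset.range (r + 2), Ck k), ?_, ?_⟩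
  · exact one_le_mul_of_one_le_of_one_le (one_le_pow₀ (by norm_num)) (by linarith)
  intro H hH X w c hX hXE hwE hc
  have hH1 : 1 ≤ H := by linarith
  obtain ⟨hEf, hEc⟩ := egyptian_finite H
  specialize hEc hH1
  unfold colExp
  split_ifs with hs
  · obtain ⟨h1, h2⟩ := ncard_pi_const (ι := Fin r) (Egyptian H) hEf
    have h3 : Set.ncard {y : Fin r → ℚ | (∀ j, y j ∈ Egyptian H) ∧ ∑ j, c j * y j ∈ Egyptian H}
        ≤ (Egyptian H).ncard ^ r := by
      refine (Set.ncard_le_ncard (fun y hy => hy.1) h1).trans ?_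
      rw [h2, Fintype.card_fin]
    calc _ ≤ (((Egyptian H).ncard ^ r : ℕ) : ℝ) := by exact_mod_cast h3
      _ ≤ (3 * H) ^ r := by push_cast; gcongr
      _ = 3 ^ r * 1 * H ^ (r : ℝ) := by rw [mul_pow, Real.rpow_natCast]; ring
      _ ≤ _ := by gcongr; linarith
  · obtain ⟨a0, a, ha0, ha, hb0, hb⟩ := hrel H hH X w c hX hXE hwE hc
    set s := Fintype.card {j // c j ≠ 0} with hsdef
    have hsr : s ≤ r := by
      have := Fintype.card_subtype_le (fun j => c j ≠ 0)
      rwa [Fintype.card_fin] at this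
    let aa : Option {j // c j ≠ 0} → ℤ := fun o => o.elim (-a0) (fun j => a j)
    obtain ⟨hf1, hc1⟩ := hCk (s + 1) H hH (Option {j // c j ≠ 0}) (by simp [s]) aa (by
      rintro (_ | ⟨j, hj⟩)
      · simpa [aa] using ha0
      · have : (a j : ℚ) ≠ 0 := by
          rw [ha j]
          exact mul_ne_zero (by exact_mod_cast ha0) hj
        simpa [aa] using this) (by
      rintro (_ | ⟨j, hj⟩)
      · simpa [aa] using hb0
      · simpa [aa] using hb j)
    obtain ⟨hf2, hc2⟩ := ncard_pi_const (ι := {j // ¬ (c j ≠ 0)}) (Egyptian H) hEf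
    have hcard : Fintype.card {j // ¬ (c j ≠ 0)} = r - s := by
      rw [Fintype.card_subtype_compl, Fintype.card_fin]
    have h3 := Set.ncard_le_ncard_of_injOn
      (s := {y : Fin r → ℚ | (∀ j, y j ∈ Egyptian H) ∧ ∑ j, c j * y j ∈ Egyptian H})
      (t := {F : {j // ¬ (c j ≠ 0)} → ℚ | ∀ i, F i ∈ Egyptian H} ×ˢ
        {y : Option {j // c j ≠ 0} → ℚ | (∀ i, y i ∈ Egyptian H) ∧ ∑ i, (aa i : ℚ) * y i = 0})
      (fun y => (fun j => y j, fun o => o.elim (∑ j, c j * y j) (fun j => y j))) (by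
        rintro y ⟨hy1, hy2⟩
        refine ⟨fun j => hy1 j, ?_, ?_⟩
        · rintro (_ | j)
          · exact hy2
          · exact hy1 j
        · rw [Fintype.sum_option]
          simp only [aa, Option.elim]
          have : ∑ j, c j * y j = ∑ j : {j // c j ≠ 0}, c j * y j := by
            have h1 : ∑ j, c j * y j = ∑ j ∈ Finset.univ.filter (fun j => c j ≠ 0), c j * y j := by
              rw [Finset.sum_filter_of_ne]
              intro j _ h
              exact left_ne_zero_of_mul h
            rw [h1]
            exact Finset.sum_subtype _ (by simp) _
          rw [this, Finset.mul_sum, ← Finset.sum_add_distrib]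
          refine Finset.sum_eq_zero fun j _ => ?_
          rw [ha j]; push_cast; ring) (by
        rintro y - y' - h
        funext j
        simp only [Prod.mk.injEq] at h
        by_cases hj : c j ≠ 0
        · exact congrFun h.2 (some ⟨j, hj⟩)
        · exact congrFun h.1 ⟨j, hj⟩) (hf2.prod hf1)
    rw [Set.ncard_prod, hc2, hcard] at h3
    have hle : Ck (s + 1) ≤ ∑ k ∈ Finset.range (r + 2), Ck k :=
      Finset.single_le_sum (f := Ck) (fun k _ => hCk0 k) (Finset.mem_range.2 (by omega))
    calc _ ≤ (((Egyptian H).ncard ^ (r - s) * _ : ℕ) : ℝ) := Nat.cast_le.2 h3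
      _ ≤ (3 * H) ^ (r - s) * (Ck (s + 1) * H ^ (((s + 1 : ℕ) : ℝ) / 2 + ε)) := by
          push_cast at hc1 ⊢
          gcongr
      _ = 3 ^ (r - s) * Ck (s + 1) * (H ^ (((r - s : ℕ) : ℝ)) * H ^ (((s + 1 : ℕ) : ℝ) / 2 + ε)) := by
          rw [mul_pow, Real.rpow_natCast]; ring
      _ = 3 ^ (r - s) * Ck (s + 1) * H ^ ((r : ℝ) - ((s : ℝ) - 1) / 2 + ε) := by
          rw [← Real.rpow_add (by linarith)]
          congr 2
          rw [Nat.cast_sub hsr]; push_cast; ring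
      _ ≤ _ := by
          have h0 := hCk0 (s + 1)
          have h1 : (3:ℝ) ^ (r - s) ≤ 3 ^ r := pow_le_pow_right₀ (by norm_num) (Nat.sub_le _ _)
          have h2 : Ck (s + 1) ≤ 1 + ∑ k ∈ Finset.range (r + 2), Ck k := by linarith
          gcongr

theorem subspace_count (r : ℕ) (V : Submodule ℚ (Fin r → ℚ)) (E : Set ℚ) (hE : E.Finite) :
    ∃ d ≤ Module.finrank ℚ V, Set.ncard {w : Fin r → ℚ | w ∈ V ∧ ∀ j, w j ∈ E} ≤ E.ncard ^ d := by
  let φ : Fin r → Module.Dual ℚ V := fun j => (LinearMap.proj j).comp V.subtype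
  obtain ⟨f, hf1, hf2, hf3⟩ := Submodule.exists_fun_fin_finrank_span_eq ℚ (Set.range φ)
  choose σ hσ using hf1
  refine ⟨_, (Submodule.finrank_le (Submodule.span ℚ (Set.range φ))).trans_eq Subspace.dual_finrank_eq, ?_⟩
  obtain ⟨h1, h2⟩ := ncard_pi_const (ι := Fin (Module.finrank ℚ (Submodule.span ℚ (Set.range φ)))) E hE
  rw [Fintype.card_fin] at h2
  rw [← h2]
  refine Set.ncard_le_ncard_of_injOn (fun w i => w (σ i)) (fun w hw i => hw.2 _) ?_ h1
  rintro w ⟨hw, -⟩ w' ⟨hw', -⟩ h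
  have key : ∀ ψ ∈ Submodule.span ℚ (Set.range f), ψ (⟨w, hw⟩ - ⟨w', hw'⟩) = 0 := by
    intro ψ hψ
    induction hψ using Submodule.span_induction with
    | mem x hx =>
      obtain ⟨i, rfl⟩ := hx
      rw [← hσ i, map_sub, sub_eq_zero]
      exact congrFun h i
    | zero => rfl
    | add x y _ _ hx hy => rw [LinearMap.add_apply, hx, hy, add_zero]
    | smul a x _ hx => rw [LinearMap.smul_apply, hx, smul_zero]
  rw [hf2] at key
  funext j
  have := key (φ j) (Submodule.subset_span ⟨j, rfl⟩)
  rw [map_sub, sub_eq_zero] at this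
  exact this

open Matrix in
theorem row_count (r s : ℕ) (H : ℝ) (hH : 2 ≤ H) (X : Matrix (Fin r) (Fin r) ℚ) :
    {w : Fin r → ℚ | (∀ j, w j ∈ Egyptian H) ∧
      ∃ c : Fin r → ℚ, c ᵥ* X = w ∧ Fintype.card {j // c j ≠ 0} ≤ s}.Finite ∧
    (Set.ncard {w : Fin r → ℚ | (∀ j, w j ∈ Egyptian H) ∧
      ∃ c : Fin r → ℚ, c ᵥ* X = w ∧ Fintype.card {j // c j ≠ 0} ≤ s} : ℝ) ≤ 2 ^ r * (3 * H) ^ s := by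
  classical
  obtain ⟨hEf, hEc⟩ := egyptian_finite H
  specialize hEc (by linarith)
  have hfin0 := (ncard_pi_const (ι := Fin r) (Egyptian H) hEf).1
  refine ⟨hfin0.subset fun w hw => hw.1, ?_⟩
  let V : Finset (Fin r) → Submodule ℚ (Fin r → ℚ) := fun S => Submodule.span ℚ ((S.image X.row : Finset _) : Set _)
  let Q : Finset (Fin r) → Set (Fin r → ℚ) := fun S => {w | w ∈ V S ∧ ∀ j, w j ∈ Egyptian H}
  have hQf : ∀ S, (Q S).Finite := fun S => hfin0.subset fun w hw => hw.2
  let I : Finset (Finset (Fin r)) := Finset.univ.filter fun S => S.card ≤ s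
  have hsub : {w : Fin r → ℚ | (∀ j, w j ∈ Egyptian H) ∧
      ∃ c : Fin r → ℚ, c ᵥ* X = w ∧ Fintype.card {j // c j ≠ 0} ≤ s} ⊆
      ((I.biUnion fun S => (hQf S).toFinset : Finset _) : Set _) := by
    rintro w ⟨hw, c, rfl, hc⟩
    simp only [Finset.coe_biUnion, Set.mem_iUnion, Set.Finite.coe_toFinset, Finset.mem_coe]
    refine ⟨Finset.univ.filter fun j => c j ≠ 0, ?_, ?_, hw⟩
    · simp only [I, Finset.mem_filter, Finset.mem_univ, true_and]
      rw [← Fintype.card_subtype]; exact hc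
    · rw [Matrix.vecMul_eq_sum]
      refine Submodule.sum_mem _ fun j _ => ?_
      by_cases hj : c j = 0
      · simp [hj]
      · exact Submodule.smul_mem _ _ (Submodule.subset_span (by
          rw [Finset.coe_image]
          exact ⟨j, by simpa using hj, rfl⟩))
  have h1 := Set.ncard_le_ncard hsub (Finset.finite_toSet _)
  rw [Set.ncard_coe_finset] at h1
  have h2 : ∀ S ∈ I, ((hQf S).toFinset.card : ℝ) ≤ (3 * H) ^ s := by
    intro S hS
    obtain ⟨d, hd, hd2⟩ := subspace_count r (V S) (Egyptian H) hEf
    have hds : d ≤ s := by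
      refine hd.trans ((finrank_span_finset_le_card _).trans (Finset.card_image_le.trans ?_))
      simpa [I] using hS
    rw [← Set.ncard_eq_toFinset_card _ (hQf S)]
    calc ((Q S).ncard : ℝ) ≤ (((Egyptian H).ncard ^ d : ℕ) : ℝ) := Nat.cast_le.2 hd2
      _ ≤ (3 * H) ^ d := by push_cast; gcongr
      _ ≤ _ := pow_le_pow_right₀ (by linarith) hds
  calc _ ≤ ((I.biUnion fun S => (hQf S).toFinset).card : ℝ) := Nat.cast_le.2 h1
    _ ≤ ∑ S ∈ I, ((hQf S).toFinset.card : ℝ) := by exact_mod_cast Finset.card_biUnion_le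
    _ ≤ ∑ S ∈ I, (3 * H) ^ s := Finset.sum_le_sum h2
    _ = I.card * (3 * H) ^ s := by rw [Finset.sum_const, nsmul_eq_mul]
    _ ≤ _ := by
      gcongr
      have : I.card ≤ 2 ^ r := (Finset.card_filter_le _ _).trans_eq (by simp)
      exact_mod_cast this

theorem exists_minor {m n r : ℕ} (A : Matrix (Fin m) (Fin n) ℚ) (hA : A.rank = r) :
    ∃ (f : Fin r → Fin m) (g : Fin r → Fin n), (A.submatrix f g).det ≠ 0 ∧
      ∃ M : Matrix (Fin m) (Fin r) ℚ, A = M * A.submatrix f id := by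
  have h := Submodule.exists_fun_fin_finrank_span_eq ℚ (Set.range A.row)
  rw [← Matrix.rank_eq_finrank_span_row, hA] at h
  obtain ⟨F, hF1, hF2, hF3⟩ := h
  choose f hf using hF1
  have hR : (A.submatrix f id).row = F := by
    funext i
    rw [← hf i]
    rfl
  have hRr : (A.submatrix f id).rank = r := by
    have := LinearIndependent.rank_matrix (M := A.submatrix f id) (by rw [hR]; exact hF3)
    rwa [Fintype.card_fin] at this
  have h' := Submodule.exists_fun_fin_finrank_span_eq ℚ (Set.range (A.submatrix f id).col)
  rw [← Matrix.rank_eq_finrank_span_cols, hRr] at h'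
  obtain ⟨G, hG1, -, hG3⟩ := h'
  choose g hg using hG1
  refine ⟨f, g, ?_, ?_⟩
  · have hc : (A.submatrix f g).col = G := by
      funext j
      rw [← hg j]
      rfl
    have : IsUnit (A.submatrix f g) := by
      rw [← Matrix.linearIndependent_cols_iff_isUnit, hc]
      exact hG3
    exact ((Matrix.isUnit_iff_isUnit_det _).1 this).ne_zero
  · have : ∀ i, ∃ c : Fin r → ℚ, ∑ j, c j • F j = A.row i := by
      intro i
      rw [← Submodule.mem_span_range_iff_exists_fun, hF2]
      exact Submodule.subset_span ⟨i, rfl⟩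
    choose M hM using this
    refine ⟨Matrix.of M, ?_⟩
    ext i l
    have h1 := congrFun (hM i) l
    rw [Matrix.mul_apply]
    change _ = A i l at h1
    rw [← h1, Finset.sum_apply]
    refine Finset.sum_congr rfl fun j _ => ?_
    rw [Pi.smul_apply, smul_eq_mul, ← hf j]
    rfl

theorem matrix_finite (m n : ℕ) (H : ℝ) (hH : 1 ≤ H) :
    {A : Matrix (Fin m) (Fin n) ℚ | ∀ i j, A i j ∈ Egyptian H}.Finite ∧
    (Set.ncard {A : Matrix (Fin m) (Fin n) ℚ | ∀ i j, A i j ∈ Egyptian H} : ℝ) ≤ (3 * H) ^ (n * m) := by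
  obtain ⟨hEf, hEc⟩ := egyptian_finite H
  specialize hEc hH
  obtain ⟨h1, h2⟩ := ncard_pi_const (ι := Fin n) (Egyptian H) hEf
  obtain ⟨h3, h4⟩ := ncard_pi_const (ι := Fin m) _ h1
  rw [h2, Fintype.card_fin, Fintype.card_fin, ← pow_mul] at h4
  refine ⟨h3, ?_⟩
  have h5 : Set.ncard {A : Matrix (Fin m) (Fin n) ℚ | ∀ i j, A i j ∈ Egyptian H}
      = (Egyptian H).ncard ^ (n * m) := h4
  rw [h5, Nat.cast_pow]
  gcongr

theorem card_not_range {r m : ℕ} (f : Fin r → Fin m) (hf : Function.Injective f)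
    [Fintype {i // i ∉ Set.range f}] : Fintype.card {i // i ∉ Set.range f} = m - r := by
  classical
  have h := Fintype.card_subtype_compl (fun i => i ∈ Set.range f)
  have h2 : Fintype.card {i // i ∈ Set.range f} = r := by
    have := Set.card_range_of_injective hf
    rw [Fintype.card_fin] at this
    convert this
  rw [h2, Fintype.card_fin] at h
  rw [← h]

open Matrix in
theorem left_count (m r s : ℕ) (H : ℝ) (hH : 2 ≤ H) (f : Fin r → Fin m) (hf : Function.Injective f) :
    {G : Matrix (Fin m) (Fin r) ℚ | (∀ i j, G i j ∈ Egyptian H) ∧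
      ∃ M : Matrix (Fin m) (Fin r) ℚ, G = M * G.submatrix f id ∧
        ∀ i ∉ Set.range f, Fintype.card {j // M i j ≠ 0} ≤ s}.Finite ∧
    (Set.ncard {G : Matrix (Fin m) (Fin r) ℚ | (∀ i j, G i j ∈ Egyptian H) ∧
      ∃ M : Matrix (Fin m) (Fin r) ℚ, G = M * G.submatrix f id ∧
        ∀ i ∉ Set.range f, Fintype.card {j // M i j ≠ 0} ≤ s} : ℝ) ≤
      (2 ^ r * (3 * H) ^ s) ^ (m - r) * (3 * H) ^ (r * r) := by
  classical
  have hfin := (matrix_finite m r H (by linarith)).1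
  obtain ⟨hXf, hXc⟩ := matrix_finite r r H (by linarith)
  have hfinG : {G : Matrix (Fin m) (Fin r) ℚ | (∀ i j, G i j ∈ Egyptian H) ∧
      ∃ M : Matrix (Fin m) (Fin r) ℚ, G = M * G.submatrix f id ∧
        ∀ i ∉ Set.range f, Fintype.card {j // M i j ≠ 0} ≤ s}.Finite := hfin.subset fun G hG => hG.1
  refine ⟨hfinG, ?_⟩
  refine ncard_fiber _ hfinG (fun G => G.submatrix f id) _ _ (by positivity) ?_ ?_
  · rintro X -
    obtain ⟨h1, h2⟩ := row_count r s H hH X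
    obtain ⟨h3, h4⟩ := ncard_pi_const (ι := {i // i ∉ Set.range f}) _ h1
    rw [card_not_range f hf] at h4
    have h5 := Set.ncard_le_ncard_of_injOn
      (s := {G ∈ {G : Matrix (Fin m) (Fin r) ℚ | (∀ i j, G i j ∈ Egyptian H) ∧
      ∃ M : Matrix (Fin m) (Fin r) ℚ, G = M * G.submatrix f id ∧
        ∀ i ∉ Set.range f, Fintype.card {j // M i j ≠ 0} ≤ s} | G.submatrix f id = X})
      (fun G (i : {i // i ∉ Set.range f}) => G i) (by
        rintro G ⟨⟨hG, M, hM, hs⟩, rfl⟩ i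
        refine ⟨fun j => hG i j, M i, ?_, hs i i.2⟩
        conv_rhs => rw [hM]
        rfl) (by
        rintro G ⟨-, hX⟩ G' ⟨-, hX'⟩ h
        ext i j
        by_cases hi : i ∈ Set.range f
        · obtain ⟨t, rfl⟩ := hi
          exact congrFun (congrFun (hX.trans hX'.symm) t) j
        · exact congrFun (congrFun h ⟨i, hi⟩) j) h3
    rw [h4] at h5
    refine (Nat.cast_le.2 h5).trans ?_
    rw [Nat.cast_pow]
    gcongr
  · refine le_trans (Nat.cast_le.2 (Set.ncard_le_ncard ?_ hXf)) hXc
    rintro X ⟨G, hG, rfl⟩ i j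
    exact hG.1 _ _

open Matrix in
theorem stratum_count (m n r : ℕ) (ε : ℝ) (hε : 0 < ε) : ∃ C : ℝ, 1 ≤ C ∧ ∀ H : ℝ, 2 ≤ H →
    ∀ (s : ℕ) (f : Fin r → Fin m) (g : Fin r → Fin n),
    (Set.ncard {A : Matrix (Fin m) (Fin n) ℚ | (∀ i j, A i j ∈ Egyptian H) ∧
      (A.submatrix f g).det ≠ 0 ∧ ∃ M : Matrix (Fin m) (Fin r) ℚ, A = M * A.submatrix f id ∧
        (∀ i ∉ Set.range f, Fintype.card {j // M i j ≠ 0} ≤ s) ∧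
        ∃ i ∉ Set.range f, Fintype.card {j // M i j ≠ 0} = s} : ℝ) ≤
      (C * H ^ colExp r ε s) ^ (n - r) * ((2 ^ r * (3 * H) ^ s) ^ (m - r) * (3 * H) ^ (r * r)) := by
  classical
  obtain ⟨C, hC1, hC⟩ := col_count r ε hε
  refine ⟨C, hC1, ?_⟩
  intro H hH s f g
  have hpos : 0 ≤ (C * H ^ colExp r ε s) ^ (n - r) := by positivity
  set T := {A : Matrix (Fin m) (Fin n) ℚ | (∀ i j, A i j ∈ Egyptian H) ∧
      (A.submatrix f g).det ≠ 0 ∧ ∃ M : Matrix (Fin m) (Fin r) ℚ, A = M * A.submatrix f id ∧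
        (∀ i ∉ Set.range f, Fintype.card {j // M i j ≠ 0} ≤ s) ∧
        ∃ i ∉ Set.range f, Fintype.card {j // M i j ≠ 0} = s} with hT
  rcases T.eq_empty_or_nonempty with hTe | ⟨A₁, hA₁⟩
  · rw [hTe, Set.ncard_empty]
    push_cast
    positivity
  have hf : Function.Injective f := by
    intro a b hab
    by_contra hne
    exact hA₁.2.1 (Matrix.det_zero_of_row_eq hne (by ext j; simp [hab]))
  have hg : Function.Injective g := by
    intro a b hab
    by_contra hne
    exact hA₁.2.1 (Matrix.det_zero_of_column_eq hne (by intro j; simp [hab]))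
  have hfin := (matrix_finite m n H (by linarith)).1
  have hTf : T.Finite := hfin.subset fun A hA => hA.1
  have hmul : ∀ (A : Matrix (Fin m) (Fin n) ℚ) (M : Matrix (Fin m) (Fin r) ℚ),
      A = M * A.submatrix f id → A.submatrix id g = M * A.submatrix f g := by
    intro A M h
    ext i j
    conv_lhs => rw [h]
    rfl
  refine ncard_fiber T hTf (fun A => A.submatrix id g) _ _ hpos ?_ ?_
  · rintro G ⟨A₀, ⟨hE0, hd0, M₀, hM0, -, i₀, hi0, hs0⟩, rfl⟩
    have hcol := hC H hH (A₀.submatrix f g) (fun j => A₀ i₀ (g j)) (M₀ i₀) hd0 (fun i j => hE0 _ _)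
      (fun j => hE0 _ _) (by
        have := hmul A₀ M₀ hM0
        exact (congrFun this i₀).symm)
    rw [hs0] at hcol
    have hf1 : {y : Fin r → ℚ | (∀ j, y j ∈ Egyptian H) ∧ ∑ j, M₀ i₀ j * y j ∈ Egyptian H}.Finite :=
      (ncard_pi_const (ι := Fin r) (Egyptian H) (egyptian_finite H).1).1.subset fun y hy => hy.1
    obtain ⟨h3, h4⟩ := ncard_pi_const (ι := {l // l ∉ Set.range g}) _ hf1
    rw [card_not_range g hg] at h4
    have hfix : ∀ A ∈ T, A.submatrix id g = A₀.submatrix id g → A = M₀ * A.submatrix f id := by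
      rintro A ⟨hE, hd, M, hM, -, -⟩ hAg
      have hX : A.submatrix f g = A₀.submatrix f g := by
        ext i j
        exact congrFun (congrFun hAg (f i)) j
      have h1 := hmul A M hM
      have h2 := hmul A₀ M₀ hM0
      rw [hAg, h2, ← hX] at h1
      have hu : IsUnit (A.submatrix f g).det := isUnit_iff_ne_zero.2 hd
      have : M₀ = M := by
        rw [← Matrix.mul_nonsing_inv_cancel_right _ M₀ hu, h1, Matrix.mul_nonsing_inv_cancel_right _ M hu]
      rw [this]; exact hM
    have h5 := Set.ncard_le_ncard_of_injOn
      (s := {A ∈ T | A.submatrix id g = A₀.submatrix id g})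
      (fun A (l : {l // l ∉ Set.range g}) (j : Fin r) => A (f j) l) (by
        rintro A ⟨hA, hAg⟩ l
        refine ⟨fun j => hA.1 _ _, ?_⟩
        have h1 := congrFun (congrFun (hfix A hA hAg) i₀) l
        have h2 : ∑ j, M₀ i₀ j * A (f j) l = A i₀ l := by
          rw [h1]; rfl
        change ∑ j, M₀ i₀ j * A (f j) l ∈ Egyptian H
        rw [h2]
        exact hA.1 _ _) (by
        rintro A ⟨hA, hAg⟩ A' ⟨hA', hAg'⟩ h
        have hrow : A.submatrix f id = A'.submatrix f id := by
          ext j l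
          by_cases hl : l ∈ Set.range g
          · obtain ⟨t, rfl⟩ := hl
            exact congrFun (congrFun (hAg.trans hAg'.symm) (f j)) t
          · exact congrFun (congrFun h ⟨l, hl⟩) j
        rw [hfix A hA hAg, hfix A' hA' hAg', hrow]) h3
    rw [h4] at h5
    refine (Nat.cast_le.2 h5).trans ?_
    rw [Nat.cast_pow]
    gcongr
  · obtain ⟨h1, h2⟩ := left_count m r s H hH f hf
    refine le_trans (Nat.cast_le.2 (Set.ncard_le_ncard ?_ h1)) h2
    rintro G ⟨A, ⟨hE, hd, M, hM, hs, -⟩, rfl⟩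
    exact ⟨fun i j => hE _ _, M, hmul A M hM, hs⟩

/-- the bound of a stratum, with exponent collected -/
theorem stratum_bound (m n r s : ℕ) (hmr : r < m) (hnr : r < n) (ε C H : ℝ) (hC : 1 ≤ C) (hH : 2 ≤ H)
    (hs : s ≤ r) (e : ℝ)
    (he : colExp r ε s * ((n : ℝ) - r) + s * ((m : ℝ) - r) + r * r ≤ e) :
    (C * H ^ colExp r ε s) ^ (n - r) * ((2 ^ r * (3 * H) ^ s) ^ (m - r) * (3 * H) ^ (r * r)) ≤
      (C ^ (n - r) * ((2 ^ r * 3 ^ r) ^ (m - r) * 3 ^ (r * r))) * H ^ e := by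
  have hH0 : 0 < H := by linarith
  have h1 : (H ^ colExp r ε s) ^ (n - r) * ((H ^ s) ^ (m - r) * H ^ (r * r)) =
      H ^ (colExp r ε s * ((n : ℝ) - r) + s * ((m : ℝ) - r) + r * r) := by
    rw [← pow_mul, ← Real.rpow_natCast, ← Real.rpow_natCast, ← Real.rpow_natCast,
      ← Real.rpow_mul hH0.le, ← Real.rpow_add hH0, ← Real.rpow_add hH0]
    congr 1
    push_cast
    rw [Nat.cast_sub hmr.le, Nat.cast_sub hnr.le]
    ring
  have h3 : (3:ℝ) ^ s ≤ 3 ^ r := pow_le_pow_right₀ (by norm_num) hs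
  calc (C * H ^ colExp r ε s) ^ (n - r) * ((2 ^ r * (3 * H) ^ s) ^ (m - r) * (3 * H) ^ (r * r))
      = (C ^ (n - r) * ((2 ^ r * 3 ^ s) ^ (m - r) * 3 ^ (r * r))) *
        ((H ^ colExp r ε s) ^ (n - r) * ((H ^ s) ^ (m - r) * H ^ (r * r))) := by
        simp only [mul_pow]; ring
    _ ≤ _ := by
        rw [h1]
        gcongr
        linarith

theorem cover (m n r : ℕ) (hmr : r < m) (hr : 0 < r) (H : ℝ) (A : Matrix (Fin m) (Fin n) ℚ)
    (hE : ∀ i j, A i j ∈ Egyptian H) (hA : A.rank = r) :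
    ∃ (f : Fin r → Fin m) (g : Fin r → Fin n), ∃ s ∈ Finset.Icc 1 r,
      (A.submatrix f g).det ≠ 0 ∧ ∃ M : Matrix (Fin m) (Fin r) ℚ, A = M * A.submatrix f id ∧
        (∀ i ∉ Set.range f, Fintype.card {j // M i j ≠ 0} ≤ s) ∧
        ∃ i ∉ Set.range f, Fintype.card {j // M i j ≠ 0} = s := by
  classical
  obtain ⟨f, g, hd, M, hM⟩ := exists_minor A hA
  have hne : (Finset.univ.filter fun i => i ∉ Set.range f).Nonempty := by
    by_contra h
    rw [Finset.not_nonempty_iff_eq_empty] at h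
    have hsurj : Function.Surjective f := by
      intro i
      by_contra hi
      have : i ∈ (Finset.univ.filter fun i => i ∉ Set.range f) := by simpa using hi
      rw [h] at this
      simp at this
    have := Fintype.card_le_of_surjective f hsurj
    simp at this
    omega
  obtain ⟨i₀, hi0, hmax⟩ := Finset.exists_max_image _ (fun i => Fintype.card {j // M i j ≠ 0}) hne
  have hi0' : i₀ ∉ Set.range f := (Finset.mem_filter.1 hi0).2
  refine ⟨f, g, _, ?_, hd, M, hM, ?_, i₀, hi0', rfl⟩
  · rw [Finset.mem_Icc]
    constructor
    · by_contra hlt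
      have h0 : Fintype.card {j // M i₀ j ≠ 0} = 0 := by omega
      rw [Fintype.card_eq_zero_iff] at h0
      have hz : ∀ j, M i₀ j = 0 := fun j => by
        by_contra hj
        exact h0.false ⟨j, hj⟩
      have h1 := egyptian_ne_zero (hE i₀ (g ⟨0, hr⟩))
      apply h1
      rw [hM, Matrix.mul_apply]
      exact Finset.sum_eq_zero fun j _ => by rw [hz j, zero_mul]
    · have := Fintype.card_subtype_le (fun j => M i₀ j ≠ 0)
      rwa [Fintype.card_fin] at this
  · intro i hi
    exact hmax i (by simpa using hi)

theorem total_count (m n r : ℕ) (hmr : r < m) (hnr : r < n) (hr : 0 < r) (ε : ℝ) (hε : 0 < ε) :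
    ∃ C : ℝ, ∀ H : ℝ, 2 ≤ H → ∀ e : ℝ,
    (∀ s : ℕ, 1 ≤ s → s ≤ r → colExp r ε s * ((n : ℝ) - r) + s * ((m : ℝ) - r) + r * r ≤ e) →
    (Set.ncard {A : Matrix (Fin m) (Fin n) ℚ |
            (∀ i j, A i j ∈ Egyptian H) ∧ A.rank = r} : ℝ) ≤ C * H ^ e := by
  classical
  obtain ⟨C, hC1, hC⟩ := stratum_count m n r ε hε
  set C' : ℝ := C ^ (n - r) * ((2 ^ r * 3 ^ r) ^ (m - r) * 3 ^ (r * r)) with hC'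
  set I : Finset ((Fin r → Fin m) × (Fin r → Fin n) × ℕ) :=
    Finset.univ ×ˢ Finset.univ ×ˢ Finset.Icc 1 r with hI
  refine ⟨I.card * C', ?_⟩
  intro H hH e he
  let T : (Fin r → Fin m) × (Fin r → Fin n) × ℕ → Set (Matrix (Fin m) (Fin n) ℚ) := fun q =>
    {A : Matrix (Fin m) (Fin n) ℚ | (∀ i j, A i j ∈ Egyptian H) ∧
      (A.submatrix q.1 q.2.1).det ≠ 0 ∧ ∃ M : Matrix (Fin m) (Fin r) ℚ, A = M * A.submatrix q.1 id ∧
        (∀ i ∉ Set.range q.1, Fintype.card {j // M i j ≠ 0} ≤ q.2.2) ∧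
        ∃ i ∉ Set.range q.1, Fintype.card {j // M i j ≠ 0} = q.2.2}
  have hfin := (matrix_finite m n H (by linarith)).1
  have hTf : ∀ q, (T q).Finite := fun q => hfin.subset fun A hA => hA.1
  have hsub : {A : Matrix (Fin m) (Fin n) ℚ | (∀ i j, A i j ∈ Egyptian H) ∧ A.rank = r} ⊆
      ((I.biUnion fun q => (hTf q).toFinset : Finset _) : Set _) := by
    rintro A ⟨hE, hA⟩
    obtain ⟨f, g, s, hs, h⟩ := cover m n r hmr hr H A hE hA
    simp only [Finset.coe_biUnion, Set.mem_iUnion, Set.Finite.coe_toFinset, Finset.mem_coe]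
    exact ⟨(f, g, s), by simpa [hI] using hs, hE, h⟩
  have h1 := Set.ncard_le_ncard hsub (Finset.finite_toSet _)
  rw [Set.ncard_coe_finset] at h1
  calc _ ≤ ((I.biUnion fun q => (hTf q).toFinset).card : ℝ) := Nat.cast_le.2 h1
    _ ≤ ∑ q ∈ I, ((hTf q).toFinset.card : ℝ) := by exact_mod_cast Finset.card_biUnion_le
    _ ≤ ∑ q ∈ I, C' * H ^ e := by
        refine Finset.sum_le_sum fun q hq => ?_
        have hq' : 1 ≤ q.2.2 ∧ q.2.2 ≤ r := by simpa [hI] using hq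
        rw [← Set.ncard_eq_toFinset_card _ (hTf q)]
        exact (hC H hH q.2.2 q.1 q.2.1).trans
          (stratum_bound m n r q.2.2 hmr hnr ε C H hC1 hH hq'.2 e (he _ hq'.1 hq'.2))
    _ = _ := by rw [Finset.sum_const, nsmul_eq_mul]; ring

theorem stmt10 (m n r : ℕ) (hnm : n ≥ m) (hmr : m > r) (hr : r ≥ 3) :
    ∀ ε > (0 : ℝ), ∃ C : ℝ, ∀ H : ℝ, H ≥ 2 →
      (2 * m ≥ n + r →
        (Set.ncard {A : Matrix (Fin m) (Fin n) ℚ |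
            (∀ i j, A i j ∈ Egyptian H) ∧ A.rank = r} : ℝ) ≤
          C * H ^ (((n : ℝ) - r) * ((r : ℝ) + 1) / 2 + m * r + ε)) ∧
      (2 * m < n + r →
        (Set.ncard {A : Matrix (Fin m) (Fin n) ℚ |
            (∀ i j, A i j ∈ Egyptian H) ∧ A.rank = r} : ℝ) ≤
          C * H ^ ((n * r + m : ℝ) - r)) := by
  intro ε hε
  have hmr' : (r : ℝ) + 1 ≤ m := by exact_mod_cast hmr
  have hnm' : (m : ℝ) ≤ n := by exact_mod_cast hnm
  have hn : (0 : ℝ) < (n : ℝ) - r := by linarith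
  set δ : ℝ := min ε (1 / 2) / ((n : ℝ) - r) with hδ
  have hmin : 0 < min ε (1 / 2) := lt_min hε (by norm_num)
  have hδ0 : 0 < δ := div_pos hmin hn
  have hδn : δ * ((n : ℝ) - r) = min ε (1 / 2) := by rw [hδ]; field_simp
  have hδ1 : δ * ((n : ℝ) - r) ≤ ε := hδn ▸ min_le_left _ _
  have hδ2 : δ * ((n : ℝ) - r) ≤ 1 / 2 := hδn ▸ min_le_right _ _
  obtain ⟨C, hC⟩ := total_count m n r hmr (by omega) (by omega) δ hδ0
  refine ⟨C, fun H hH => ⟨fun h => hC H hH _ ?_, fun h => hC H hH _ ?_⟩⟩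
  · have h' : (n : ℝ) + r ≤ 2 * m := by exact_mod_cast h
    intro s hs1 hsr
    have hs1' : (1 : ℝ) ≤ s := by exact_mod_cast hs1
    have hsr' : (s : ℝ) ≤ r := by exact_mod_cast hsr
    have hk : 0 ≤ ((r : ℝ) - s) * (2 * m - n - r) := mul_nonneg (by linarith) (by linarith)
    unfold colExp
    split_ifs with h1
    · have : (s : ℝ) = 1 := by exact_mod_cast le_antisymm h1 hs1
      rw [this] at hk ⊢
      nlinarith
    · nlinarith
  · have h' : 2 * (m : ℝ) + 1 ≤ n + r := by exact_mod_cast h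
    intro s hs1 hsr
    have hs1' : (1 : ℝ) ≤ s := by exact_mod_cast hs1
    unfold colExp
    split_ifs with h1
    · have : (s : ℝ) = 1 := by exact_mod_cast le_antisymm h1 hs1
      rw [this]
      nlinarith
    · have hs2 : (2 : ℝ) ≤ s := by exact_mod_cast (by omega : 2 ≤ s)
      have hk : 0 ≤ ((s : ℝ) - 1) * (n + r - 2 * m - 1) := mul_nonneg (by linarith) (by linarith)
      nlinarith
end

section
/- Let n ≥ 2 be an integer. For every ε > 0 there exists a constant C = C(n, ε) such that for all real H ≥ 2 and all nonzero δ ∈ ℚ, the number of n×n matrices with all entries in E(H) and with determinant equal to δ is at most C·H^{ε} if n = 2, at most C·H^{7+ε} if n = 3, and at most C·H^{n²−n/2−1/(2n−2)+ε} if n ≥ 4. -/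
section Helpers

open Finset

/-- Fibrewise counting bound. -/
lemma fiber_bound {α β : Type*} [DecidableEq β] (s : Finset α) (t : Finset β) (f : α → β)
    (M : ℝ) (hf : ∀ a ∈ s, f a ∈ t)
    (hM : ∀ b ∈ t, ((s.filter (fun a => f a = b)).card : ℝ) ≤ M) :
    (s.card : ℝ) ≤ t.card * M := by
  rw [Finset.card_eq_sum_card_fiberwise (f := f) (t := t) (fun a ha => hf a ha)]
  push_cast
  calc _ ≤ ∑ b ∈ t, M := Finset.sum_le_sum hM
    _ = _ := by simp

/-- Positive integers up to `X` all of whose prime factors divide `Q`. -/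
noncomputable def sm (Q : ℕ) (X : ℝ) : Finset ℕ := by
  classical
  exact (Finset.Icc 1 ⌊X⌋₊).filter (fun m => ∀ p : ℕ, p.Prime → p ∣ m → p ∣ Q)

lemma mem_sm {Q : ℕ} {X : ℝ} {m : ℕ} (hX : 0 ≤ X) :
    m ∈ sm Q X ↔ (1 ≤ m ∧ (m : ℝ) ≤ X) ∧ ∀ p : ℕ, p.Prime → p ∣ m → p ∣ Q := by
  classical
  unfold sm
  rw [Finset.mem_filter, Finset.mem_Icc, Nat.le_floor_iff hX]

lemma smooth_prod_bound (ε : ℝ) (hε : 0 < ε) : ∃ C : ℝ, 1 ≤ C ∧ ∀ Q : ℕ, 1 ≤ Q →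
    ∏ p ∈ Q.primeFactors, (1 - (p : ℝ) ^ (-ε))⁻¹ ≤ C * (Q : ℝ) ^ ε := by
  obtain ⟨N, hN⟩ := exists_nat_gt ((2 : ℝ) ^ (1 / ε))
  have h2 : (2 : ℝ) ^ (-ε) < 1 := Real.rpow_lt_one_of_one_lt_of_neg (by norm_num) (by linarith)
  have h2' : 0 < (2 : ℝ) ^ (-ε) := by positivity
  set B : ℝ := (1 - (2 : ℝ) ^ (-ε))⁻¹ with hB
  have hB1 : 1 ≤ B := by
    rw [hB]; apply (one_le_inv₀ (by linarith)).2; linarith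
  refine ⟨B ^ N, one_le_pow₀ hB1, ?_⟩
  intro Q hQ
  have key : ∀ p ∈ Q.primeFactors,
      (1 - (p : ℝ) ^ (-ε))⁻¹ ≤ (if p < N then B else 1) * (p : ℝ) ^ ε := by
    intro p hp
    have hpp := Nat.prime_of_mem_primeFactors hp
    have hp2 : (2 : ℝ) ≤ p := by exact_mod_cast hpp.two_le
    have hpe : 1 ≤ (p : ℝ) ^ ε := Real.one_le_rpow (by linarith) hε.le
    have hle : (p : ℝ) ^ (-ε) ≤ 2 ^ (-ε) :=
      Real.rpow_le_rpow_of_nonpos (by norm_num) hp2 (by linarith)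
    split_ifs with h
    · calc (1 - (p : ℝ) ^ (-ε))⁻¹ ≤ B := by
            rw [hB]; apply inv_anti₀ <;> linarith
        _ ≤ _ := le_mul_of_one_le_right (by linarith) hpe
    · have hpN : (2 : ℝ) ^ (1 / ε) ≤ p := by
        have : (N : ℝ) ≤ p := by exact_mod_cast not_lt.1 h
        linarith
      have h3 : 2 ≤ (p : ℝ) ^ ε := by
        calc (2 : ℝ) = ((2 : ℝ) ^ (1 / ε)) ^ ε := by
              rw [← Real.rpow_mul (by norm_num)]; field_simp; simp
          _ ≤ _ := Real.rpow_le_rpow (by positivity) hpN hε.le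
      rw [one_mul, Real.rpow_neg (by linarith)]
      have h4 : 0 < (p : ℝ) ^ ε := by linarith
      rw [inv_le_comm₀ _ h4]
      · have : ((p : ℝ) ^ ε)⁻¹ ≤ 2⁻¹ := inv_anti₀ (by norm_num) h3
        linarith
      · have : ((p : ℝ) ^ ε)⁻¹ ≤ 2⁻¹ := inv_anti₀ (by norm_num) h3
        linarith
  calc _ ≤ ∏ p ∈ Q.primeFactors, ((if p < N then B else 1) * (p : ℝ) ^ ε) := by
        apply Finset.prod_le_prod _ key
        intro p hp
        have hpp := Nat.prime_of_mem_primeFactors hp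
        have hp2 : (2 : ℝ) ≤ p := by exact_mod_cast hpp.two_le
        have hle : (p : ℝ) ^ (-ε) ≤ 2 ^ (-ε) :=
          Real.rpow_le_rpow_of_nonpos (by norm_num) hp2 (by linarith)
        exact inv_nonneg.2 (by linarith)
    _ = (∏ p ∈ Q.primeFactors, (if p < N then B else 1)) *
          (∏ p ∈ Q.primeFactors, (p : ℝ)) ^ ε := by
        rw [Finset.prod_mul_distrib, Real.finsetProd_rpow _ _ (by intros; positivity)]
    _ ≤ B ^ N * (Q : ℝ) ^ ε := by
        gcongr
        · rw [Finset.prod_ite]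
          simp only [Finset.prod_const, one_pow, mul_one]
          apply pow_le_pow_right₀ hB1
          calc _ ≤ (Finset.range N).card := by
                apply Finset.card_le_card
                intro p hp
                simp at hp ⊢
                exact hp.2
            _ = N := by simp
        · have := Nat.le_of_dvd hQ (Nat.prod_primeFactors_dvd Q)
          rw [← Nat.cast_prod]
          exact_mod_cast this

lemma smooth_bound (ε : ℝ) (hε : 0 < ε) : ∃ C : ℝ, 1 ≤ C ∧ ∀ Q : ℕ, 1 ≤ Q → ∀ X : ℝ, 1 ≤ X →
    ((sm Q X).card : ℝ) ≤ C * X ^ ε * (Q : ℝ) ^ ε := by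
  obtain ⟨C, hC1, hC⟩ := smooth_prod_bound ε hε
  refine ⟨C, hC1, ?_⟩
  intro Q hQ X hX
  let f : ℕ →* ℝ :=
    { toFun := fun m => (m : ℝ) ^ (-ε)
      map_one' := by simp
      map_mul' := by
        intro a b
        push_cast
        exact Real.mul_rpow (by positivity) (by positivity) }
  have hf : ∀ m : ℕ, f m = (m : ℝ) ^ (-ε) := fun m => rfl
  have hE := EulerProduct.summable_and_hasSum_factoredNumbers_prod_filter_prime_geometric
    (f := f) (by
      intro p hp
      rw [hf, Real.norm_of_nonneg (by positivity)]
      exact Real.rpow_lt_one_of_one_lt_of_neg (by exact_mod_cast hp.one_lt) (by linarith))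
      Q.primeFactors
  have hfil : (Q.primeFactors.filter (fun p => p.Prime)) = Q.primeFactors :=
    Finset.filter_true_of_mem (fun p hp => Nat.prime_of_mem_primeFactors hp)
  rw [hfil] at hE
  have hmem : ∀ m ∈ sm Q X, m ∈ Nat.factoredNumbers Q.primeFactors := by
    intro m hm
    rw [mem_sm (by linarith)] at hm
    refine ⟨by omega, ?_⟩
    intro p hp
    have hpp := Nat.prime_of_mem_primeFactorsList hp
    exact Nat.mem_primeFactors.2
      ⟨hpp, hm.2 p hpp (Nat.dvd_of_mem_primeFactorsList hp), by omega⟩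
  have hsum : ∑ m ∈ (sm Q X).attach, f m.1 ≤ ∏ p ∈ Q.primeFactors, (1 - f p)⁻¹ := by
    let g : {m // m ∈ sm Q X} ↪ Nat.factoredNumbers Q.primeFactors :=
      ⟨fun m => ⟨m.1, hmem m.1 m.2⟩, fun a b h => Subtype.ext (by simpa using h)⟩
    have := sum_le_hasSum ((sm Q X).attach.map g) (fun i _ => by
      show 0 ≤ f i.1
      rw [hf]; positivity) hE.2
    rw [Finset.sum_map] at this
    exact this
  have hlow : ((sm Q X).card : ℝ) * X ^ (-ε) ≤ ∑ m ∈ (sm Q X).attach, f m.1 := by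
    have : ∑ m ∈ (sm Q X).attach, X ^ (-ε) ≤ ∑ m ∈ (sm Q X).attach, f m.1 := by
      apply Finset.sum_le_sum
      intro m _
      have hm := (mem_sm (by linarith)).1 m.2
      rw [hf]
      exact Real.rpow_le_rpow_of_nonpos (by exact_mod_cast hm.1.1) hm.1.2 (by linarith)
    simpa using this
  have h5 := hlow.trans (hsum.trans (hC Q hQ))
  rw [Real.rpow_neg (by linarith)] at h5
  have hXp : 0 < X ^ ε := Real.rpow_pos_of_pos (by linarith) _
  have h6 : ((sm Q X).card : ℝ) ≤ C * (Q : ℝ) ^ ε * X ^ ε := by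
    rwa [← div_eq_mul_inv, div_le_iff₀ hXp] at h5
  linarith

/-- The finite set of unit fractions. -/
noncomputable def EF (H : ℝ) : Finset ℚ :=
  (((Finset.Icc (-(⌊H⌋₊ : ℤ)) (⌊H⌋₊ : ℤ)).filter (fun a => a ≠ 0)).image
    (fun a : ℤ => 1 / (a : ℚ)))

lemma mem_EF_iff {H : ℝ} (hH : 0 ≤ H) (q : ℚ) : q ∈ EF H ↔ q ∈ Egyptian H := by
  unfold EF Egyptian
  simp only [Finset.mem_image, Finset.mem_filter, Finset.mem_Icc, Set.mem_ofPred_eq]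
  constructor
  · rintro ⟨a, ⟨⟨h1, h2⟩, h3⟩, rfl⟩
    refine ⟨a, h3, ?_, rfl⟩
    have h4 : |a| ≤ (⌊H⌋₊ : ℤ) := abs_le.2 ⟨h1, h2⟩
    have h5 : ((|a| : ℤ) : ℝ) ≤ (⌊H⌋₊ : ℝ) := by exact_mod_cast h4
    push_cast at h5
    exact h5.trans (Nat.floor_le hH)
  · rintro ⟨a, h3, h4, rfl⟩
    refine ⟨a, ⟨?_, h3⟩, rfl⟩
    have : a.natAbs ≤ ⌊H⌋₊ := by
      apply Nat.le_floor
      rw [Nat.cast_natAbs]; push_cast; exact h4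
    omega

lemma EF_card {H : ℝ} (hH : 0 ≤ H) : ((EF H).card : ℝ) ≤ 2 * H := by
  have h1 : (EF H).card ≤ 2 * ⌊H⌋₊ := by
    unfold EF
    refine Finset.card_image_le.trans ?_
    have : ((Finset.Icc (-(⌊H⌋₊ : ℤ)) (⌊H⌋₊ : ℤ)).filter (fun a => a ≠ 0)) =
        (Finset.Icc (-(⌊H⌋₊ : ℤ)) (⌊H⌋₊ : ℤ)).erase 0 := by
      ext a; simp [and_comm]
    rw [this, Finset.card_erase_of_mem (by simp), Int.card_Icc]
    omega
  calc ((EF H).card : ℝ) ≤ 2 * ⌊H⌋₊ := by exact_mod_cast h1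
    _ ≤ 2 * H := by have := Nat.floor_le hH; linarith

lemma EF_iff {H : ℝ} (hH : 0 ≤ H) (q : ℚ) :
    q ∈ EF H ↔ q.num.natAbs = 1 ∧ (q.den : ℝ) ≤ H := by
  rw [mem_EF_iff hH]
  constructor
  · rintro ⟨a, h0, h1, rfl⟩
    have hn : (1 / (a : ℚ)).num = a.sign := by
      rw [one_div, Rat.inv_intCast_num]
    have hd : (1 / (a : ℚ)).den = a.natAbs := by
      rw [one_div, Rat.inv_intCast_den, if_neg h0]
    rw [hn, hd]
    refine ⟨Int.natAbs_sign_of_ne_zero h0, ?_⟩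
    rw [Nat.cast_natAbs]; push_cast; exact h1
  · rintro ⟨h1, h2⟩
    refine ⟨q.num * q.den, ?_, ?_, ?_⟩
    · have := q.den_ne_zero
      apply mul_ne_zero
      · omega
      · exact_mod_cast this
    · push_cast
      rw [abs_mul]
      have : |(q.num : ℝ)| = 1 := by
        rw [← Int.cast_abs, Int.abs_eq_natAbs, h1]; simp
      rw [this]; simpa using h2
    · have h3 : q.num = 1 ∨ q.num = -1 := by omega
      have h4 := Rat.num_div_den q
      have : (q.den : ℚ) ≠ 0 := by exact_mod_cast q.den_ne_zero
      rcases h3 with h | h <;> rw [h] at h4 ⊢ <;> push_cast at h4 ⊢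
      · rw [← h4]; simp
      · rw [← h4]; field_simp; simp

lemma EF_ne_zero {H : ℝ} (hH : 0 ≤ H) {q : ℚ} (hq : q ∈ EF H) : q ≠ 0 := by
  rw [EF_iff hH] at hq
  rintro rfl
  simp at hq

/-- Unit fractions whose denominator is `Q`-smooth. -/
noncomputable def smE (Q : ℕ) (H : ℝ) : Finset ℚ := by
  classical
  exact (EF H).filter (fun q => ∀ p : ℕ, p.Prime → p ∣ q.den → p ∣ Q)

lemma mem_smE {Q : ℕ} {H : ℝ} {q : ℚ} :
    q ∈ smE Q H ↔ q ∈ EF H ∧ ∀ p : ℕ, p.Prime → p ∣ q.den → p ∣ Q := by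
  classical
  unfold smE; rw [Finset.mem_filter]

lemma smE_card {Q : ℕ} {H : ℝ} (hH : 0 ≤ H) : ((smE Q H).card : ℝ) ≤ 2 * (sm Q H).card := by
  rw [mul_comm]
  apply fiber_bound (smE Q H) (sm Q H) (fun q => q.den)
  · intro q hq
    rw [mem_smE, EF_iff hH] at hq
    rw [mem_sm hH]
    exact ⟨⟨q.den_pos, hq.1.2⟩, hq.2⟩
  · intro b hb
    have : (smE Q H).filter (fun q => q.den = b) ⊆ {(1 / b : ℚ), (-1 / b : ℚ)} := by
      intro q hq
      rw [Finset.mem_filter, mem_smE, EF_iff hH] at hq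
      obtain ⟨⟨⟨h1, _⟩, _⟩, h2⟩ := hq
      have h3 : q.num = 1 ∨ q.num = -1 := by omega
      have h4 := Rat.num_div_den q
      rw [h2] at h4
      rcases h3 with h | h <;> rw [h] at h4 <;> push_cast at h4 <;> simp [← h4]
    have := (Finset.card_le_card this).trans Finset.card_le_two
    exact_mod_cast this

lemma smE_bound (ε : ℝ) (hε : 0 < ε) : ∃ C : ℝ, 1 ≤ C ∧ ∀ Q : ℕ, 1 ≤ Q → ∀ H : ℝ, 1 ≤ H →
    ((smE Q H).card : ℝ) ≤ C * H ^ ε * (Q : ℝ) ^ ε := by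
  obtain ⟨C, hC1, hC⟩ := smooth_bound ε hε
  refine ⟨2 * C, by linarith, ?_⟩
  intro Q hQ H hH
  have h1 := smE_card (Q := Q) (H := H) (by linarith)
  have h2 := hC Q hQ H hH
  linarith

lemma prod_primes_pow_dvd (s : Finset ℕ) (e N : ℕ) (hs : ∀ p ∈ s, p.Prime ∧ p ^ e ∣ N) :
    (∏ p ∈ s, p) ^ e ∣ N := by
  classical
  induction s using Finset.induction_on with
  | empty => simp
  | insert a s ha ih =>
    rw [Finset.prod_insert ha, mul_pow]
    apply Nat.Coprime.mul_dvd_of_dvd_of_dvd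
    · apply Nat.Coprime.pow
      apply Nat.Coprime.prod_right
      intro p hp
      rw [Nat.coprime_primes (hs a (by simp)).1 (hs p (by simp [hp])).1]
      rintro rfl
      exact ha hp
    · exact (hs a (by simp)).2
    · exact ih (fun p hp => hs p (by simp [hp]))

/-- Every prime away from `Q` that divides one denominator divides another one. -/
def Twice {ι : Type*} (Q : ℕ) (x : ι → ℚ) : Prop :=
  ∀ i, ∀ p : ℕ, p.Prime → ¬ p ∣ Q → p ∣ (x i).den → ∃ j, j ≠ i ∧ p ∣ (x j).den

/-- `Q` contains all primes at which the data are not units / integral. -/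
def GoodQ {ι : Type*} (Q : ℕ) (v : ι → ℚ) (c : ℚ) : Prop :=
  ∀ p : ℕ, p.Prime → ¬ p ∣ Q →
    (∀ i, ¬ p ∣ (v i).num.natAbs ∧ ¬ p ∣ (v i).den) ∧ ¬ p ∣ c.den

lemma norm_eq_div (p : ℕ) [Fact p.Prime] (q : ℚ) :
    padicNorm p q = padicNorm p (q.num : ℚ) / padicNorm p (q.den : ℚ) := by
  rw [← padicNorm.div, Rat.num_div_den]

lemma norm_eq_one {p : ℕ} [Fact p.Prime] {q : ℚ} (h1 : ¬ p ∣ q.num.natAbs) (h2 : ¬ p ∣ q.den) :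
    padicNorm p q = 1 := by
  rw [norm_eq_div, (padicNorm.nat_eq_one_iff _).2 h2, (padicNorm.int_eq_one_iff _).2, div_one]
  rwa [Int.natCast_dvd]

lemma norm_le_one {p : ℕ} [Fact p.Prime] {q : ℚ} (h2 : ¬ p ∣ q.den) :
    padicNorm p q ≤ 1 := by
  rw [norm_eq_div, (padicNorm.nat_eq_one_iff _).2 h2, div_one]
  exact padicNorm.of_int _

lemma norm_gt_one {p : ℕ} [hp : Fact p.Prime] {q : ℚ} (h1 : q.num.natAbs = 1) (h2 : p ∣ q.den) :
    1 < padicNorm p q := by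
  have h3 : padicNorm p (q.num : ℚ) = 1 := by
    rw [padicNorm.int_eq_one_iff, Int.natCast_dvd, h1]
    exact hp.out.not_dvd_one
  rw [norm_eq_div, h3]
  have h4 : padicNorm p (q.den : ℚ) < 1 := (padicNorm.nat_lt_one_iff _).2 h2
  have h5 : 0 < padicNorm p (q.den : ℚ) := by
    apply lt_of_le_of_ne (padicNorm.nonneg _)
    exact (padicNorm.nonzero (by exact_mod_cast q.den_ne_zero)).symm
  exact (one_lt_div h5).2 h4

lemma twice_of_eq {ι : Type*} [Fintype ι] [DecidableEq ι] {Q : ℕ} {v : ι → ℚ} {c : ℚ}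
    (hg : GoodQ Q v c) (x : ι → ℚ) (hx : ∀ i, (x i).num.natAbs = 1)
    (he : ∑ i, v i * x i = c) : Twice Q x := by
  intro i p hp hpQ hpi
  by_contra hcon
  push Not at hcon
  have : Fact p.Prime := ⟨hp⟩
  obtain ⟨hv, hc⟩ := hg p hp hpQ
  rw [← Finset.add_sum_erase _ _ (Finset.mem_univ i)] at he
  have he' : v i * x i = c - ∑ j ∈ Finset.univ.erase i, v j * x j := by linarith
  have h1 : 1 < padicNorm p (v i * x i) := by
    rw [padicNorm.mul, norm_eq_one (hv i).1 (hv i).2, one_mul]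
    exact norm_gt_one (hx i) hpi
  have h2 : padicNorm p (∑ j ∈ Finset.univ.erase i, v j * x j) ≤ 1 := by
    apply padicNorm.sum_le' _ zero_le_one
    intro j hj
    have hji := Finset.ne_of_mem_erase hj
    rw [padicNorm.mul, norm_eq_one (hv j).1 (hv j).2, one_mul]
    exact norm_le_one (hcon j hji)
  have h3 : padicNorm p (c - ∑ j ∈ Finset.univ.erase i, v j * x j) ≤ 1 :=
    padicNorm.sub.trans (max_le (norm_le_one hc) h2)
  rw [← he'] at h3
  linarith

/-- Primes away from `Q` dividing some denominator. -/
def PF {ι : Type*} [Fintype ι] (Q : ℕ) (x : ι → ℚ) : Finset ℕ :=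
  (∏ i, (x i).den).primeFactors.filter (fun p => ¬ p ∣ Q)

lemma mem_PF {ι : Type*} [Fintype ι] {Q : ℕ} {x : ι → ℚ} {p : ℕ} :
    p ∈ PF Q x ↔ p.Prime ∧ ¬ p ∣ Q ∧ ∃ i, p ∣ (x i).den := by
  unfold PF
  rw [Finset.mem_filter, Nat.mem_primeFactors]
  constructor
  · rintro ⟨⟨h1, h2, h3⟩, h4⟩
    rw [h1.prime.dvd_finsetProd_iff] at h2
    obtain ⟨i, _, hi⟩ := h2
    exact ⟨h1, h4, i, hi⟩
  · rintro ⟨h1, h2, i, hi⟩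
    refine ⟨⟨h1, hi.trans (Finset.dvd_prod_of_mem _ (Finset.mem_univ i)), ?_⟩, h2⟩
    exact Finset.prod_ne_zero_iff.2 (fun i _ => (x i).den_ne_zero)

lemma pair_dvd_prod {ι : Type*} [Fintype ι] [DecidableEq ι] (f : ι → ℕ) {i j : ι} (hij : j ≠ i) :
    f i * f j ∣ ∏ l, f l := by
  rw [← Finset.mul_prod_erase _ _ (Finset.mem_univ i)]
  apply mul_dvd_mul_left
  exact Finset.dvd_prod_of_mem _ (Finset.mem_erase.2 ⟨hij, Finset.mem_univ j⟩)

lemma den_prod_le {ι : Type*} [Fintype ι] {H : ℝ} (hH : 1 ≤ H) {x : ι → ℚ}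
    (hx : ∀ i, x i ∈ EF H) : ((∏ i, (x i).den : ℕ) : ℝ) ≤ H ^ (Fintype.card ι) := by
  push_cast
  calc _ ≤ ∏ i : ι, H := by
        apply Finset.prod_le_prod
        · intros; positivity
        · intro i _; exact ((EF_iff (by linarith) _).1 (hx i)).2
    _ = _ := by simp

lemma PF_prod_sq_le {ι : Type*} [Fintype ι] [DecidableEq ι] {H : ℝ} (hH : 1 ≤ H) {Q : ℕ}
    {x : ι → ℚ} (hx : ∀ i, x i ∈ EF H) (ht : Twice Q x) :
    ((∏ p ∈ PF Q x, p : ℕ) : ℝ) ^ 2 ≤ H ^ (Fintype.card ι) := by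
  refine le_trans ?_ (den_prod_le hH hx)
  have : (∏ p ∈ PF Q x, p) ^ 2 ≤ ∏ i, (x i).den := by
    apply Nat.le_of_dvd (Finset.prod_pos (fun i _ => (x i).den_pos))
    apply prod_primes_pow_dvd
    intro p hp
    rw [mem_PF] at hp
    obtain ⟨hpp, hpQ, i, hi⟩ := hp
    obtain ⟨j, hji, hj⟩ := ht i p hpp hpQ hi
    refine ⟨hpp, ?_⟩
    rw [sq]
    exact (mul_dvd_mul hi hj).trans (pair_dvd_prod _ hji)
  exact_mod_cast this

lemma PF_prod_pos {ι : Type*} [Fintype ι] {Q : ℕ} {x : ι → ℚ} {s : Finset ℕ} (hs : s ⊆ PF Q x) :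
    1 ≤ ∏ p ∈ s, p :=
  Finset.prod_pos (fun _ hp => (mem_PF.1 (hs hp)).1.pos)

lemma PF_prod_le {ι : Type*} [Fintype ι] [DecidableEq ι] {H : ℝ} (hH : 1 ≤ H) {Q : ℕ}
    {x : ι → ℚ} (hx : ∀ i, x i ∈ EF H) (ht : Twice Q x) :
    ((∏ p ∈ PF Q x, p : ℕ) : ℝ) ≤ H ^ ((Fintype.card ι : ℝ) / 2) := by
  have h := PF_prod_sq_le hH hx ht
  have h0 : (0 : ℝ) ≤ H := by linarith
  apply le_of_sq_le_sq _ (by positivity)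
  rw [← Real.rpow_natCast (H ^ _) 2, ← Real.rpow_mul h0]
  rw [← Real.rpow_natCast H] at h
  have h2 : (Fintype.card ι : ℝ) / 2 * ((2 : ℕ) : ℝ) = (Fintype.card ι : ℝ) := by
    push_cast; ring
  rw [h2]
  exact h

/-- The main encoding bound. -/
lemma key_count_s12 (k : ℕ) (ε : ℝ) (hε : 0 < ε) : ∃ C : ℝ, 1 ≤ C ∧
    ∀ (ι : Type) [Fintype ι] [DecidableEq ι], Fintype.card ι = k →
    ∀ (H : ℝ) (Q : ℕ) (Y : ℝ), 1 ≤ H → 1 ≤ Q → 0 ≤ Y → Y ≤ H ^ k →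
    ∀ (s : Finset (ι → ℚ)) (R : (ι → ℚ) → ℕ) (y : (ι → ℚ) → (ι → ℚ)),
      (∀ x ∈ s, 1 ≤ R x ∧ (R x : ℝ) ≤ Y ∧ ∀ l, y x l ∈ smE (Q * R x) H) →
      (∀ x ∈ s, ∀ x' ∈ s, y x = y x' → x = x') →
      (s.card : ℝ) ≤ C * Y * H ^ ε * (Q : ℝ) ^ ε := by
  set e : ℝ := ε / ((k : ℝ) + 1) ^ 2 with he
  have hk0 : (0 : ℝ) ≤ k := by positivity
  have he0 : 0 < e := by positivity
  obtain ⟨C, hC1, hC⟩ := smE_bound e he0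
  refine ⟨C ^ k, one_le_pow₀ hC1, ?_⟩
  intro ι _ _ hcard H Q Y hH hQ hY0 hY s R y hs hinj
  have hHp : (0 : ℝ) < H := by linarith
  have hQ1 : (1 : ℝ) ≤ Q := by exact_mod_cast hQ
  have hfib := fiber_bound s (Finset.Icc 1 ⌊Y⌋₊) R (C ^ k * H ^ ε * (Q : ℝ) ^ ε) (by
      intro x hx
      obtain ⟨h1, h2, _⟩ := hs x hx
      exact Finset.mem_Icc.2 ⟨h1, Nat.le_floor h2⟩) (by
      intro r hr
      rw [Finset.mem_Icc] at hr
      have hrY : (r : ℝ) ≤ H ^ k :=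
        ((Nat.cast_le.2 hr.2).trans (Nat.floor_le hY0)).trans hY
      have h1 : (s.filter (fun x => R x = r)).card ≤
          (Fintype.piFinset (fun _ : ι => smE (Q * r) H)).card := by
        apply Finset.card_le_card_of_injOn y
        · intro x hx
          have hx' := Finset.mem_filter.1 hx
          rw [Finset.mem_coe, Fintype.mem_piFinset]
          intro l
          have := (hs x hx'.1).2.2 l
          rwa [hx'.2] at this
        · intro x hx x' hx' hxx
          exact hinj x (Finset.mem_filter.1 hx).1 x' (Finset.mem_filter.1 hx').1 hxx
      rw [Fintype.card_piFinset] at h1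
      simp only [Finset.prod_const, Finset.card_univ, hcard] at h1
      have hr1 : (1 : ℝ) ≤ r := by exact_mod_cast hr.1
      have h2 := hC (Q * r) (Nat.mul_pos hQ hr.1) H hH
      calc ((s.filter (fun x => R x = r)).card : ℝ) ≤ ((smE (Q * r) H).card : ℝ) ^ k := by
            exact_mod_cast h1
        _ ≤ (C * H ^ e * ((Q * r : ℕ) : ℝ) ^ e) ^ k := by gcongr
        _ = C ^ k * ((H ^ e) ^ k * ((r : ℝ) ^ e) ^ k) * ((Q : ℝ) ^ e) ^ k := by
            push_cast
            rw [Real.mul_rpow (by linarith) (by linarith)]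
            ring
        _ ≤ C ^ k * H ^ ε * (Q : ℝ) ^ ε := by
            have e1 : e * k ≤ ε := by
              rw [he, div_mul_eq_mul_div, div_le_iff₀ (by positivity)]
              exact mul_le_mul_of_nonneg_left (by nlinarith) hε.le
            have e2 : e * k + (k * e) * k ≤ ε := by
              have : e * k + (k * e) * k = ε * (k * (k + 1)) / ((k : ℝ) + 1) ^ 2 := by
                rw [he]; ring
              rw [this, div_le_iff₀ (by positivity)]
              nlinarith [mul_nonneg hε.le hk0]
            gcongr
            · calc (H ^ e) ^ k * ((r : ℝ) ^ e) ^ k ≤ (H ^ e) ^ k * ((H ^ k) ^ e) ^ k := by gcongr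
                _ = H ^ (e * k + (k * e) * k) := by
                  rw [Real.rpow_add hHp, Real.rpow_mul hHp.le, Real.rpow_natCast,
                    Real.rpow_mul hHp.le, Real.rpow_natCast, Real.rpow_mul hHp.le,
                    Real.rpow_natCast]
                _ ≤ H ^ ε := Real.rpow_le_rpow_of_exponent_le hH e2
            · rw [← Real.rpow_natCast, ← Real.rpow_mul (by linarith)]
              exact Real.rpow_le_rpow_of_exponent_le hQ1 e1)
  refine hfib.trans ?_
  rw [Nat.card_Icc]
  have h3 : ((⌊Y⌋₊ + 1 - 1 : ℕ) : ℝ) ≤ Y := by simpa using Nat.floor_le hY0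
  calc _ ≤ Y * (C ^ k * H ^ ε * (Q : ℝ) ^ ε) := by gcongr
    _ = _ := by ring

lemma PF_smE {ι : Type*} [Fintype ι] {H : ℝ} {Q : ℕ} {x : ι → ℚ}
    (hx : ∀ i, x i ∈ EF H) (l : ι) : x l ∈ smE (Q * ∏ p ∈ PF Q x, p) H := by
  rw [mem_smE]
  refine ⟨hx l, ?_⟩
  intro p hp hpl
  by_cases hpQ : p ∣ Q
  · exact hpQ.mul_right _
  · exact (Finset.dvd_prod_of_mem _ (mem_PF.2 ⟨hp, hpQ, l, hpl⟩)).mul_left _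

lemma rpow_half_le {H : ℝ} (hH : 1 ≤ H) (k : ℕ) : H ^ ((k : ℝ) / 2) ≤ H ^ k := by
  rw [← Real.rpow_natCast H k]
  apply Real.rpow_le_rpow_of_exponent_le hH
  have : (0 : ℝ) ≤ k := by positivity
  linarith

/-- Square root bound. -/
lemma hom_count (k : ℕ) (ε : ℝ) (hε : 0 < ε) : ∃ C : ℝ, 1 ≤ C ∧
    ∀ (ι : Type) [Fintype ι] [DecidableEq ι], Fintype.card ι = k →
    ∀ (H : ℝ) (Q : ℕ), 1 ≤ H → 1 ≤ Q →
    ∀ (s : Finset (ι → ℚ)), (∀ x ∈ s, (∀ i, x i ∈ EF H) ∧ Twice Q x) →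
      (s.card : ℝ) ≤ C * H ^ ((k : ℝ) / 2) * H ^ ε * (Q : ℝ) ^ ε := by
  obtain ⟨C, hC1, hC⟩ := key_count_s12 k ε hε
  refine ⟨C, hC1, ?_⟩
  intro ι _ _ hcard H Q hH hQ s hs
  refine hC ι hcard H Q _ hH hQ (by positivity) (rpow_half_le hH k) s
    (fun x => ∏ p ∈ PF Q x, p) (fun x => x) ?_ (fun _ _ _ _ h => h)
  intro x hx
  obtain ⟨h1, h2⟩ := hs x hx
  refine ⟨PF_prod_pos (Finset.Subset.refl _), ?_, fun l => PF_smE h1 l⟩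
  have := PF_prod_le hH h1 h2
  rwa [hcard] at this

/-- Naive height. -/
def ht (q : ℚ) : ℕ := max q.num.natAbs q.den

lemma ht_pos (q : ℚ) : 1 ≤ ht q := le_max_of_le_right q.den_pos

lemma ht_mul (a b : ℚ) : ht (a * b) ≤ ht a * ht b := by
  unfold ht
  apply max_le
  · calc (a * b).num.natAbs ≤ a.num.natAbs * b.num.natAbs := by
          rw [Rat.mul_num, ← Int.natAbs_mul]
          exact Int.natAbs_ediv_le_natAbs _ _
      _ ≤ _ := Nat.mul_le_mul (le_max_left _ _) (le_max_left _ _)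
  · calc (a * b).den ≤ a.den * b.den :=
          Nat.le_of_dvd (Nat.mul_pos a.den_pos b.den_pos) (Rat.mul_den_dvd a b)
      _ ≤ _ := Nat.mul_le_mul (le_max_right _ _) (le_max_right _ _)

lemma num_le_of_eq_div {q : ℚ} {a b : ℤ} (hb : b ≠ 0) (h : q = a / b) :
    q.num.natAbs ≤ a.natAbs := by
  by_cases ha : a = 0
  · subst ha; simp at h; subst h; simp
  · have : q.num ∣ a := by
      have := Rat.num_dvd a hb
      rwa [Rat.divInt_eq_div, ← h] at this
    exact Nat.le_of_dvd (by omega) (Int.natAbs_dvd_natAbs.2 this)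

lemma ht_add (a b : ℚ) : ht (a + b) ≤ 2 * (ht a * ht b) := by
  have hA1 : a.num.natAbs ≤ ht a := le_max_left _ _
  have hA2 : a.den ≤ ht a := le_max_right _ _
  have hB1 : b.num.natAbs ≤ ht b := le_max_left _ _
  have hB2 : b.den ≤ ht b := le_max_right _ _
  unfold ht
  apply max_le
  · have hda : (a.den : ℚ) ≠ 0 := by exact_mod_cast a.den_ne_zero
    have hdb : (b.den : ℚ) ≠ 0 := by exact_mod_cast b.den_ne_zero
    have h1 : a + b = ((a.num * b.den + a.den * b.num : ℤ) : ℚ) / ((a.den * b.den : ℤ) : ℚ) := by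
      push_cast
      conv_lhs => rw [← Rat.num_div_den a, ← Rat.num_div_den b]
      rw [div_add_div _ _ hda hdb]
    have h2 := num_le_of_eq_div (by
      have := a.den_ne_zero
      have := b.den_ne_zero
      positivity) h1
    calc _ ≤ _ := h2
      _ ≤ (a.num * b.den).natAbs + (a.den * b.num).natAbs := Int.natAbs_add_le _ _
      _ = a.num.natAbs * b.den + a.den * b.num.natAbs := by simp [Int.natAbs_mul]
      _ ≤ ht a * ht b + ht a * ht b := by gcongr
      _ = _ := by unfold ht; ring
  · calc (a + b).den ≤ a.den * b.den :=
          Nat.le_of_dvd (Nat.mul_pos a.den_pos b.den_pos) (Rat.add_den_dvd a b)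
      _ ≤ ht a * ht b := by gcongr
      _ ≤ _ := by unfold ht; omega

lemma ht_sum {α : Type*} (s : Finset α) (f : α → ℚ) (X : ℕ)
    (hf : ∀ a ∈ s, ht (f a) ≤ X) : ht (∑ a ∈ s, f a) ≤ (2 * X) ^ s.card := by
  classical
  induction s using Finset.induction_on with
  | empty => simp [ht]
  | insert a s ha ih =>
    rw [Finset.sum_insert ha, Finset.card_insert_of_notMem ha]
    calc _ ≤ _ := ht_add _ _
      _ ≤ 2 * (X * (2 * X) ^ s.card) := by
        gcongr
        · exact hf a (by simp)
        · exact ih (fun b hb => hf b (by simp [hb]))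
      _ = _ := by ring

lemma ht_prod {α : Type*} (s : Finset α) (f : α → ℚ) (X : ℕ)
    (hf : ∀ a ∈ s, ht (f a) ≤ X) : ht (∏ a ∈ s, f a) ≤ X ^ s.card := by
  classical
  induction s using Finset.induction_on with
  | empty => simp [ht]
  | insert a s ha ih =>
    rw [Finset.prod_insert ha, Finset.card_insert_of_notMem ha]
    calc _ ≤ _ := ht_mul _ _
      _ ≤ X * X ^ s.card := by
        gcongr
        · exact hf a (by simp)
        · exact ih (fun b hb => hf b (by simp [hb]))
      _ = _ := by ring

lemma ht_det (n : ℕ) (A : Matrix (Fin n) (Fin n) ℚ) (X : ℕ) (hA : ∀ i j, ht (A i j) ≤ X) :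
    ht A.det ≤ (2 * X ^ n) ^ (n.factorial) := by
  rw [Matrix.det_apply']
  have := ht_sum (Finset.univ : Finset (Equiv.Perm (Fin n)))
    (fun σ => ((Equiv.Perm.sign σ : ℤ) : ℚ) * ∏ i, A (σ i) i) (X ^ n) (by
      intro σ _
      calc _ ≤ _ := ht_mul _ _
        _ ≤ 1 * X ^ n := by
          apply Nat.mul_le_mul
          · rcases Int.units_eq_one_or (Equiv.Perm.sign σ) with h | h <;> rw [h] <;> simp [ht]
          · have := ht_prod (Finset.univ : Finset (Fin n)) (fun i => A (σ i) i) X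
              (fun i _ => hA _ _)
            simpa using this
        _ = _ := one_mul _)
  rw [Finset.card_univ, Fintype.card_perm, Fintype.card_fin] at this
  exact this

lemma ht_EF {H : ℝ} (hH : 1 ≤ H) {q : ℚ} (hq : q ∈ EF H) : ht q ≤ ⌊H⌋₊ := by
  rw [EF_iff (by linarith)] at hq
  unfold ht
  rw [hq.1]
  apply max_le
  · exact Nat.le_floor (by simpa using hH)
  · exact Nat.le_floor hq.2

/-- `a x + b y = η` has few solutions in unit fractions. -/
lemma two_count (ε : ℝ) (hε : 0 < ε) : ∃ C : ℝ, 1 ≤ C ∧ ∀ (N : ℕ), 1 ≤ N → ∀ a b η : ℚ,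
    a ≠ 0 → b ≠ 0 → η ≠ 0 → ht a ≤ N → ht b ≤ N → ht η ≤ N →
    ∀ s : Finset ℚ, (∀ x ∈ s, x.num.natAbs = 1 ∧
      ∃ y : ℚ, y.num.natAbs = 1 ∧ a * x + b * y = η) →
    (s.card : ℝ) ≤ C * (N : ℝ) ^ ε := by
  obtain ⟨C, hC1, hC⟩ := smooth_bound (ε / 12) (by positivity)
  refine ⟨2 * C, by linarith, ?_⟩
  intro N hN a b η ha hb hη hta htb htη s hs
  set α : ℤ := a.num * b.den * η.den with hα
  set β : ℤ := b.num * a.den * η.den with hβ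
  set γ : ℤ := η.num * a.den * b.den with hγ
  have hda : (a.den : ℤ) ≠ 0 := by exact_mod_cast a.den_ne_zero
  have hdb : (b.den : ℤ) ≠ 0 := by exact_mod_cast b.den_ne_zero
  have hdη : (η.den : ℤ) ≠ 0 := by exact_mod_cast η.den_ne_zero
  have hα0 : α ≠ 0 := mul_ne_zero (mul_ne_zero (Rat.num_ne_zero.2 ha) hdb) hdη
  have hβ0 : β ≠ 0 := mul_ne_zero (mul_ne_zero (Rat.num_ne_zero.2 hb) hda) hdη
  have hγ0 : γ ≠ 0 := mul_ne_zero (mul_ne_zero (Rat.num_ne_zero.2 hη) hda) hdb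
  have hA1 : a.num.natAbs ≤ N := le_trans (le_max_left _ _) hta
  have hA2 : a.den ≤ N := le_trans (le_max_right _ _) hta
  have hB1 : b.num.natAbs ≤ N := le_trans (le_max_left _ _) htb
  have hB2 : b.den ≤ N := le_trans (le_max_right _ _) htb
  have hE2 : η.den ≤ N := le_trans (le_max_right _ _) htη
  set D : ℕ := (α * β).natAbs with hD
  have hD0 : D ≠ 0 := Int.natAbs_ne_zero.2 (mul_ne_zero hα0 hβ0)
  have hD1 : 1 ≤ D := Nat.pos_of_ne_zero hD0
  have hDN : D ≤ N ^ 6 := by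
    rw [hD, hα, hβ]
    simp only [Int.natAbs_mul, Int.natAbs_natCast]
    calc _ ≤ N * N * N * (N * N * N) := by gcongr
      _ = _ := by ring
  let X : ℚ → ℤ := fun x => x.num * x.den
  have hX : ∀ x : ℚ, x.num.natAbs = 1 → (X x : ℚ) * x = 1 := by
    intro x hx
    have h3 : x.num = 1 ∨ x.num = -1 := by omega
    have h4 := Rat.num_div_den x
    have h5 : (x.den : ℚ) ≠ 0 := by exact_mod_cast x.den_ne_zero
    simp only [X]
    rcases h3 with h | h <;> rw [h] at h4 ⊢ <;> push_cast at h4 ⊢ <;> rw [← h4] <;> field_simp <;> simp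
  have hdiv : ∀ x ∈ s, (γ * X x - α) ∣ α * β := by
    intro x hx
    obtain ⟨h1, y, h2, h3⟩ := hs x hx
    refine ⟨γ * X y - β, ?_⟩
    have hx1 := hX x h1
    have hy1 := hX y h2
    have e1 : (α : ℚ) = a * (a.den * b.den * η.den) := by
      rw [hα]; push_cast
      nth_rewrite 2 [← Rat.num_div_den a]
      have : (a.den : ℚ) ≠ 0 := by exact_mod_cast a.den_ne_zero
      field_simp
    have e2 : (β : ℚ) = b * (a.den * b.den * η.den) := by
      rw [hβ]; push_cast
      nth_rewrite 2 [← Rat.num_div_den b]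
      have : (b.den : ℚ) ≠ 0 := by exact_mod_cast b.den_ne_zero
      field_simp
    have e3 : (γ : ℚ) = η * (a.den * b.den * η.den) := by
      rw [hγ]; push_cast
      nth_rewrite 2 [← Rat.num_div_den η]
      have : (η.den : ℚ) ≠ 0 := by exact_mod_cast η.den_ne_zero
      field_simp
    set m : ℚ := (a.den * b.den * η.den : ℚ)
    have h4 : (γ : ℚ) = α * x + β * y := by rw [e1, e2, e3, ← h3]; ring
    have h5 : (γ : ℚ) * X x * X y = α * X y + β * X x := by
      rw [h4]
      calc _ = α * (X x * x) * X y + β * (X y * y) * X x := by ring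
        _ = _ := by rw [hx1, hy1]; ring
    have h6 : ((α * β : ℤ) : ℚ) = (((γ * X x - α) * (γ * X y - β) : ℤ) : ℚ) := by
      push_cast
      linear_combination (-(γ : ℚ)) * h5
    exact_mod_cast h6
  have hinj : ∀ x ∈ s, ∀ x' ∈ s, X x = X x' → x = x' := by
    intro x hx x' hx' h
    have h1 := hX x (hs x hx).1
    have h2 := hX x' (hs x' hx').1
    rw [h] at h1
    have : (X x' : ℚ) ≠ 0 := by
      intro h0; rw [h0] at h1; simp at h1
    exact mul_left_cancel₀ this (h1.trans h2.symm)
  have hf := fiber_bound s (sm D D) (fun x => (γ * X x - α).natAbs) 2 (by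
    intro x hx
    rw [mem_sm (by positivity)]
    have h1 : (γ * X x - α).natAbs ∣ D := Int.natAbs_dvd_natAbs.2 (hdiv x hx)
    refine ⟨⟨Nat.pos_of_dvd_of_pos h1 hD1, ?_⟩, fun p _ hp => hp.trans h1⟩
    exact_mod_cast Nat.le_of_dvd hD1 h1) (by
    intro d _
    have h1 : (s.filter (fun x => (γ * X x - α).natAbs = d)).card ≤
        ({(d : ℤ), -(d : ℤ)} : Finset ℤ).card := by
      apply Finset.card_le_card_of_injOn (fun x => γ * X x - α)
      · intro x hx
        have := (Finset.mem_filter.1 hx).2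
        simp only [Finset.coe_insert, Finset.coe_singleton, Set.mem_insert_iff,
          Set.mem_singleton_iff]
        omega
      · intro x hx x' hx' h
        apply hinj x (Finset.mem_filter.1 hx).1 x' (Finset.mem_filter.1 hx').1
        have : γ * X x = γ * X x' := by
          have h' : γ * X x - α = γ * X x' - α := h
          linarith
        exact mul_left_cancel₀ hγ0 this
    exact_mod_cast h1.trans Finset.card_le_two)
  have hsm := hC D hD1 D (by exact_mod_cast hD1)
  have hDp : (0 : ℝ) < D := by exact_mod_cast hD1
  calc (s.card : ℝ) ≤ (sm D D).card * 2 := hf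
    _ ≤ (C * (D : ℝ) ^ (ε / 12) * (D : ℝ) ^ (ε / 12)) * 2 := by gcongr
    _ = 2 * C * (D : ℝ) ^ (ε / 6) := by
      rw [mul_assoc C, ← Real.rpow_add hDp]; ring_nf
    _ ≤ 2 * C * ((N : ℝ) ^ 6) ^ (ε / 6) := by
      gcongr
      exact_mod_cast hDN
    _ = 2 * C * (N : ℝ) ^ ε := by
      congr 1
      rw [← Real.rpow_natCast, ← Real.rpow_mul (by positivity)]
      congr 1; push_cast; ring

/-- Primes exactly dividing the denominators `i` and `j` and no other one. -/
noncomputable def cl {ι : Type*} [Fintype ι] (Q : ℕ) (x : ι → ℚ) (i j : ι) : Finset ℕ := by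
  classical
  exact (PF Q x).filter (fun p => p ∣ (x i).den ∧ p ∣ (x j).den ∧ ¬ p ^ 2 ∣ (x i).den ∧
    ¬ p ^ 2 ∣ (x j).den ∧ ∀ l, l ≠ i → l ≠ j → ¬ p ∣ (x l).den)

lemma mem_cl {ι : Type*} [Fintype ι] {Q : ℕ} {x : ι → ℚ} {i j : ι} {p : ℕ} :
    p ∈ cl Q x i j ↔ p ∈ PF Q x ∧ p ∣ (x i).den ∧ p ∣ (x j).den ∧ ¬ p ^ 2 ∣ (x i).den ∧
    ¬ p ^ 2 ∣ (x j).den ∧ ∀ l, l ≠ i → l ≠ j → ¬ p ∣ (x l).den := by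
  classical
  unfold cl
  rw [Finset.mem_filter]

lemma cl_sub {ι : Type*} [Fintype ι] (Q : ℕ) (x : ι → ℚ) (i j : ι) : cl Q x i j ⊆ PF Q x :=
  fun _ hp => (mem_cl.1 hp).1

lemma cl_symm {ι : Type*} [Fintype ι] (Q : ℕ) (x : ι → ℚ) (i j : ι) : cl Q x i j = cl Q x j i := by
  ext p
  rw [mem_cl, mem_cl]
  constructor <;> rintro ⟨h1, h2, h3, h4, h5, h6⟩ <;>
    exact ⟨h1, h3, h2, h5, h4, fun l a b => h6 l b a⟩

/-- The product over the class. -/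
noncomputable def dd {ι : Type*} [Fintype ι] (Q : ℕ) (x : ι → ℚ) (i j : ι) : ℕ :=
  ∏ p ∈ cl Q x i j, p

lemma triple_dvd_prod {ι : Type*} [Fintype ι] [DecidableEq ι] (f : ι → ℕ) {i j l : ι}
    (hij : j ≠ i) (hli : l ≠ i) (hlj : l ≠ j) : f i * f j * f l ∣ ∏ l, f l := by
  rw [← Finset.mul_prod_erase _ _ (Finset.mem_univ i), mul_assoc]
  apply mul_dvd_mul_left
  rw [← Finset.mul_prod_erase _ _ (Finset.mem_erase.2 ⟨hij, Finset.mem_univ j⟩)]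
  apply mul_dvd_mul_left
  exact Finset.dvd_prod_of_mem _ (by simp [hli, hlj])

lemma pf_six {ι : Type*} [Fintype ι] [DecidableEq ι] {Q : ℕ} {x : ι → ℚ} (ht : Twice Q x) :
    (∏ p ∈ PF Q x, p) ^ 6 ∣
      (∏ i, (x i).den) ^ 2 * ∏ ij ∈ (Finset.univ : Finset ι).offDiag, dd Q x ij.1 ij.2 := by
  apply prod_primes_pow_dvd
  intro p hp
  have hp' := hp
  rw [mem_PF] at hp
  obtain ⟨hpp, hpQ, i, hi⟩ := hp
  obtain ⟨j, hji, hj⟩ := ht i p hpp hpQ hi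
  refine ⟨hpp, ?_⟩
  by_cases hcl : p ∈ cl Q x i j
  · have h2 : p ^ 2 ∣ ∏ i, (x i).den := by
      rw [sq]
      exact (mul_dvd_mul hi hj).trans (pair_dvd_prod _ hji)
    have h3 : p ^ 2 ∣ ∏ ij ∈ (Finset.univ : Finset ι).offDiag, dd Q x ij.1 ij.2 := by
      have hsub : ({(i, j), (j, i)} : Finset (ι × ι)) ⊆ (Finset.univ : Finset ι).offDiag := by
        intro a ha
        simp only [Finset.mem_insert, Finset.mem_singleton] at ha
        rcases ha with rfl | rfl <;> simp [hji, hji.symm]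
      refine dvd_trans ?_ (Finset.prod_dvd_prod_of_subset _ _ _ hsub)
      rw [Finset.prod_pair (by simp [hji.symm]), sq]
      apply mul_dvd_mul
      · exact Finset.dvd_prod_of_mem _ hcl
      · exact Finset.dvd_prod_of_mem _ (by rw [cl_symm]; exact hcl)
    calc p ^ 6 = (p ^ 2) ^ 2 * p ^ 2 := by ring
      _ ∣ _ := mul_dvd_mul (pow_dvd_pow_of_dvd h2 2) h3
  · have h3 : p ^ 3 ∣ ∏ i, (x i).den := by
      rw [mem_cl] at hcl
      by_cases hi2 : p ^ 2 ∣ (x i).den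
      · calc p ^ 3 = p ^ 2 * p := by ring
          _ ∣ (x i).den * (x j).den := mul_dvd_mul hi2 hj
          _ ∣ _ := pair_dvd_prod (fun i => (x i).den) hji
      by_cases hj2 : p ^ 2 ∣ (x j).den
      · calc p ^ 3 = p * p ^ 2 := by ring
          _ ∣ (x i).den * (x j).den := mul_dvd_mul hi hj2
          _ ∣ _ := pair_dvd_prod (fun i => (x i).den) hji
      have : ∃ l, l ≠ i ∧ l ≠ j ∧ p ∣ (x l).den := by
        by_contra hcon
        push Not at hcon
        exact hcl ⟨hp', hi, hj, hi2, hj2, hcon⟩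
      obtain ⟨l, hli, hlj, hl⟩ := this
      calc p ^ 3 = p * p * p := by ring
        _ ∣ (x i).den * (x j).den * (x l).den := mul_dvd_mul (mul_dvd_mul hi hj) hl
        _ ∣ _ := triple_dvd_prod (fun i => (x i).den) hji hli hlj
    calc p ^ 6 = (p ^ 3) ^ 2 := by ring
      _ ∣ (∏ i, (x i).den) ^ 2 := pow_dvd_pow_of_dvd h3 2
      _ ∣ _ := dvd_mul_right _ _

lemma unit_mul {q : ℚ} (h1 : q.num.natAbs = 1) {d m : ℕ} (h2 : q.den = d * m) :
    ((d : ℚ) * q).num.natAbs = 1 ∧ ((d : ℚ) * q).den = m := by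
  have hne := q.den_ne_zero
  rw [h2] at hne
  have hd : (d : ℚ) ≠ 0 := by exact_mod_cast left_ne_zero_of_mul hne
  have hm0 := right_ne_zero_of_mul hne
  have hm : (m : ℚ) ≠ 0 := by exact_mod_cast hm0
  have h3 : q.num = 1 ∨ q.num = -1 := by omega
  have h4 := Rat.num_div_den q
  rw [h2] at h4
  rcases h3 with h | h <;> rw [h] at h4 <;> push_cast at h4
  · have : (d : ℚ) * q = (m : ℚ)⁻¹ := by rw [← h4]; field_simp
    rw [this, Rat.inv_natCast_num_of_pos (by omega), Rat.inv_natCast_den_of_pos (by omega)]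
    simp
  · have : (d : ℚ) * q = -(m : ℚ)⁻¹ := by rw [← h4]; field_simp
    rw [this, Rat.neg_num, Rat.neg_den, Rat.inv_natCast_num_of_pos (by omega),
      Rat.inv_natCast_den_of_pos (by omega)]
    simp

lemma dd_dvd {ι : Type*} [Fintype ι] (Q : ℕ) (x : ι → ℚ) (i j : ι) :
    dd Q x i j ∣ (x i).den := by
  have := prod_primes_pow_dvd (cl Q x i j) 1 (x i).den (by
    intro p hp
    have := mem_cl.1 hp
    exact ⟨(mem_PF.1 this.1).1, by simpa using this.2.1⟩)
  simpa [dd] using this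

lemma dd_symm {ι : Type*} [Fintype ι] (Q : ℕ) (x : ι → ℚ) (i j : ι) :
    dd Q x i j = dd Q x j i := by unfold dd; rw [cl_symm]

/-- The remaining entry after removing the class. -/
lemma scaled_smE {ι : Type*} [Fintype ι] {H : ℝ} (hH : 1 ≤ H) {Q : ℕ} {x : ι → ℚ}
    (hx : ∀ i, x i ∈ EF H) (i j : ι) :
    (dd Q x i j : ℚ) * x i ∈ smE (Q * ∏ p ∈ PF Q x \ cl Q x i j, p) H := by
  obtain ⟨m, hm⟩ := dd_dvd Q x i j
  have hxi := (EF_iff (by linarith) _).1 (hx i)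
  obtain ⟨h1, h2⟩ := unit_mul hxi.1 hm
  rw [mem_smE, EF_iff (by linarith), h2]
  have hmd : m ∣ (x i).den := hm ▸ dvd_mul_left _ _
  refine ⟨⟨h1, ?_⟩, ?_⟩
  · refine le_trans ?_ hxi.2
    exact_mod_cast Nat.le_of_dvd (x i).den_pos hmd
  · intro p hp hpm
    by_cases hpQ : p ∣ Q
    · exact hpQ.mul_right _
    refine (Finset.dvd_prod_of_mem _ ?_).mul_left _
    rw [Finset.mem_sdiff]
    refine ⟨mem_PF.2 ⟨hp, hpQ, i, hpm.trans hmd⟩, ?_⟩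
    intro hcl
    have h3 := (mem_cl.1 hcl).2.2.2.1
    apply h3
    rw [hm, sq]
    exact mul_dvd_mul (Finset.dvd_prod_of_mem _ hcl) hpm

lemma other_smE {ι : Type*} [Fintype ι] {H : ℝ} {Q : ℕ} {x : ι → ℚ}
    (hx : ∀ i, x i ∈ EF H) (i j l : ι) (hi : l ≠ i) (hj : l ≠ j) :
    x l ∈ smE (Q * ∏ p ∈ PF Q x \ cl Q x i j, p) H := by
  rw [mem_smE]
  refine ⟨hx l, ?_⟩
  intro p hp hpm
  by_cases hpQ : p ∣ Q
  · exact hpQ.mul_right _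
  refine (Finset.dvd_prod_of_mem _ ?_).mul_left _
  rw [Finset.mem_sdiff]
  exact ⟨mem_PF.2 ⟨hp, hpQ, l, hpm⟩, fun hcl => (mem_cl.1 hcl).2.2.2.2.2 l hi hj hpm⟩

lemma sum_split {ι : Type*} [Fintype ι] [DecidableEq ι] (f : ι → ℚ) {i j : ι} (hij : i ≠ j) :
    ∑ l, f l = f i + f j + ∑ l ∈ (Finset.univ.erase i).erase j, f l := by
  rw [← Finset.add_sum_erase _ _ (Finset.mem_univ i),
    ← Finset.add_sum_erase (Finset.univ.erase i) _
      (Finset.mem_erase.2 ⟨hij.symm, Finset.mem_univ j⟩)]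
  ring

/-- Case of small classes. -/
lemma small_le {ι : Type*} [Fintype ι] [DecidableEq ι] {H : ℝ} (hH : 1 ≤ H) {Q : ℕ} {x : ι → ℚ}
    (hx : ∀ i, x i ∈ EF H) (ht : Twice Q x) {σ : ℝ}
    (hd : ∀ i j, i ≠ j → (dd Q x i j : ℝ) ≤ H ^ σ)
    (hσ : σ * ((Fintype.card ι : ℝ) ^ 2 - Fintype.card ι + 6) ≤ Fintype.card ι) :
    ((∏ p ∈ PF Q x, p : ℕ) : ℝ) ≤ H ^ ((Fintype.card ι : ℝ) / 2 - σ) := by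
  have hHp : 0 < H := by linarith
  set k := Fintype.card ι with hk
  have h1 : (∏ p ∈ PF Q x, p) ^ 6 ≤
      (∏ i, (x i).den) ^ 2 * ∏ ij ∈ (Finset.univ : Finset ι).offDiag, dd Q x ij.1 ij.2 := by
    apply Nat.le_of_dvd _ (pf_six ht)
    apply Nat.mul_pos
    · exact pow_pos (Finset.prod_pos (fun i _ => (x i).den_pos)) 2
    · exact Finset.prod_pos (fun ij _ => PF_prod_pos (cl_sub Q x ij.1 ij.2))
  have h2 : ((∏ p ∈ PF Q x, p : ℕ) : ℝ) ^ 6 ≤ ((∏ i, (x i).den : ℕ) : ℝ) ^ 2 *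
      ((∏ ij ∈ (Finset.univ : Finset ι).offDiag, dd Q x ij.1 ij.2 : ℕ) : ℝ) := by
    exact_mod_cast h1
  have h3 : ((∏ ij ∈ (Finset.univ : Finset ι).offDiag, dd Q x ij.1 ij.2 : ℕ) : ℝ) ≤
      (H ^ σ) ^ (k * k - k) := by
    push_cast
    calc _ ≤ ∏ ij ∈ (Finset.univ : Finset ι).offDiag, H ^ σ := by
          apply Finset.prod_le_prod
          · intros; positivity
          · intro ij hij
            exact hd _ _ (Finset.mem_offDiag.1 hij).2.2
      _ = _ := by rw [Finset.prod_const, Finset.offDiag_card, Finset.card_univ]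
  have h4 : ((∏ p ∈ PF Q x, p : ℕ) : ℝ) ^ 6 ≤ (H ^ ((k : ℝ) / 2 - σ)) ^ 6 := by
    calc _ ≤ _ := h2
      _ ≤ (H ^ k) ^ 2 * (H ^ σ) ^ (k * k - k) := by
        gcongr
        exact den_prod_le hH hx
      _ = H ^ ((k : ℝ) * 2 + σ * ((k : ℝ) * k - k)) := by
        have hkk : k ≤ k * k := Nat.le_mul_self k
        rw [Real.rpow_add hHp, Real.rpow_mul hHp.le, Real.rpow_natCast, Real.rpow_mul hHp.le]
        congr 1
        · rw [← Real.rpow_natCast]; norm_num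
        · rw [← Real.rpow_natCast, Nat.cast_sub hkk]; push_cast; rfl
      _ ≤ H ^ (((k : ℝ) / 2 - σ) * (6 : ℕ)) := by
        apply Real.rpow_le_rpow_of_exponent_le hH
        push_cast
        nlinarith
      _ = _ := by rw [Real.rpow_mul hHp.le, Real.rpow_natCast]
  exact le_of_pow_le_pow_left₀ (by norm_num) (by positivity) h4

/-- Case of a large class with nondegenerate equation: uniqueness. -/
lemma big_inj {ι : Type*} [Fintype ι] [DecidableEq ι] {Q : ℕ} {v : ι → ℚ} {c : ℚ} {i j : ι}
    (hij : i ≠ j) {x x' : ι → ℚ}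
    (he : ∑ l, v l * x l = c) (he' : ∑ l, v l * x' l = c)
    (hne : v i * x i + v j * x j ≠ 0)
    (hy : (fun l => if l = i ∨ l = j then (dd Q x i j : ℚ) * x l else x l) =
      (fun l => if l = i ∨ l = j then (dd Q x' i j : ℚ) * x' l else x' l)) : x = x' := by
  have ho : ∀ l, l ≠ i → l ≠ j → x l = x' l := by
    intro l hi hj
    have := congrFun hy l
    simpa [hi, hj] using this
  have hi : (dd Q x i j : ℚ) * x i = (dd Q x' i j : ℚ) * x' i := by
    have := congrFun hy i
    simpa using this
  have hj : (dd Q x i j : ℚ) * x j = (dd Q x' i j : ℚ) * x' j := by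
    have := congrFun hy j
    simpa using this
  rw [sum_split _ hij] at he he'
  have hs : ∑ l ∈ (Finset.univ.erase i).erase j, v l * x l =
      ∑ l ∈ (Finset.univ.erase i).erase j, v l * x' l := by
    apply Finset.sum_congr rfl
    intro l hl
    simp only [Finset.mem_erase] at hl
    rw [ho l hl.2.1 hl.1]
  have hw : v i * x i + v j * x j = v i * x' i + v j * x' j := by linarith
  have hd : (dd Q x i j : ℚ) = dd Q x' i j := by
    apply mul_right_cancel₀ hne
    calc (dd Q x i j : ℚ) * (v i * x i + v j * x j)
        = v i * (dd Q x i j * x i) + v j * (dd Q x i j * x j) := by ring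
      _ = dd Q x' i j * (v i * x' i + v j * x' j) := by rw [hi, hj]; ring
      _ = _ := by rw [hw]
  have hd0 : (dd Q x' i j : ℚ) ≠ 0 := by
    have : 1 ≤ dd Q x' i j := PF_prod_pos (cl_sub Q x' i j)
    have : dd Q x' i j ≠ 0 := by omega
    exact_mod_cast this
  funext l
  by_cases h1 : l = i
  · subst h1; rw [hd] at hi; exact mul_left_cancel₀ hd0 hi
  by_cases h2 : l = j
  · subst h2; rw [hd] at hj; exact mul_left_cancel₀ hd0 hj
  exact ho l h1 h2

/-- Bound with a saving for inhomogeneous equations. -/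
lemma sav_count (σ ε : ℝ) (n : ℕ) (hσ0 : 0 < σ) (hε : 0 < ε)
    (hσ : ∀ k : ℕ, 1 ≤ k → k ≤ n → σ * ((k : ℝ) ^ 2 - k + 6) ≤ k) : ∀ k : ℕ, k ≤ n →
    ∃ C : ℝ, 1 ≤ C ∧ ∀ (ι : Type) [Fintype ι] [DecidableEq ι], Fintype.card ι = k →
    ∀ (H : ℝ) (Q : ℕ), 1 ≤ H → 1 ≤ Q → ∀ (v : ι → ℚ) (c : ℚ), GoodQ Q v c →
    (∀ i, v i ≠ 0) → c ≠ 0 →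
    ∀ (s : Finset (ι → ℚ)), (∀ x ∈ s, (∀ i, x i ∈ EF H) ∧ ∑ i, v i * x i = c) →
      (s.card : ℝ) ≤ C * H ^ ((k : ℝ) / 2 - σ) * H ^ ε * (Q : ℝ) ^ ε := by
  intro k
  induction k using Nat.strong_induction_on with
  | _ k ih =>
  intro hkn
  rcases Nat.eq_zero_or_pos k with hk0 | hkpos
  · refine ⟨1, le_refl _, ?_⟩
    intro ι _ _ hcard H Q hH hQ v c hg hv hc s hs
    have : s = ∅ := by
      rw [Finset.eq_empty_iff_forall_notMem]
      intro x hx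
      have h1 := (hs x hx).2
      rw [hk0, Fintype.card_eq_zero_iff] at hcard
      rw [Finset.univ_eq_empty, Finset.sum_empty] at h1
      exact hc h1.symm
    rw [this]
    simp
    positivity
  obtain ⟨C1, hC1, hK⟩ := key_count_s12 k ε hε
  have hIH : ∃ C : ℝ, 1 ≤ C ∧ (2 ≤ k → ∀ (ι : Type) [Fintype ι] [DecidableEq ι],
      Fintype.card ι = k - 2 →
      ∀ (H : ℝ) (Q : ℕ), 1 ≤ H → 1 ≤ Q → ∀ (v : ι → ℚ) (c : ℚ), GoodQ Q v c →
      (∀ i, v i ≠ 0) → c ≠ 0 →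
      ∀ (s : Finset (ι → ℚ)), (∀ x ∈ s, (∀ i, x i ∈ EF H) ∧ ∑ i, v i * x i = c) →
        (s.card : ℝ) ≤ C * H ^ (((k - 2 : ℕ) : ℝ) / 2 - σ) * H ^ ε * (Q : ℝ) ^ ε) := by
    by_cases h2 : 2 ≤ k
    · obtain ⟨C, h1, h⟩ := ih (k - 2) (by omega) (by omega)
      exact ⟨C, h1, fun _ => h⟩
    · exact ⟨1, le_refl _, fun h => absurd h h2⟩
  obtain ⟨C2, hC2, hI⟩ := hIH
  refine ⟨C1 + (k * k : ℕ) * (2 * C2 + C1), by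
    have : (0 : ℝ) ≤ (k * k : ℕ) * (2 * C2 + C1) := by positivity
    linarith, ?_⟩
  intro ι _ _ hcard H Q hH hQ v c hg hv hc s hs
  have hHp : 0 < H := by linarith
  set M : ℝ := H ^ ((k : ℝ) / 2 - σ) * H ^ ε * (Q : ℝ) ^ ε with hM
  have hM0 : 0 ≤ M := by positivity
  have hYle : H ^ ((k : ℝ) / 2 - σ) ≤ H ^ k := by
    refine le_trans ?_ (rpow_half_le hH k)
    exact Real.rpow_le_rpow_of_exponent_le hH (by linarith)
  have htw : ∀ x ∈ s, Twice Q x := by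
    intro x hx
    exact twice_of_eq hg x (fun i => ((EF_iff hHp.le _).1 ((hs x hx).1 i)).1) (hs x hx).2
  classical
  set B := s.filter (fun x => ∀ i j, i ≠ j → (dd Q x i j : ℝ) ≤ H ^ σ) with hB
  let D : ι × ι → Finset (ι → ℚ) := fun a => s.filter (fun x => v a.1 * x a.1 + v a.2 * x a.2 = 0)
  let G : ι × ι → Finset (ι → ℚ) := fun a => s.filter (fun x =>
    v a.1 * x a.1 + v a.2 * x a.2 ≠ 0 ∧ H ^ σ ≤ (dd Q x a.1 a.2 : ℝ))
  have hcover : s ⊆ B ∪ (Finset.univ : Finset ι).offDiag.biUnion (fun a => D a ∪ G a) := by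
    intro x hx
    rw [Finset.mem_union]
    by_cases h : ∀ i j, i ≠ j → (dd Q x i j : ℝ) ≤ H ^ σ
    · exact Or.inl (Finset.mem_filter.2 ⟨hx, h⟩)
    · right
      push Not at h
      obtain ⟨i, j, hij, h1⟩ := h
      rw [Finset.mem_biUnion]
      refine ⟨(i, j), by simp [hij], ?_⟩
      rw [Finset.mem_union]
      by_cases h2 : v i * x i + v j * x j = 0
      · exact Or.inl (Finset.mem_filter.2 ⟨hx, h2⟩)
      · exact Or.inr (Finset.mem_filter.2 ⟨hx, h2, h1.le⟩)
  have hBc : (B.card : ℝ) ≤ C1 * M := by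
    have := hK ι hcard H Q _ hH hQ (by positivity) hYle B (fun x => ∏ p ∈ PF Q x, p) (fun x => x)
      (by
        intro x hx
        obtain ⟨hxs, hxd⟩ := Finset.mem_filter.1 hx
        refine ⟨PF_prod_pos (Finset.Subset.refl _), ?_, fun l => PF_smE (hs x hxs).1 l⟩
        have := small_le hH (hs x hxs).1 (htw x hxs) hxd
          (by rw [hcard]; exact hσ k hkpos hkn)
        rwa [hcard] at this)
      (fun _ _ _ _ h => h)
    calc _ ≤ _ := this
      _ = _ := by rw [hM]; ring
  have hGc : ∀ a ∈ (Finset.univ : Finset ι).offDiag, ((G a).card : ℝ) ≤ C1 * M := by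
    rintro ⟨i, j⟩ ha
    have hij : i ≠ j := (Finset.mem_offDiag.1 ha).2.2
    have := hK ι hcard H Q _ hH hQ (by positivity) hYle (G (i, j))
      (fun x => ∏ p ∈ PF Q x \ cl Q x i j, p)
      (fun x l => if l = i ∨ l = j then (dd Q x i j : ℚ) * x l else x l)
      (by
        intro x hx
        obtain ⟨hxs, hne, hbig⟩ := Finset.mem_filter.1 hx
        refine ⟨PF_prod_pos Finset.sdiff_subset, ?_, ?_⟩
        · have h1 : (∏ p ∈ PF Q x \ cl Q x i j, p) * dd Q x i j = ∏ p ∈ PF Q x, p :=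
            Finset.prod_sdiff (cl_sub Q x i j)
          have h2 := PF_prod_le hH (hs x hxs).1 (htw x hxs)
          rw [← h1, hcard] at h2
          push_cast at h2
          rw [Real.rpow_sub hHp, le_div_iff₀ (by positivity)]
          push_cast
          refine le_trans ?_ h2
          gcongr
        · intro l
          by_cases h1 : l = i
          · subst h1
            simpa using scaled_smE hH (hs x hxs).1 l j
          by_cases h2 : l = j
          · subst h2
            have := scaled_smE (Q := Q) hH (hs x hxs).1 l i
            rw [cl_symm, dd_symm] at this
            simpa using this
          · simpa [h1, h2] using other_smE (hs x hxs).1 i j l h1 h2)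
      (by
        intro x hx x' hx' hy
        obtain ⟨hxs, hne, -⟩ := Finset.mem_filter.1 hx
        obtain ⟨hxs', -, -⟩ := Finset.mem_filter.1 hx'
        exact big_inj hij (hs x hxs).2 (hs x' hxs').2 hne hy)
    calc _ ≤ _ := this
      _ = _ := by rw [hM]; ring
  have hDc : ∀ a ∈ (Finset.univ : Finset ι).offDiag, ((D a).card : ℝ) ≤ 2 * C2 * M := by
    rintro ⟨i, j⟩ ha
    have hij : i ≠ j := (Finset.mem_offDiag.1 ha).2.2
    have hk2 : 2 ≤ k := by
      rw [← hcard]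
      exact Fintype.one_lt_card_iff.2 ⟨i, j, hij⟩
    have hsubcard : Fintype.card {l : ι // l ≠ i ∧ l ≠ j} = k - 2 := by
      have h1 : (Finset.univ.filter (fun l : ι => l ≠ i ∧ l ≠ j)) =
          (Finset.univ.erase i).erase j := by
        ext l; simp [and_comm]
      rw [Fintype.card_subtype, h1, Finset.card_erase_of_mem (by simp [hij.symm]),
        Finset.card_erase_of_mem (by simp), Finset.card_univ, hcard]
      omega
    have h1 := fiber_bound (D (i, j)) (EF H) (fun x => x i)
      (C2 * H ^ (((k - 2 : ℕ) : ℝ) / 2 - σ) * H ^ ε * (Q : ℝ) ^ ε)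
      (fun x hx => (hs x (Finset.mem_filter.1 hx).1).1 i) (by
        intro b _
        set F := (D (i, j)).filter (fun x => x i = b) with hF
        let res : (ι → ℚ) → ({l : ι // l ≠ i ∧ l ≠ j} → ℚ) := fun x l => x l.1
        have hinj : Set.InjOn res (F : Set (ι → ℚ)) := by
          intro x hx x' hx' hr
          obtain ⟨hxD, hxb⟩ := Finset.mem_filter.1 hx
          obtain ⟨hxD', hxb'⟩ := Finset.mem_filter.1 hx'
          have e1 := (Finset.mem_filter.1 hxD).2
          have e2 := (Finset.mem_filter.1 hxD').2
          simp only at e1 e2 hxb hxb'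
          funext l
          by_cases h1 : l = i
          · rw [h1, hxb, hxb']
          by_cases h2 : l = j
          · rw [h2]
            apply mul_left_cancel₀ (hv j)
            rw [hxb] at e1
            rw [hxb'] at e2
            linarith
          exact congrFun hr ⟨l, h1, h2⟩
        rw [← Finset.card_image_of_injOn hinj]
        refine hI hk2 _ hsubcard H Q hH hQ (fun l => v l.1) c ?_ (fun l => hv l.1) hc _ ?_
        · intro p hp hpQ
          exact ⟨fun l => (hg p hp hpQ).1 l.1, (hg p hp hpQ).2⟩
        · intro z hz
          obtain ⟨x, hx, rfl⟩ := Finset.mem_image.1 hz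
          obtain ⟨hxD, -⟩ := Finset.mem_filter.1 hx
          obtain ⟨hxs, hx0⟩ := Finset.mem_filter.1 hxD
          refine ⟨fun l => (hs x hxs).1 l.1, ?_⟩
          have h3 := (hs x hxs).2
          rw [sum_split _ hij, hx0, zero_add] at h3
          rw [← h3]
          symm
          exact Finset.sum_subtype _ (by intro l; simp [and_comm]) (fun l => v l * x l))
    calc ((D (i, j)).card : ℝ) ≤ _ := h1
      _ ≤ (2 * H) * (C2 * H ^ (((k - 2 : ℕ) : ℝ) / 2 - σ) * H ^ ε * (Q : ℝ) ^ ε) := by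
        gcongr
        exact EF_card hHp.le
      _ = 2 * C2 * M := by
        have h5 : H ^ ((k : ℝ) / 2 - σ) = H * H ^ (((k - 2 : ℕ) : ℝ) / 2 - σ) := by
          nth_rewrite 2 [← Real.rpow_one H]
          rw [← Real.rpow_add hHp, Nat.cast_sub hk2]
          congr 1; push_cast; ring
        rw [hM, h5]; ring
  have hfin : (s.card : ℝ) ≤ B.card + ∑ a ∈ (Finset.univ : Finset ι).offDiag,
      (((D a).card : ℝ) + (G a).card) := by
    have h1 := (Finset.card_le_card hcover).trans (Finset.card_union_le _ _)
    have h2 : ((Finset.univ : Finset ι).offDiag.biUnion (fun a => D a ∪ G a)).card ≤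
        ∑ a ∈ (Finset.univ : Finset ι).offDiag, ((D a).card + (G a).card) :=
      Finset.card_biUnion_le.trans (Finset.sum_le_sum (fun a _ => Finset.card_union_le _ _))
    exact_mod_cast h1.trans (Nat.add_le_add_left h2 _)
  calc (s.card : ℝ) ≤ _ := hfin
    _ ≤ C1 * M + ∑ a ∈ (Finset.univ : Finset ι).offDiag, (2 * C2 * M + C1 * M) := by
      gcongr with a ha
      · exact hDc a ha
      · exact hGc a ha
    _ ≤ C1 * M + (k * k : ℕ) * (2 * C2 * M + C1 * M) := by
      rw [Finset.sum_const, nsmul_eq_mul]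
      gcongr
      rw [Finset.offDiag_card, Finset.card_univ, hcard]
      omega
    _ = _ := by rw [hM]; ring

/-- The cofactor vector of the row `i0`. -/
noncomputable def cof {n : ℕ} (i0 : Fin n) (A : Matrix (Fin n) (Fin n) ℚ) : Fin n → ℚ :=
  fun j => A.adjugate j i0

lemma cof_self {n : ℕ} (i0 : Fin n) (A : Matrix (Fin n) (Fin n) ℚ) :
    ∑ j, cof i0 A j * A i0 j = A.det := by
  have h := congrFun (congrFun (Matrix.mul_adjugate A) i0) i0
  rw [Matrix.mul_apply] at h
  simp only [Matrix.smul_apply, Matrix.one_apply_eq, smul_eq_mul, mul_one] at h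
  rw [← h]
  exact Finset.sum_congr rfl (fun j _ => mul_comm _ _)

lemma cof_other {n : ℕ} (i0 : Fin n) (A : Matrix (Fin n) (Fin n) ℚ) (l : Fin n) (hl : l ≠ i0) :
    ∑ j, cof i0 A j * A l j = 0 := by
  have h := congrFun (congrFun (Matrix.mul_adjugate A) l) i0
  rw [Matrix.mul_apply] at h
  simp only [Matrix.smul_apply, Matrix.one_apply_ne hl, smul_eq_mul, mul_zero] at h
  rw [← h]
  exact Finset.sum_congr rfl (fun j _ => mul_comm _ _)

lemma cof_congr {n : ℕ} (i0 : Fin n) (A B : Matrix (Fin n) (Fin n) ℚ)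
    (h : ∀ l, l ≠ i0 → A l = B l) : cof i0 A = cof i0 B := by
  funext j
  unfold cof
  rw [Matrix.adjugate_apply, Matrix.adjugate_apply]
  congr 1
  ext l m
  by_cases hl : l = i0
  · subst hl; simp
  · rw [Matrix.updateRow_ne hl, Matrix.updateRow_ne hl, h l hl]

/-- Height exponent. -/
def hexp (n : ℕ) : ℕ := (n + 1) * n.factorial

lemma ht_det_le {n : ℕ} {H : ℝ} (hH : 2 ≤ H) (A : Matrix (Fin n) (Fin n) ℚ)
    (hA : ∀ i j, ht (A i j) ≤ ⌊H⌋₊) : ht A.det ≤ ⌊H⌋₊ ^ (hexp n) := by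
  have h2 : 2 ≤ ⌊H⌋₊ := Nat.le_floor (by simpa using hH)
  calc _ ≤ _ := ht_det n A _ hA
    _ ≤ (⌊H⌋₊ * ⌊H⌋₊ ^ n) ^ n.factorial := by gcongr
    _ = _ := by rw [hexp, pow_mul, pow_succ' _ n]

lemma ht_cof_le {n : ℕ} {H : ℝ} (hH : 2 ≤ H) (i0 : Fin n) (A : Matrix (Fin n) (Fin n) ℚ)
    (hA : ∀ i j, A i j ∈ EF H) (j : Fin n) : ht (cof i0 A j) ≤ ⌊H⌋₊ ^ (hexp n) := by
  have h2 : 2 ≤ ⌊H⌋₊ := Nat.le_floor (by simpa using hH)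
  unfold cof
  rw [Matrix.adjugate_apply]
  apply ht_det_le hH
  intro l m
  by_cases hl : l = i0
  · subst hl
    rw [Matrix.updateRow_self]
    by_cases hm : m = j
    · subst hm
      rw [Pi.single_eq_same]
      have : ht (1 : ℚ) = 1 := by simp [ht]
      omega
    · rw [Pi.single_eq_of_ne hm]
      have : ht (0 : ℚ) = 1 := by simp [ht]
      omega
  · rw [Matrix.updateRow_ne hl]
    exact ht_EF (by linarith) (hA _ _)

lemma exists_Q {n : ℕ} (v : Fin n → ℚ) (c : ℚ) (W : ℕ) (hv : ∀ j, ht (v j) ≤ W) (hc : ht c ≤ W) :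
    ∃ Q : ℕ, 1 ≤ Q ∧ Q ≤ W ^ (2 * n + 1) ∧ ∀ p : ℕ, p.Prime → ¬ p ∣ Q →
      (∀ j, v j ≠ 0 → ¬ p ∣ (v j).num.natAbs ∧ ¬ p ∣ (v j).den) ∧ ¬ p ∣ c.den := by
  have hW : 1 ≤ W := (ht_pos c).trans hc
  refine ⟨(∏ j, if v j = 0 then 1 else (v j).num.natAbs * (v j).den) * c.den, ?_, ?_, ?_⟩
  · apply Nat.mul_pos _ c.den_pos
    apply Finset.prod_pos
    intro j _
    split_ifs with h
    · exact one_pos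
    · have := Rat.num_ne_zero.2 h
      exact Nat.mul_pos (by omega) (v j).den_pos
  · calc _ ≤ (∏ j : Fin n, W ^ 2) * W := by
          gcongr with j
          · split_ifs
            · exact Nat.one_le_pow _ _ hW
            · rw [sq]
              exact Nat.mul_le_mul ((le_max_left _ _).trans (hv j)) ((le_max_right _ _).trans (hv j))
          · exact (le_max_right _ _).trans hc
      _ = _ := by simp; ring
  · intro p hp hpQ
    refine ⟨?_, fun h => hpQ (h.mul_left _)⟩
    intro j hj
    have : ¬ p ∣ (v j).num.natAbs * (v j).den := by
      intro h
      apply hpQ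
      apply Dvd.dvd.mul_right
      refine dvd_trans ?_ (Finset.dvd_prod_of_mem _ (Finset.mem_univ j))
      rwa [if_neg hj]
    exact ⟨fun h => this (h.mul_right _), fun h => this (h.mul_left _)⟩

lemma row_aux (n : ℕ) (ε : ℝ) (hε : 0 < ε) : ∃ C : ℝ, 1 ≤ C ∧
    ∀ (H : ℝ) (Q : ℕ), 1 ≤ H → 1 ≤ Q → ∀ (v : Fin n → ℚ) (c : ℚ),
    GoodQ Q (fun j : {j : Fin n // v j ≠ 0} => v j.1) c →
    ∀ s : Finset (Fin n → ℚ), (∀ x ∈ s, (∀ i, x i ∈ EF H) ∧ ∑ i, v i * x i = c) →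
    (s.card : ℝ) ≤ C * H ^ ((n : ℝ) - (Fintype.card {j : Fin n // v j ≠ 0} : ℝ) / 2) *
      H ^ ε * (Q : ℝ) ^ ε := by
  choose C hC1 hC using fun k => hom_count k ε hε
  have hCs : ∀ k ≤ n, C k ≤ ∑ k ∈ Finset.range (n + 1), C k := by
    intro k hk
    exact Finset.single_le_sum (f := C) (fun i _ => le_trans zero_le_one (hC1 i))
      (Finset.mem_range.2 (by omega))
  set S := ∑ k ∈ Finset.range (n + 1), C k
  have hS1 : 1 ≤ S := (hC1 0).trans (hCs 0 (by omega))
  refine ⟨2 ^ n * S, one_le_mul_of_one_le_of_one_le (one_le_pow₀ (by norm_num)) hS1, ?_⟩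
  intro H Q hH hQ v c hg s hs
  have hHp : 0 < H := by linarith
  set k := Fintype.card {j : Fin n // v j ≠ 0} with hk
  have hkn : k ≤ n := by
    have := Fintype.card_subtype_le (fun j : Fin n => v j ≠ 0)
    rw [Fintype.card_fin] at this
    exact this
  have hcc : Fintype.card {j : Fin n // ¬ v j ≠ 0} = n - k := by
    rw [Fintype.card_subtype_compl, Fintype.card_fin]
  classical
  have h1 := fiber_bound s (Fintype.piFinset (fun _ : {j : Fin n // ¬ v j ≠ 0} => EF H))
    (fun x j => x j.1) (S * H ^ ((k : ℝ) / 2) * H ^ ε * (Q : ℝ) ^ ε) (by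
      intro x hx
      rw [Fintype.mem_piFinset]
      exact fun j => (hs x hx).1 j.1) (by
      intro b _
      set F := s.filter (fun x => (fun j : {j : Fin n // ¬ v j ≠ 0} => x j.1) = b) with hF
      let res : (Fin n → ℚ) → ({j : Fin n // v j ≠ 0} → ℚ) := fun x j => x j.1
      have hinj : Set.InjOn res (F : Set (Fin n → ℚ)) := by
        intro x hx x' hx' hr
        have e1 := (Finset.mem_filter.1 hx).2
        have e2 := (Finset.mem_filter.1 hx').2
        funext l
        by_cases h : v l ≠ 0
        · exact congrFun hr ⟨l, h⟩
        · exact congrFun (e1.trans e2.symm) ⟨l, h⟩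
      rw [← Finset.card_image_of_injOn hinj]
      refine (hC k {j : Fin n // v j ≠ 0} rfl H Q hH hQ _ ?_).trans ?_
      · intro z hz
        obtain ⟨x, hx, rfl⟩ := Finset.mem_image.1 hz
        obtain ⟨hxs, -⟩ := Finset.mem_filter.1 hx
        refine ⟨fun j => (hs x hxs).1 j.1, ?_⟩
        apply twice_of_eq hg
        · intro i
          exact ((EF_iff hHp.le _).1 ((hs x hxs).1 i.1)).1
        · rw [← (hs x hxs).2]
          have h2 : ∑ i, v i * x i = ∑ i ∈ Finset.univ.filter (fun i => v i ≠ 0), v i * x i := by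
            symm
            apply Finset.sum_subset (Finset.filter_subset _ _)
            intro i _ hi
            simp only [Finset.mem_filter, Finset.mem_univ, true_and, not_not] at hi
            rw [hi, zero_mul]
          rw [h2]
          symm
          exact Finset.sum_subtype _ (by intro l; simp) (fun l => v l * x l)
      · gcongr
        exact hCs k hkn)
  rw [Fintype.card_piFinset] at h1
  simp only [Finset.prod_const, Finset.card_univ, hcc] at h1
  push_cast at h1
  calc (s.card : ℝ) ≤ _ := h1
    _ ≤ (2 * H) ^ (n - k) * (S * H ^ ((k : ℝ) / 2) * H ^ ε * (Q : ℝ) ^ ε) := by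
      gcongr
      exact EF_card hHp.le
    _ = 2 ^ (n - k) * (H ^ (n - k) * H ^ ((k : ℝ) / 2)) * (S * H ^ ε * (Q : ℝ) ^ ε) := by
      rw [mul_pow]; ring
    _ ≤ 2 ^ n * (H ^ (n - k) * H ^ ((k : ℝ) / 2)) * (S * H ^ ε * (Q : ℝ) ^ ε) := by
      gcongr
      · norm_num
      · omega
    _ = 2 ^ n * H ^ ((n : ℝ) - (k : ℝ) / 2) * (S * H ^ ε * (Q : ℝ) ^ ε) := by
      congr 2
      rw [← Real.rpow_natCast, ← Real.rpow_add hHp, Nat.cast_sub hkn]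
      congr 1; ring
    _ = _ := by ring

/-- Absorb the height. -/
lemma absorb {H ε : ℝ} {m Q : ℕ} (hH : 2 ≤ H) (hε : 0 < ε) (hQ : Q ≤ ⌊H⌋₊ ^ m) :
    H ^ (ε / (m + 1)) * (Q : ℝ) ^ (ε / (m + 1)) ≤ H ^ ε := by
  have hHp : 0 < H := by linarith
  have h1 : (Q : ℝ) ≤ H ^ m := by
    calc (Q : ℝ) ≤ (⌊H⌋₊ : ℝ) ^ m := by exact_mod_cast hQ
      _ ≤ H ^ m := by
        gcongr
        exact Nat.floor_le hHp.le
  have hm : (0 : ℝ) ≤ m := by positivity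
  calc _ ≤ H ^ (ε / (m + 1)) * (H ^ m) ^ (ε / (m + 1)) := by gcongr
    _ = H ^ ε := by
      rw [← Real.rpow_natCast H m, ← Real.rpow_mul hHp.le, ← Real.rpow_add hHp]
      congr 1; field_simp; ring

lemma row_deg (n : ℕ) (ε : ℝ) (hε : 0 < ε) : ∃ C : ℝ, 1 ≤ C ∧
    ∀ (H : ℝ), 2 ≤ H → ∀ (i0 : Fin n) (A : Matrix (Fin n) (Fin n) ℚ), (∀ i j, A i j ∈ EF H) →
    ∀ c : ℚ, (c = 0 ∨ c = A.det) →
    ∀ s : Finset (Fin n → ℚ), (∀ x ∈ s, (∀ i, x i ∈ EF H) ∧ ∑ i, cof i0 A i * x i = c) →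
    (s.card : ℝ) ≤ C * H ^ ((n : ℝ) - (Fintype.card {j : Fin n // cof i0 A j ≠ 0} : ℝ) / 2) *
      H ^ ε := by
  set m := hexp n * (2 * n + 1) with hm
  obtain ⟨C, hC1, hC⟩ := row_aux n (ε / (m + 1)) (by positivity)
  refine ⟨C, hC1, ?_⟩
  intro H hH i0 A hA c hc s hs
  have h1 : 1 ≤ ⌊H⌋₊ := Nat.le_floor (by push_cast; linarith)
  have hcW : ht c ≤ ⌊H⌋₊ ^ hexp n := by
    rcases hc with rfl | rfl
    · have : ht 0 = 1 := by simp [ht]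
      rw [this]; exact Nat.one_le_pow _ _ h1
    · exact ht_det_le hH A (fun i j => ht_EF (by linarith) (hA i j))
  obtain ⟨Q, hQ1, hQW, hg⟩ := exists_Q (cof i0 A) c _ (ht_cof_le hH i0 A hA) hcW
  rw [← pow_mul] at hQW
  have := hC H Q (by linarith) hQ1 (cof i0 A) c
    (fun p hp hpQ => ⟨fun j => (hg p hp hpQ).1 j.1 j.2, (hg p hp hpQ).2⟩) s hs
  calc _ ≤ _ := this
    _ = C * H ^ ((n : ℝ) - (Fintype.card {j : Fin n // cof i0 A j ≠ 0} : ℝ) / 2) *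
        (H ^ (ε / (m + 1)) * (Q : ℝ) ^ (ε / (m + 1))) := by ring
    _ ≤ _ := by
      gcongr
      exact absorb hH hε hQW

lemma row_full (n : ℕ) (σ ε : ℝ) (hσ0 : 0 < σ) (hε : 0 < ε)
    (hσ : ∀ k : ℕ, 1 ≤ k → k ≤ n → σ * ((k : ℝ) ^ 2 - k + 6) ≤ k) : ∃ C : ℝ, 1 ≤ C ∧
    ∀ (H : ℝ), 2 ≤ H → ∀ (i0 : Fin n) (A : Matrix (Fin n) (Fin n) ℚ), (∀ i j, A i j ∈ EF H) →
    (∀ j, cof i0 A j ≠ 0) → A.det ≠ 0 →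
    ∀ s : Finset (Fin n → ℚ), (∀ x ∈ s, (∀ i, x i ∈ EF H) ∧ ∑ i, cof i0 A i * x i = A.det) →
    (s.card : ℝ) ≤ C * H ^ ((n : ℝ) / 2 - σ) * H ^ ε := by
  set m := hexp n * (2 * n + 1) with hm
  obtain ⟨C, hC1, hC⟩ := sav_count σ (ε / (m + 1)) n hσ0 (by positivity) hσ n (le_refl _)
  refine ⟨C, hC1, ?_⟩
  intro H hH i0 A hA hv hd s hs
  have hcW : ht A.det ≤ ⌊H⌋₊ ^ hexp n :=
    ht_det_le hH A (fun i j => ht_EF (by linarith) (hA i j))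
  obtain ⟨Q, hQ1, hQW, hg⟩ := exists_Q (cof i0 A) A.det _ (ht_cof_le hH i0 A hA) hcW
  rw [← pow_mul] at hQW
  have := hC (Fin n) (by simp) H Q (by linarith) hQ1 (cof i0 A) A.det
    (fun p hp hpQ => ⟨fun j => (hg p hp hpQ).1 j (hv j), (hg p hp hpQ).2⟩) hv hd s hs
  calc _ ≤ _ := this
    _ = C * H ^ ((n : ℝ) / 2 - σ) *
        (H ^ (ε / (m + 1)) * (Q : ℝ) ^ (ε / (m + 1))) := by ring
    _ ≤ _ := by
      gcongr
      exact absorb hH hε hQW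

/-- Bound through fixing all rows but one. -/
lemma bottom_count {n : ℕ} {H : ℝ} (hH : 0 ≤ H) (i0 : Fin n)
    (s : Finset (Matrix (Fin n) (Fin n) ℚ)) (M : ℝ) (hM : 0 ≤ M)
    (T : Fin n → Finset (Fin n → ℚ))
    (hs : ∀ A ∈ s, ∀ l, l ≠ i0 → A l ∈ T l)
    (hM' : ∀ A ∈ s, ∀ t : Finset (Fin n → ℚ), (∀ x ∈ t, ∃ B ∈ s, cof i0 B = cof i0 A ∧ B i0 = x) →
      (t.card : ℝ) ≤ M) :
    (s.card : ℝ) ≤ (∏ l ∈ Finset.univ.erase i0, ((T l).card : ℝ)) * M := by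
  classical
  have h1 := fiber_bound s (Fintype.piFinset (fun l : {l : Fin n // l ≠ i0} => T l.1))
    (fun A l => A l.1) M (by
      intro A hA
      rw [Fintype.mem_piFinset]
      exact fun l => hs A hA l.1 l.2) (by
      intro b _
      set F := s.filter (fun A => (fun l : {l : Fin n // l ≠ i0} => A l.1) = b) with hF
      rcases F.eq_empty_or_nonempty with h0 | ⟨A, hA⟩
      · rw [h0]; simpa using hM
      · have hagree : ∀ B ∈ F, ∀ l, l ≠ i0 → B l = A l := by
          intro B hB l hl
          exact congrFun ((Finset.mem_filter.1 hB).2.trans (Finset.mem_filter.1 hA).2.symm) ⟨l, hl⟩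
        have hinj : Set.InjOn (fun B : Matrix (Fin n) (Fin n) ℚ => B i0)
            (F : Set (Matrix (Fin n) (Fin n) ℚ)) := by
          intro B hB B' hB' h
          funext l
          by_cases hl : l = i0
          · subst hl; exact h
          · rw [hagree B hB l hl, hagree B' hB' l hl]
        rw [← Finset.card_image_of_injOn hinj]
        apply hM' A (Finset.mem_filter.1 hA).1
        intro x hx
        obtain ⟨B, hB, rfl⟩ := Finset.mem_image.1 hx
        exact ⟨B, (Finset.mem_filter.1 hB).1, cof_congr i0 _ _ (hagree B hB), rfl⟩)
  refine h1.trans (le_of_eq ?_)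
  rw [Fintype.card_piFinset]
  push_cast
  congr 1
  symm
  exact Finset.prod_subtype _ (by intro l; simp) (fun l => ((T l).card : ℝ))

lemma rows_card {n : ℕ} {H : ℝ} (hH : 0 ≤ H) :
    ((Fintype.piFinset (fun _ : Fin n => EF H)).card : ℝ) ≤ (2 * H) ^ n := by
  rw [Fintype.card_piFinset]
  simp only [Finset.prod_const, Finset.card_univ, Fintype.card_fin]
  push_cast
  gcongr
  exact EF_card hH

lemma full_count {n : ℕ} (hn : 1 ≤ n) (i0 : Fin n) (H : ℝ) (hH : 2 ≤ H)
    (s : Finset (Matrix (Fin n) (Fin n) ℚ)) (M : ℝ) (hM : 0 ≤ M)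
    (hs : ∀ A ∈ s, ∀ i j, A i j ∈ EF H)
    (hM' : ∀ A ∈ s, ∀ t : Finset (Fin n → ℚ), (∀ x ∈ t, ∃ B ∈ s, cof i0 B = cof i0 A ∧ B i0 = x) →
      (t.card : ℝ) ≤ M) :
    (s.card : ℝ) ≤ (2 * H) ^ (n * (n - 1)) * M := by
  have hHp : 0 ≤ H := by linarith
  have h1 := bottom_count hHp i0 s M hM (fun _ => Fintype.piFinset (fun _ : Fin n => EF H))
    (by
      intro A hA l _
      rw [Fintype.mem_piFinset]
      exact fun j => hs A hA l j) hM'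
  refine h1.trans ?_
  gcongr
  rw [Finset.prod_const, Finset.card_erase_of_mem (Finset.mem_univ _), Finset.card_univ,
    Fintype.card_fin, pow_mul]
  gcongr
  exact rows_card hHp

lemma deg_count (n : ℕ) (i0 : Fin n) (K J : Finset (Fin n)) (hJ : i0 ∉ J) (ε : ℝ) (hε : 0 < ε) :
    ∃ C : ℝ, 1 ≤ C ∧ ∀ (H : ℝ), 2 ≤ H → ∀ δ : ℚ, ∀ s : Finset (Matrix (Fin n) (Fin n) ℚ),
    (∀ A ∈ s, (∀ i j, A i j ∈ EF H) ∧ A.det = δ ∧ (∀ j, cof i0 A j ≠ 0 ↔ j ∈ K) ∧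
      ∀ w : Fin n → ℚ, (∀ j, j ∉ K → w j = 0) → (∀ l ∈ J, ∑ j, w j * A l j = 0) →
        ∀ l, l ≠ i0 → ∑ j, w j * A l j = 0) →
    (s.card : ℝ) ≤ C * H ^ ((n : ℝ) * J.card + ((n : ℝ) - J.card) * ((n : ℝ) - (K.card : ℝ) / 2))
      * H ^ ε := by
  have hn : 0 < n := i0.pos
  have hnr : (0 : ℝ) < n := by exact_mod_cast hn
  obtain ⟨C, hC1, hC⟩ := row_deg n (ε / n) (by positivity)
  have hJn : J.card + 1 ≤ n := by
    have : J ⊆ Finset.univ.erase i0 := fun l hl =>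
      Finset.mem_erase.2 ⟨fun h => hJ (h ▸ hl), Finset.mem_univ _⟩
    have := Finset.card_le_card this
    rw [Finset.card_erase_of_mem (Finset.mem_univ _), Finset.card_univ, Fintype.card_fin] at this
    omega
  refine ⟨2 ^ (n * J.card) * C ^ (n - J.card),
    one_le_mul_of_one_le_of_one_le (one_le_pow₀ (by norm_num)) (one_le_pow₀ hC1), ?_⟩
  intro H hH δ s hs
  have hHp : 0 < H := by linarith
  set Rb : ℝ := C * H ^ ((n : ℝ) - (K.card : ℝ) / 2) * H ^ (ε / n) with hRb
  have hRb0 : 0 ≤ Rb := by positivity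
  have hKc : ∀ A ∈ s, Fintype.card {j : Fin n // cof i0 A j ≠ 0} = K.card := by
    intro A hA
    rw [Fintype.card_subtype]
    congr 1
    ext j
    simp only [Finset.mem_filter, Finset.mem_univ, true_and]
    exact (hs A hA).2.2.1 j
  classical
  have h1 := fiber_bound s
    (Fintype.piFinset (fun _ : {l : Fin n // l ∈ J} => Fintype.piFinset (fun _ : Fin n => EF H)))
    (fun A l => A l.1) (Rb ^ (n - 1 - J.card) * Rb) (by
      intro A hA
      rw [Fintype.mem_piFinset]
      intro l
      rw [Fintype.mem_piFinset]
      exact fun j => (hs A hA).1 l.1 j) (by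
      intro b _
      set F := s.filter (fun A => (fun l : {l : Fin n // l ∈ J} => A l.1) = b) with hF
      rcases F.eq_empty_or_nonempty with h0 | ⟨A, hA⟩
      · rw [h0]; simp; positivity
      have hAs := (Finset.mem_filter.1 hA).1
      have hFs : ∀ B ∈ F, B ∈ s := fun B hB => (Finset.mem_filter.1 hB).1
      have hagree : ∀ B ∈ F, ∀ l, l ∈ J → B l = A l := by
        intro B hB l hl
        exact congrFun ((Finset.mem_filter.1 hB).2.trans (Finset.mem_filter.1 hA).2.symm) ⟨l, hl⟩
      set T0 := (Fintype.piFinset (fun _ : Fin n => EF H)).filter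
        (fun x => ∑ j, cof i0 A j * x j = 0) with hT0
      have hT0c : (T0.card : ℝ) ≤ Rb := by
        have := hC H hH i0 A (hs A hAs).1 0 (Or.inl rfl) T0 (by
          intro x hx
          rw [Finset.mem_filter, Fintype.mem_piFinset] at hx
          exact hx)
        rwa [hKc A hAs] at this
      have h2 := bottom_count hHp.le i0 F Rb hRb0 (fun l => if l ∈ J then {A l} else T0) (by
          intro B hB l hl
          split_ifs with hlJ
          · rw [Finset.mem_singleton]; exact hagree B hB l hlJ
          · rw [Finset.mem_filter, Fintype.mem_piFinset]
            refine ⟨(hs B (hFs B hB)).1 l, ?_⟩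
            refine (hs B (hFs B hB)).2.2.2 (cof i0 A) ?_ ?_ l hl
            · intro j hj
              by_contra h
              exact hj (((hs A hAs).2.2.1 j).1 h)
            · intro l' hl'
              rw [hagree B hB l' hl']
              exact cof_other i0 A l' (fun h => hJ (h ▸ hl'))) (by
          intro B hB t ht
          have := hC H hH i0 B (hs B (hFs B hB)).1 _ (Or.inr rfl) t (by
            intro x hx
            obtain ⟨B', hB', hc, rfl⟩ := ht x hx
            refine ⟨(hs B' (hFs B' hB')).1 i0, ?_⟩
            rw [← hc, cof_self, (hs B' (hFs B' hB')).2.1, (hs B (hFs B hB)).2.1])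
          rwa [hKc B (hFs B hB)] at this)
      refine h2.trans ?_
      gcongr
      calc ∏ l ∈ Finset.univ.erase i0, (((if l ∈ J then {A l} else T0 :
              Finset (Fin n → ℚ))).card : ℝ)
          ≤ ∏ l ∈ Finset.univ.erase i0, (if l ∈ J then 1 else Rb) := by
            apply Finset.prod_le_prod
            · intros; positivity
            · intro l _
              split_ifs
              · simp
              · exact hT0c
        _ = Rb ^ (n - 1 - J.card) := by
            rw [Finset.prod_ite]
            simp only [Finset.prod_const, one_pow, one_mul]
            congr 1
            have h3 : (Finset.univ.erase i0).filter (fun l => l ∉ J) =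
                (Finset.univ.erase i0) \ J := by
              ext l; simp
            rw [h3, Finset.card_sdiff_of_subset, Finset.card_erase_of_mem (Finset.mem_univ _),
              Finset.card_univ, Fintype.card_fin]
            exact fun l hl => Finset.mem_erase.2 ⟨fun h => hJ (h ▸ hl), Finset.mem_univ _⟩)
  have hNJ : n - 1 - J.card + 1 = n - J.card := by omega
  rw [← pow_succ, hNJ, Fintype.card_piFinset] at h1
  simp only [Finset.prod_const, Finset.card_univ, Fintype.card_coe] at h1
  push_cast at h1
  calc (s.card : ℝ) ≤ _ := h1
    _ ≤ ((2 * H) ^ n) ^ J.card * Rb ^ (n - J.card) := by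
      gcongr
      exact rows_card hHp.le
    _ = 2 ^ (n * J.card) * C ^ (n - J.card) * (H ^ (n * J.card) *
        (H ^ ((n : ℝ) - (K.card : ℝ) / 2)) ^ (n - J.card)) * (H ^ (ε / n)) ^ (n - J.card) := by
      rw [hRb, ← pow_mul, mul_pow, mul_pow, mul_pow]; ring
    _ ≤ _ := by
      gcongr
      · apply le_of_eq
        rw [← Real.rpow_natCast, ← Real.rpow_natCast, ← Real.rpow_mul hHp.le,
          ← Real.rpow_add hHp, Nat.cast_sub (by omega)]
        congr 1; push_cast; ring
      · rw [← Real.rpow_natCast, ← Real.rpow_mul hHp.le]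
        apply Real.rpow_le_rpow_of_exponent_le (by linarith)
        rw [div_mul_eq_mul_div, div_le_iff₀ hnr]
        apply mul_le_mul_of_nonneg_left _ hε.le
        exact_mod_cast Nat.sub_le _ _

lemma exists_J {n : ℕ} (i0 : Fin n) (A : Fin n → Fin n → ℚ) (v : Fin n → ℚ) (K : Finset (Fin n))
    (hK : ∀ j, v j ≠ 0 ↔ j ∈ K) (hKne : K.Nonempty) (hA : ∀ l, l ≠ i0 → ∑ j, v j * A l j = 0) :
    ∃ J : Finset (Fin n), i0 ∉ J ∧ J.card + 1 ≤ K.card ∧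
      ∀ w : Fin n → ℚ, (∀ j, j ∉ K → w j = 0) → (∀ l ∈ J, ∑ j, w j * A l j = 0) →
        ∀ l, l ≠ i0 → ∑ j, w j * A l j = 0 := by
  classical
  have hsum : ∀ (w : Fin n → ℚ), (∀ j, j ∉ K → w j = 0) → ∀ u : Fin n → ℚ,
      ∑ j, w j * u j = ∑ j : {j // j ∈ K}, w j.1 * u j.1 := by
    intro w hw u
    have h2 : ∑ i, w i * u i = ∑ i ∈ K, w i * u i := by
      symm
      apply Finset.sum_subset (Finset.subset_univ _)
      intro i _ hi
      rw [hw i hi, zero_mul]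
    rw [h2]
    exact Finset.sum_subtype _ (by intro l; simp) (fun l => w l * u l)
  let f : {l : Fin n // l ≠ i0} → ({j // j ∈ K} → ℚ) := fun l j => A l.1 j.1
  let φ : (Fin n → ℚ) → (({j // j ∈ K} → ℚ) →ₗ[ℚ] ℚ) := fun w =>
    { toFun := fun u => ∑ j : {j // j ∈ K}, w j.1 * u j
      map_add' := by
        intro a b
        simp [mul_add, Finset.sum_add_distrib]
      map_smul' := by
        intro r a
        simp only [Pi.smul_apply, smul_eq_mul, RingHom.id_apply, Finset.mul_sum]
        exact Finset.sum_congr rfl (fun j _ => by ring) }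
  have hφ : ∀ w u, φ w u = ∑ j : {j // j ∈ K}, w j.1 * u j := fun w u => rfl
  obtain ⟨κ, a, ha, hspan, hli⟩ := exists_linearIndependent' ℚ f
  have : Finite κ := Finite.of_injective a ha
  have : Fintype κ := Fintype.ofFinite κ
  have hv0 : ∀ j, j ∉ K → v j = 0 := by
    intro j hj
    by_contra h
    exact hj ((hK j).1 h)
  refine ⟨Finset.univ.image (fun x : κ => (a x).1), ?_, ?_, ?_⟩
  · intro h
    obtain ⟨x, _, hx⟩ := Finset.mem_image.1 h
    exact (a x).2 hx
  · have h1 : (Finset.univ.image (fun x : κ => (a x).1)).card ≤ Fintype.card κ :=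
      Finset.card_image_le
    have h2 : Module.finrank ℚ (Submodule.span ℚ (Set.range (f ∘ a))) = Fintype.card κ :=
      finrank_span_eq_card hli
    have h3 : Submodule.span ℚ (Set.range (f ∘ a)) ≤ LinearMap.ker (φ v) := by
      rw [hspan, Submodule.span_le]
      rintro _ ⟨l, rfl⟩
      rw [SetLike.mem_coe, LinearMap.mem_ker, hφ, ← hA l.1 l.2, hsum v hv0]
    have h4 : LinearMap.ker (φ v) ≠ ⊤ := by
      intro h
      obtain ⟨j0, hj0⟩ := hKne
      have h5 : Pi.single (⟨j0, hj0⟩ : {j // j ∈ K}) (1 : ℚ) ∈ LinearMap.ker (φ v) := by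
        rw [h]; trivial
      rw [LinearMap.mem_ker, hφ] at h5
      simp [Pi.single_apply] at h5
      exact ((hK j0).2 hj0) h5
    have h5 := Submodule.finrank_lt h4
    have h6 := Submodule.finrank_mono h3
    rw [Module.finrank_fintype_fun_eq_card, Fintype.card_coe] at h5
    omega
  · intro w hw hJ l hl
    have h3 : Submodule.span ℚ (Set.range f) ≤ LinearMap.ker (φ w) := by
      rw [← hspan, Submodule.span_le]
      rintro _ ⟨x, rfl⟩
      rw [SetLike.mem_coe, LinearMap.mem_ker, hφ]
      have := hJ (a x).1 (Finset.mem_image.2 ⟨x, Finset.mem_univ _, rfl⟩)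
      rw [hsum w hw] at this
      exact this
    have h4 : f ⟨l, hl⟩ ∈ LinearMap.ker (φ w) := h3 (Submodule.subset_span ⟨_, rfl⟩)
    rw [LinearMap.mem_ker, hφ] at h4
    rw [hsum w hw]
    exact h4

lemma two_nonzero {n : ℕ} (hn : 2 ≤ n) (i0 : Fin n) (A : Matrix (Fin n) (Fin n) ℚ)
    (hA : ∀ i j, A i j ≠ 0) (hd : A.det ≠ 0) :
    ∃ i j, i ≠ j ∧ cof i0 A i ≠ 0 ∧ cof i0 A j ≠ 0 := by
  rw [← cof_self i0 A] at hd
  obtain ⟨i, _, hi⟩ := Finset.exists_ne_zero_of_sum_ne_zero hd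
  by_contra! h
  have hi' : cof i0 A i ≠ 0 := left_ne_zero_of_mul hi
  have : Nontrivial (Fin n) := Fin.nontrivial_iff_two_le.2 hn
  obtain ⟨l, hl⟩ := exists_ne i0
  have h1 := cof_other i0 A l hl
  rw [Finset.sum_eq_single i (fun j _ hj => by rw [h i j hj.symm hi', zero_mul])
    (fun h => absurd (Finset.mem_univ i) h)] at h1
  rcases mul_eq_zero.1 h1 with h2 | h2
  · exact hi' h2
  · exact hA l i h2

lemma absorb' {H ε : ℝ} {m Q : ℕ} (hH : 2 ≤ H) (hε : 0 < ε) (hQ : Q ≤ ⌊H⌋₊ ^ m) :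
    (Q : ℝ) ^ (ε / (m + 1)) ≤ H ^ ε := by
  refine le_trans ?_ (absorb hH hε hQ)
  have : 1 ≤ H ^ (ε / (m + 1)) := Real.one_le_rpow (by linarith) (by positivity)
  have h2 : 0 ≤ (Q : ℝ) ^ (ε / (m + 1)) := by positivity
  nlinarith

lemma row3 (e : ℕ) (ε : ℝ) (hε : 0 < ε) : ∃ C : ℝ, 1 ≤ C ∧
    ∀ (H : ℝ), 2 ≤ H → ∀ (v : Fin 3 → ℚ) (c : ℚ), (∀ j, ht (v j) ≤ ⌊H⌋₊ ^ e) →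
    ht c ≤ ⌊H⌋₊ ^ e → c ≠ 0 → ∀ i j, i ≠ j → v i ≠ 0 → v j ≠ 0 →
    ∀ s : Finset (Fin 3 → ℚ), (∀ x ∈ s, (∀ i, x i ∈ EF H) ∧ ∑ i, v i * x i = c) →
    (s.card : ℝ) ≤ C * H * H ^ ε := by
  set m := 2 * e + 2 with hm
  obtain ⟨C, hC1, hC⟩ := two_count (ε / (m + 1)) (by positivity)
  refine ⟨2 * C + 2, by linarith, ?_⟩
  intro H hH v c hv hc hc0 i j hij hvi hvj s hs
  have hHp : 0 < H := by linarith
  have h2 : 2 ≤ ⌊H⌋₊ := Nat.le_floor (by simpa using hH)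
  obtain ⟨l, hl, hall⟩ : ∃ l : Fin 3, (Finset.univ.erase i).erase j = {l} ∧
      ∀ k, k = i ∨ k = j ∨ k = l := by
    clear hvi hvj
    revert i j
    decide
  have hsum : ∀ x ∈ s, v i * x i + v j * x j + v l * x l = c := by
    intro x hx
    have := (hs x hx).2
    rw [sum_split _ hij, hl, Finset.sum_singleton] at this
    exact this
  have hinj : ∀ x ∈ s, ∀ x' ∈ s, x l = x' l → x i = x' i → x = x' := by
    intro x hx x' hx' h1 h2
    have e1 := hsum x hx
    have e2 := hsum x' hx'
    rw [h1, h2] at e1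
    have e3 : v j * x j = v j * x' j := by linarith
    have e4 := mul_left_cancel₀ hvj e3
    funext k
    rcases hall k with rfl | rfl | rfl <;> assumption
  have hH1 : 1 ≤ H ^ ε := Real.one_le_rpow (by linarith) hε.le
  classical
  set s1 := s.filter (fun x => c - v l * x l ≠ 0) with hs1
  set s2 := s.filter (fun x => ¬ (c - v l * x l ≠ 0)) with hs2
  have hcard : s.card = s1.card + s2.card := (Finset.card_filter_add_card_filter_not _).symm
  have b2 : (s2.card : ℝ) ≤ 2 * H := by
    refine le_trans ?_ (EF_card hHp.le)
    have : s2.card ≤ (EF H).card := by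
      apply Finset.card_le_card_of_injOn (fun x => x i)
      · intro x hx
        exact (hs x (Finset.mem_filter.1 hx).1).1 i
      · intro x hx x' hx' h
        obtain ⟨hx1, hx2⟩ := Finset.mem_filter.1 hx
        obtain ⟨hx1', hx2'⟩ := Finset.mem_filter.1 hx'
        rw [not_not] at hx2 hx2'
        refine hinj x hx1 x' hx1' ?_ h
        have hvl : v l ≠ 0 := by
          intro h0
          rw [h0, zero_mul, sub_zero] at hx2
          exact hc0 hx2
        exact mul_left_cancel₀ hvl (by linarith)
    exact_mod_cast this
  have b1 : (s1.card : ℝ) ≤ (2 * H) * (C * H ^ ε) := by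
    have := fiber_bound s1 (EF H) (fun x => x l) (C * H ^ ε)
      (fun x hx => (hs x (Finset.mem_filter.1 hx).1).1 l) (by
      intro b hb
      set F := s1.filter (fun x => x l = b) with hF
      have hFs : ∀ x ∈ F, x ∈ s ∧ c - v l * b ≠ 0 ∧ x l = b := by
        intro x hx
        obtain ⟨h1, h3⟩ := Finset.mem_filter.1 hx
        obtain ⟨h4, h5⟩ := Finset.mem_filter.1 h1
        rw [h3] at h5
        exact ⟨h4, h5, h3⟩
      rcases F.eq_empty_or_nonempty with h0 | ⟨x0, hx0⟩
      · rw [h0, Finset.card_empty, Nat.cast_zero]; positivity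
      have hi : Set.InjOn (fun x : Fin 3 → ℚ => x i) (F : Set (Fin 3 → ℚ)) := by
        intro x hx x' hx' h
        have a1 := hFs x hx
        have a2 := hFs x' hx'
        exact hinj x a1.1 x' a2.1 (a1.2.2.trans a2.2.2.symm) h
      rw [← Finset.card_image_of_injOn hi]
      have hW : ⌊H⌋₊ ^ e ≤ ⌊H⌋₊ ^ m := Nat.pow_le_pow_right (by omega) (by omega)
      have hη : ht (c - v l * b) ≤ ⌊H⌋₊ ^ m := by
        have e1 : c - v l * b = c + v l * (-b) := by ring
        have e2 : ht (-b) = ht b := by simp [ht]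
        rw [e1]
        calc _ ≤ 2 * (ht c * ht (v l * (-b))) := ht_add _ _
          _ ≤ 2 * (ht c * (ht (v l) * ht (-b))) := by gcongr; exact ht_mul _ _
          _ ≤ ⌊H⌋₊ * (⌊H⌋₊ ^ e * (⌊H⌋₊ ^ e * ⌊H⌋₊)) := by
            rw [e2]
            gcongr
            · exact hv l
            · exact ht_EF (by linarith) hb
          _ = _ := by rw [hm]; ring
      have := hC (⌊H⌋₊ ^ m) (Nat.one_le_pow _ _ (by omega)) (v i) (v j) (c - v l * b) hvi hvj
        (hFs x0 hx0).2.1 ((hv i).trans hW) ((hv j).trans hW) hη (F.image (fun x => x i)) (by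
          intro y hy
          obtain ⟨x, hx, rfl⟩ := Finset.mem_image.1 hy
          have a1 := hFs x hx
          refine ⟨((EF_iff hHp.le _).1 ((hs x a1.1).1 i)).1, x j,
            ((EF_iff hHp.le _).1 ((hs x a1.1).1 j)).1, ?_⟩
          have := hsum x a1.1
          rw [a1.2.2] at this
          linarith)
      refine this.trans ?_
      gcongr
      exact absorb' hH hε (le_refl _))
    refine this.trans ?_
    gcongr
    exact EF_card hHp.le
  rw [hcard]
  push_cast
  have : H ≤ H * H ^ ε := le_mul_of_one_le_right hHp.le hH1
  nlinarith

lemma case3 (ε : ℝ) (hε : 0 < ε) : ∃ C : ℝ, 1 ≤ C ∧ ∀ (H : ℝ), 2 ≤ H → ∀ δ : ℚ, δ ≠ 0 →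
    ∀ s : Finset (Matrix (Fin 3) (Fin 3) ℚ),
    (∀ A ∈ s, (∀ i j, A i j ∈ EF H) ∧ A.det = δ) → (s.card : ℝ) ≤ C * H ^ ((7 : ℝ) + ε) := by
  obtain ⟨C, hC1, hC⟩ := row3 (hexp 3) ε hε
  refine ⟨64 * C, by linarith, ?_⟩
  intro H hH δ hδ s hs
  have hHp : 0 < H := by linarith
  have := full_count (n := 3) (by norm_num) 0 H hH s (C * H * H ^ ε) (by positivity)
    (fun A hA => (hs A hA).1) (by
      intro A hA t ht
      obtain ⟨i, j, hij, hi, hj⟩ := two_nonzero (n := 3) (by norm_num) 0 A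
        (fun i j => EF_ne_zero hHp.le ((hs A hA).1 i j)) (by rw [(hs A hA).2]; exact hδ)
      refine hC H hH (cof 0 A) A.det (ht_cof_le hH 0 A (hs A hA).1)
        (ht_det_le hH A (fun i j => ht_EF (by linarith) ((hs A hA).1 i j)))
        (by rw [(hs A hA).2]; exact hδ) i j hij hi hj t ?_
      intro x hx
      obtain ⟨B, hB, hc, rfl⟩ := ht x hx
      refine ⟨(hs B hB).1 0, ?_⟩
      rw [← hc, cof_self, (hs B hB).2, (hs A hA).2])
  refine this.trans (le_of_eq ?_)
  rw [Real.rpow_add hHp]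
  norm_num
  ring

lemma unit_prod {x y : ℚ} (hx : x.num.natAbs = 1) (hy : y.num.natAbs = 1) :
    (x * y).num.natAbs = 1 ∧ (x * y).den = x.den * y.den := by
  have h : Nat.gcd (x.num * y.num).natAbs (x.den * y.den) = 1 := by
    rw [Int.natAbs_mul, hx, hy]; simp
  rw [Rat.mul_num, Rat.mul_den, h]
  simp [Int.natAbs_mul, hx, hy]

lemma case2 (ε : ℝ) (hε : 0 < ε) : ∃ C : ℝ, 1 ≤ C ∧ ∀ (H : ℝ), 2 ≤ H → ∀ δ : ℚ, δ ≠ 0 →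
    ∀ s : Finset (Matrix (Fin 2) (Fin 2) ℚ),
    (∀ A ∈ s, (∀ i j, A i j ∈ EF H) ∧ A.det = δ) → (s.card : ℝ) ≤ C * H ^ ε := by
  set m := hexp 2 with hm
  have hmp : 1 ≤ m := by rw [hm, hexp]; decide
  obtain ⟨C, hC1, hC⟩ := two_count (ε / 3 / (m + 1)) (by positivity)
  obtain ⟨D, hD1, hD⟩ := smE_bound (ε / 3 / ((2 : ℕ) + 1)) (by positivity)
  refine ⟨C * (D * D), one_le_mul_of_one_le_of_one_le hC1
    (one_le_mul_of_one_le_of_one_le hD1 hD1), ?_⟩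
  intro H hH δ hδ s hs
  have hHp : 0 < H := by linarith
  have h2 : 2 ≤ ⌊H⌋₊ := Nat.le_floor (by simpa using hH)
  have hdet : ∀ A ∈ s, A 0 0 * A 1 1 - A 0 1 * A 1 0 = δ := by
    intro A hA
    rw [← Matrix.det_fin_two, (hs A hA).2]
  have hu : ∀ A ∈ s, ∀ i j, (A i j).num.natAbs = 1 := fun A hA i j =>
    ((EF_iff hHp.le _).1 ((hs A hA).1 i j)).1
  rcases s.eq_empty_or_nonempty with h0 | ⟨A0, hA0⟩
  · rw [h0, Finset.card_empty, Nat.cast_zero]; positivity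
  have htδ : ht δ ≤ ⌊H⌋₊ ^ m := by
    rw [← (hs A0 hA0).2]
    exact ht_det_le hH A0 (fun i j => ht_EF (by linarith) ((hs A0 hA0).1 i j))
  have hX := hC (⌊H⌋₊ ^ m) (Nat.one_le_pow _ _ (by omega)) 1 (-1) δ (by norm_num) (by norm_num) hδ
    (by rw [show ht 1 = 1 by simp [ht]]; exact Nat.one_le_pow _ _ (by omega))
    (by rw [show ht (-1) = 1 by simp [ht]]; exact Nat.one_le_pow _ _ (by omega)) htδ
    (s.image (fun A => A 0 0 * A 1 1)) (by
      intro x hx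
      obtain ⟨A, hA, rfl⟩ := Finset.mem_image.1 hx
      refine ⟨(unit_prod (hu A hA 0 0) (hu A hA 1 1)).1, A 0 1 * A 1 0,
        (unit_prod (hu A hA 0 1) (hu A hA 1 0)).1, ?_⟩
      rw [← hdet A hA]; ring)
  have hX2 := hX.trans (mul_le_mul_of_nonneg_left
    (absorb' hH (by positivity : 0 < ε / 3) (le_refl (⌊H⌋₊ ^ m))) (by linarith))
  have hsm : ∀ A ∈ s, ∀ i j k l, A i j ∈ smE (A i j * A k l).den H ∧
      (A i j * A k l).den ≤ ⌊H⌋₊ ^ 2 := by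
    intro A hA i j k l
    rw [(unit_prod (hu A hA i j) (hu A hA k l)).2, mem_smE]
    refine ⟨⟨(hs A hA).1 i j, fun p _ h => h.mul_right _⟩, ?_⟩
    rw [sq]
    apply Nat.mul_le_mul <;>
    exact (le_max_right _ _).trans (ht_EF (by linarith) ((hs A hA).1 _ _))
  have hDb : ∀ Q : ℕ, 1 ≤ Q → Q ≤ ⌊H⌋₊ ^ 2 → ((smE Q H).card : ℝ) ≤ D * H ^ (ε / 3) := by
    intro Q hQ hQ2
    refine (hD Q hQ H (by linarith)).trans ?_
    rw [mul_assoc]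
    gcongr
    exact absorb hH (by positivity) hQ2
  have h1 := fiber_bound s (s.image (fun A => A 0 0 * A 1 1)) (fun A => A 0 0 * A 1 1)
    ((D * H ^ (ε / 3)) * (D * H ^ (ε / 3))) (fun A hA => Finset.mem_image_of_mem _ hA) (by
      intro b hb
      obtain ⟨B, hB, hBb⟩ := Finset.mem_image.1 hb
      have hBb' : B 0 0 * B 1 1 = b := hBb
      have hB2 : B 0 1 * B 1 0 = b - δ := by rw [← hdet B hB, ← hBb']; ring
      set F := s.filter (fun A => A 0 0 * A 1 1 = b) with hF
      have hFs : ∀ A ∈ F, A ∈ s ∧ A 0 0 * A 1 1 = b ∧ A 0 1 * A 1 0 = b - δ := by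
        intro A hA
        obtain ⟨h1, h3⟩ := Finset.mem_filter.1 hA
        refine ⟨h1, h3, ?_⟩
        rw [← hdet A h1, ← h3]; ring
      have hle : F.card ≤ (smE b.den H ×ˢ smE (b - δ).den H).card := by
        apply Finset.card_le_card_of_injOn (fun A => (A 0 0, A 0 1))
        · intro A hA
          obtain ⟨a1, a2, a3⟩ := hFs A hA
          rw [Finset.mem_coe, Finset.mem_product]
          constructor
          · have := (hsm A a1 0 0 1 1).1
            rwa [a2] at this
          · have := (hsm A a1 0 1 1 0).1
            rwa [a3] at this
        · intro A hA A' hA' h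
          obtain ⟨a1, a2, a3⟩ := hFs A hA
          obtain ⟨a1', a2', a3'⟩ := hFs A' hA'
          obtain ⟨e1, e2⟩ := Prod.mk.inj h
          have n1 : A' 0 0 ≠ 0 := EF_ne_zero hHp.le ((hs A' a1').1 0 0)
          have n2 : A' 0 1 ≠ 0 := EF_ne_zero hHp.le ((hs A' a1').1 0 1)
          rw [← a2', e1] at a2
          rw [← a3', e2] at a3
          have e3 := mul_left_cancel₀ n1 a2
          have e4 := mul_left_cancel₀ n2 a3
          ext i j
          fin_cases i <;> fin_cases j <;> assumption
      rw [Finset.card_product] at hle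
      have q1 := (hsm B hB 0 0 1 1).2
      rw [hBb'] at q1
      have q2 := (hsm B hB 0 1 1 0).2
      rw [hB2] at q2
      calc (F.card : ℝ) ≤ ((smE b.den H).card : ℝ) * ((smE (b - δ).den H).card : ℝ) := by
            exact_mod_cast hle
        _ ≤ _ := by
          gcongr
          · exact hDb _ b.den_pos q1
          · exact hDb _ (b - δ).den_pos q2)
  calc (s.card : ℝ) ≤ _ := h1
    _ ≤ (C * H ^ (ε / 3)) * ((D * H ^ (ε / 3)) * (D * H ^ (ε / 3))) := by
      gcongr
    _ = C * (D * D) * (H ^ (ε / 3) * H ^ (ε / 3) * H ^ (ε / 3)) := by ring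
    _ = _ := by
      rw [← Real.rpow_add hHp, ← Real.rpow_add hHp]
      congr 2; ring

/-- Matrices with prescribed cofactor support and row relations. -/
def DegP {n : ℕ} (i0 : Fin n) (K J : Finset (Fin n)) (A : Matrix (Fin n) (Fin n) ℚ) : Prop :=
  (∀ j, cof i0 A j ≠ 0 ↔ j ∈ K) ∧
      ∀ w : Fin n → ℚ, (∀ j, j ∉ K → w j = 0) → (∀ l ∈ J, ∑ j, w j * A l j = 0) →
        ∀ l, l ≠ i0 → ∑ j, w j * A l j = 0

lemma case4 (n : ℕ) (hn : 4 ≤ n) (ε : ℝ) (hε : 0 < ε) :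
    ∃ C : ℝ, 1 ≤ C ∧ ∀ (H : ℝ), 2 ≤ H → ∀ δ : ℚ, δ ≠ 0 →
    ∀ s : Finset (Matrix (Fin n) (Fin n) ℚ),
    (∀ A ∈ s, (∀ i j, A i j ∈ EF H) ∧ A.det = δ) →
    (s.card : ℝ) ≤ C * H ^ ((n ^ 2 : ℝ) - n / 2 - 1 / (2 * n - 2) + ε) := by
  have hnr : (4 : ℝ) ≤ n := by exact_mod_cast hn
  set σ : ℝ := 1 / (2 * n - 2) with hσd
  have hσ0 : 0 < σ := by rw [hσd]; apply one_div_pos.2; linarith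
  have hσ6 : σ ≤ 1 / 2 := by
    rw [hσd]; apply one_div_le_one_div_of_le <;> linarith
  have hσ : ∀ k : ℕ, 1 ≤ k → k ≤ n → σ * ((k : ℝ) ^ 2 - k + 6) ≤ k := by
    intro k hk1 hkn
    have a1 : (1 : ℝ) ≤ k := by exact_mod_cast hk1
    have a2 : (k : ℝ) ≤ n := by exact_mod_cast hkn
    rw [hσd, one_div_mul_eq_div, div_le_iff₀ (by linarith)]
    nlinarith [mul_nonneg (sub_nonneg.2 a1) (by linarith : (0 : ℝ) ≤ 2 * n - 2 - k)]
  let i0 : Fin n := ⟨0, by omega⟩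
  obtain ⟨C0, hC01, hC0⟩ := row_full n σ ε hσ0 hε hσ
  have hex : ∀ p : Finset (Fin n) × Finset (Fin n), ∃ C : ℝ, 1 ≤ C ∧ (i0 ∉ p.2 →
      ∀ (H : ℝ), 2 ≤ H → ∀ δ : ℚ, ∀ s : Finset (Matrix (Fin n) (Fin n) ℚ),
      (∀ A ∈ s, (∀ i j, A i j ∈ EF H) ∧ A.det = δ ∧ DegP i0 p.1 p.2 A) →
      (s.card : ℝ) ≤ C * H ^ ((n : ℝ) * p.2.card +
        ((n : ℝ) - p.2.card) * ((n : ℝ) - (p.1.card : ℝ) / 2)) * H ^ ε) := by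
    intro p
    by_cases h : i0 ∈ p.2
    · exact ⟨1, le_refl _, fun h' => absurd h h'⟩
    · obtain ⟨C, h1, h2⟩ := deg_count n i0 p.1 p.2 h ε hε
      exact ⟨C, h1, fun _ => h2⟩
  choose Cd hCd1 hCd using hex
  classical
  set P : Finset (Finset (Fin n) × Finset (Fin n)) := Finset.univ.filter
    (fun p => i0 ∉ p.2 ∧ p.2.card + 1 ≤ p.1.card ∧ 2 ≤ p.1.card ∧ p.1.card + 1 ≤ n) with hP
  have hSd : 0 ≤ ∑ p ∈ P, Cd p := Finset.sum_nonneg (fun p _ => by linarith [hCd1 p])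
  have h21 : (1 : ℝ) ≤ 2 ^ (n * (n - 1)) := one_le_pow₀ (by norm_num)
  refine ⟨2 ^ (n * (n - 1)) * C0 + ∑ p ∈ P, Cd p, by nlinarith, ?_⟩
  intro H hH δ hδ s hs
  have hHp : 0 < H := by linarith
  set E : ℝ := (n ^ 2 : ℝ) - n / 2 - σ + ε with hE
  set sf := s.filter (fun A => ∀ j, cof i0 A j ≠ 0) with hsf
  have hcover : s ⊆ sf ∪ P.biUnion (fun p => s.filter (fun A => DegP i0 p.1 p.2 A)) := by
    intro A hA
    rw [Finset.mem_union]
    by_cases hf : ∀ j, cof i0 A j ≠ 0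
    · exact Or.inl (Finset.mem_filter.2 ⟨hA, hf⟩)
    · right
      push Not at hf
      obtain ⟨j0, hj0⟩ := hf
      obtain ⟨i, j, hij, hi, hj⟩ := two_nonzero (by omega) i0 A
        (fun i j => EF_ne_zero hHp.le ((hs A hA).1 i j)) (by rw [(hs A hA).2]; exact hδ)
      set K : Finset (Fin n) := Finset.univ.filter (fun j => cof i0 A j ≠ 0) with hK
      have hKm : ∀ j, cof i0 A j ≠ 0 ↔ j ∈ K := by intro j; simp [hK]
      obtain ⟨J, hJ1, hJ2, hJ3⟩ := exists_J i0 A (cof i0 A) K hKm ⟨i, (hKm i).1 hi⟩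
        (fun l hl => cof_other i0 A l hl)
      rw [Finset.mem_biUnion]
      refine ⟨(K, J), ?_, Finset.mem_filter.2 ⟨hA, hKm, hJ3⟩⟩
      rw [hP, Finset.mem_filter]
      refine ⟨Finset.mem_univ _, hJ1, hJ2, ?_, ?_⟩
      · exact Finset.one_lt_card.2 ⟨i, (hKm i).1 hi, j, (hKm j).1 hj, hij⟩
      · have : K ⊂ Finset.univ := by
          rw [Finset.ssubset_univ_iff]
          intro h
          have : j0 ∈ K := by rw [h]; exact Finset.mem_univ _
          exact (hKm j0).2 this hj0
        have := Finset.card_lt_card this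
        rw [Finset.card_univ, Fintype.card_fin] at this
        exact this
  have hfull : (sf.card : ℝ) ≤ 2 ^ (n * (n - 1)) * C0 * H ^ E := by
    have := full_count (by omega) i0 H hH sf (C0 * H ^ ((n : ℝ) / 2 - σ) * H ^ ε) (by positivity)
      (fun A hA => (hs A (Finset.mem_filter.1 hA).1).1) (by
        intro A hA t ht
        obtain ⟨hA1, hA2⟩ := Finset.mem_filter.1 hA
        refine hC0 H hH i0 A (hs A hA1).1 hA2 (by rw [(hs A hA1).2]; exact hδ) t ?_
        intro x hx
        obtain ⟨B, hB, hc, rfl⟩ := ht x hx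
        have hB1 := (Finset.mem_filter.1 hB).1
        refine ⟨(hs B hB1).1 i0, ?_⟩
        rw [← hc, cof_self, (hs B hB1).2, (hs A hA1).2])
    refine this.trans (le_of_eq ?_)
    rw [mul_pow]
    have e1 : H ^ E = H ^ (n * (n - 1)) * H ^ ((n : ℝ) / 2 - σ) * H ^ ε := by
      rw [← Real.rpow_natCast, ← Real.rpow_add hHp, ← Real.rpow_add hHp, hE]
      push_cast [Nat.cast_sub (by omega : 1 ≤ n)]
      congr 1; ring
    rw [e1]; ring
  have hdeg : ∀ p ∈ P, ((s.filter (fun A => DegP i0 p.1 p.2 A)).card : ℝ) ≤ Cd p * H ^ E := by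
    intro p hp
    rw [hP, Finset.mem_filter] at hp
    obtain ⟨-, p1, p2, p3, p4⟩ := hp
    refine (hCd p p1 H hH δ _ ?_).trans ?_
    · intro A hA
      obtain ⟨hA1, hA2⟩ := Finset.mem_filter.1 hA
      exact ⟨(hs A hA1).1, (hs A hA1).2, hA2⟩
    · rw [mul_assoc, ← Real.rpow_add hHp]
      have := hCd1 p
      gcongr
      · linarith
      · rw [hE]
        have q2 : (p.2.card : ℝ) + 1 ≤ p.1.card := by exact_mod_cast p2
        have q3 : (2 : ℝ) ≤ p.1.card := by exact_mod_cast p3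
        have q4 : (p.1.card : ℝ) + 1 ≤ n := by exact_mod_cast p4
        generalize (p.1.card : ℝ) = k at *
        generalize (p.2.card : ℝ) = r at *
        have t1 : (n - k + 1) * k ≤ (n - r) * k := by
          apply mul_le_mul_of_nonneg_right <;> linarith
        nlinarith [mul_nonneg (by linarith : (0 : ℝ) ≤ k - 2) (by linarith : (0 : ℝ) ≤ n - 1 - k)]
  calc (s.card : ℝ) ≤ ((sf ∪ P.biUnion (fun p => s.filter (fun A => DegP i0 p.1 p.2 A))).card : ℝ) := by
        exact_mod_cast Finset.card_le_card hcover
    _ ≤ (sf.card : ℝ) + ∑ p ∈ P, ((s.filter (fun A => DegP i0 p.1 p.2 A)).card : ℝ) := by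
        have := (Finset.card_union_le sf
          (P.biUnion (fun p => s.filter (fun A => DegP i0 p.1 p.2 A)))).trans
          (Nat.add_le_add_left Finset.card_biUnion_le _)
        exact_mod_cast this
    _ ≤ 2 ^ (n * (n - 1)) * C0 * H ^ E + ∑ p ∈ P, Cd p * H ^ E :=
        add_le_add hfull (Finset.sum_le_sum hdeg)
    _ = _ := by rw [← Finset.sum_mul]; ring

lemma to_finset {n : ℕ} {H : ℝ} (hH : 0 ≤ H) (δ : ℚ) : ∃ s : Finset (Matrix (Fin n) (Fin n) ℚ),
    (∀ A ∈ s, (∀ i j, A i j ∈ EF H) ∧ A.det = δ) ∧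
    Set.ncard {A : Matrix (Fin n) (Fin n) ℚ | (∀ i j, A i j ∈ Egyptian H) ∧ A.det = δ} =
      s.card := by
  classical
  let s : Finset (Matrix (Fin n) (Fin n) ℚ) :=
    (Fintype.piFinset (fun _ : Fin n => Fintype.piFinset (fun _ : Fin n => EF H))).filter
      (fun A : Matrix (Fin n) (Fin n) ℚ => A.det = δ)
  have hm : ∀ A : Matrix (Fin n) (Fin n) ℚ, A ∈ s ↔ (∀ i j, A i j ∈ EF H) ∧ A.det = δ := by
    intro A
    refine Finset.mem_filter.trans (and_congr_left fun _ => ?_)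
    exact Fintype.mem_piFinset.trans (forall_congr' fun i => Fintype.mem_piFinset)
  refine ⟨s, fun A hA => (hm A).1 hA, ?_⟩
  rw [← Set.ncard_coe_finset]
  congr 1
  ext A
  rw [Finset.mem_coe, hm]
  refine and_congr_left fun _ => forall_congr' fun i => forall_congr' fun j => ?_
  exact (mem_EF_iff hH _).symm

end Helpers

theorem stmt12 (n : ℕ) (hn : n ≥ 2) :
    ∀ ε > (0 : ℝ), ∃ C : ℝ, ∀ H : ℝ, H ≥ 2 → ∀ δ : ℚ, δ ≠ 0 →
      (n = 2 →
        (Set.ncard {A : Matrix (Fin n) (Fin n) ℚ |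
            (∀ i j, A i j ∈ Egyptian H) ∧ A.det = δ} : ℝ) ≤ C * H ^ ε) ∧
      (n = 3 →
        (Set.ncard {A : Matrix (Fin n) (Fin n) ℚ |
            (∀ i j, A i j ∈ Egyptian H) ∧ A.det = δ} : ℝ) ≤ C * H ^ ((7 : ℝ) + ε)) ∧
      (n ≥ 4 →
        (Set.ncard {A : Matrix (Fin n) (Fin n) ℚ |
            (∀ i j, A i j ∈ Egyptian H) ∧ A.det = δ} : ℝ) ≤
          C * H ^ ((n ^ 2 : ℝ) - n / 2 - 1 / (2 * n - 2) + ε)) := by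
  intro ε hε
  have h3 : n = 2 ∨ n = 3 ∨ 4 ≤ n := by omega
  rcases h3 with rfl | rfl | h4
  · obtain ⟨C, _, hC⟩ := case2 ε hε
    refine ⟨C, fun H hH δ hδ => ⟨fun _ => ?_, fun h => absurd h (by norm_num),
      fun h => absurd h (by norm_num)⟩⟩
    obtain ⟨s, hs, he⟩ := to_finset (n := 2) (H := H) (by linarith) δ
    rw [he]
    exact hC H hH δ hδ s hs
  · obtain ⟨C, _, hC⟩ := case3 ε hε
    refine ⟨C, fun H hH δ hδ => ⟨fun h => absurd h (by norm_num), fun _ => ?_,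
      fun h => absurd h (by norm_num)⟩⟩
    obtain ⟨s, hs, he⟩ := to_finset (n := 3) (H := H) (by linarith) δ
    rw [he]
    exact hC H hH δ hδ s hs
  · obtain ⟨C, _, hC⟩ := case4 n h4 ε hε
    refine ⟨C, fun H hH δ hδ => ⟨fun h => absurd h (by omega), fun h => absurd h (by omega),
      fun _ => ?_⟩⟩
    obtain ⟨s, hs, he⟩ := to_finset (n := n) (H := H) (by linarith) δ
    rw [he]
    exact hC H hH δ hδ s hs
end
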